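/- For the cardinality two-dimensional geometric knapsack problem with guillotine cuts and 90-degree rotations allowed (2GGK(R)-C) on an N×N knapsack, let OPT be an optimal solution. Then there is a universal constant C such that for every ε ∈ (0,1) there exists a subset APX of the input items and a guillotine-separable container packing of APX (items possibly rotated by 90 degrees) using a number of containers bounded by a constant depending only on ε, with |APX| ≥ (4/5 − C·ε)·|OPT|. -/

import Mathlib

/-- An axis-aligned rectangle, given by the coordinates of its corners. -/
structure Rect where
  x1 : ℝ
  x2 : ℝ
  y1 : ℝ
  y2 : ℝ

namespace Rect

def width (r : Rect) : ℝ := r.x2 - r.x1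

def height (r : Rect) : ℝ := r.y2 - r.y1

def area (r : Rect) : ℝ := r.width * r.height

/-- The open interior of an axis-aligned rectangle. -/
def toSet (r : Rect) : Set (ℝ × ℝ) :=
  {p : ℝ × ℝ | r.x1 < p.1 ∧ p.1 < r.x2 ∧ r.y1 < p.2 ∧ p.2 < r.y2}

/-- `r.SubRect s` : the rectangle `r` is contained in the rectangle `s`. -/
def SubRect (r s : Rect) : Prop :=
  s.x1 ≤ r.x1 ∧ r.x2 ≤ s.x2 ∧ s.y1 ≤ r.y1 ∧ r.y2 ≤ s.y2

noncomputable instance (r s : Rect) : Decidable (r.SubRect s) :=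
  inferInstanceAs (Decidable (s.x1 ≤ r.x1 ∧ r.x2 ≤ s.x2 ∧ s.y1 ≤ r.y1 ∧ r.y2 ≤ s.y2))

end Rect

/-- The square knapsack `[0,N] × [0,N]`. -/
def knapsack (N : ℝ) : Rect := ⟨0, N, 0, N⟩

/-- A placement of the items of `S` (with prescribed widths and heights) as
pairwise non-overlapping axis-aligned rectangles inside the piece `P`. -/
structure IsPacking {ι : Type*} (wd ht : ι → ℝ) (S : Finset ι)
    (place : ι → Rect) (P : Rect) : Prop where
  hw : ∀ i ∈ S, (place i).width = wd i
  hh : ∀ i ∈ S, (place i).height = ht i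
  hin : ∀ i ∈ S, (place i).SubRect P
  hdisj : ∀ i ∈ S, ∀ j ∈ S, i ≠ j → Disjoint (place i).toSet (place j).toSet

/-- Guillotine separability of the placed items of `S` inside the piece `P`:
either the piece contains at most one item, or some axis-parallel end-to-end cut
splits the piece into two rectangular subpieces, crossing the interior of no item,
and the items of each subpiece are recursively guillotine separable. -/
inductive GuillotineSep {ι : Type*} (place : ι → Rect) : Rect → Finset ι → Prop
  | base (P : Rect) (S : Finset ι) (hS : S.card ≤ 1) : GuillotineSep place P S
  | vcut (P : Rect) (S : Finset ι) (c : ℝ) (h1 : P.x1 < c) (h2 : c < P.x2)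
      (hcross : ∀ i ∈ S, (place i).x2 ≤ c ∨ c ≤ (place i).x1)
      (hL : GuillotineSep place ⟨P.x1, c, P.y1, P.y2⟩
              (S.filter fun i => (place i).x2 ≤ c))
      (hR : GuillotineSep place ⟨c, P.x2, P.y1, P.y2⟩
              (S.filter fun i => ¬ (place i).x2 ≤ c)) :
      GuillotineSep place P S
  | hcut (P : Rect) (S : Finset ι) (c : ℝ) (h1 : P.y1 < c) (h2 : c < P.y2)
      (hcross : ∀ i ∈ S, (place i).y2 ≤ c ∨ c ≤ (place i).y1)
      (hB : GuillotineSep place ⟨P.x1, P.x2, P.y1, c⟩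
              (S.filter fun i => (place i).y2 ≤ c))
      (hT : GuillotineSep place ⟨P.x1, P.x2, c, P.y2⟩
              (S.filter fun i => ¬ (place i).y2 ≤ c)) :
      GuillotineSep place P S

/-- A guillotine-separable packing of the items of `S` into the piece `P`. -/
def GuillotinePacking {ι : Type*} (wd ht : ι → ℝ) (S : Finset ι)
    (place : ι → Rect) (P : Rect) : Prop :=
  IsPacking wd ht S place P ∧ GuillotineSep place P S

/-- A placement of the items of `S` with 90 degree rotations allowed: each item is
placed with its prescribed dimensions or with width and height exchanged. -/
structure IsPackingRot {ι : Type*} (wd ht : ι → ℝ) (S : Finset ι)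
    (place : ι → Rect) (P : Rect) : Prop where
  hdims : ∀ i ∈ S, ((place i).width = wd i ∧ (place i).height = ht i) ∨
      ((place i).width = ht i ∧ (place i).height = wd i)
  hin : ∀ i ∈ S, (place i).SubRect P
  hdisj : ∀ i ∈ S, ∀ j ∈ S, i ≠ j → Disjoint (place i).toSet (place j).toSet

/-- Labels of containers. -/
inductive CLabel
  | large
  | horizontal
  | vertical
  | area

/-- The constraints of a container packing: a large container contains a single item,
in a horizontal container the items are stacked one above another, in a vertical
container the items are placed side by side, and every item placed in an area
container has width (resp. height) at most an `ε`-fraction of the container's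
width (resp. height). -/
def ContainerLabelOK {ι : Type*} (T : Finset ι) (place : ι → Rect)
    (k : ℕ) (cont : ℕ → Rect) (lab : ℕ → CLabel) (asg : ι → ℕ) (ε : ℝ) : Prop :=
  (∀ j < k, lab j = CLabel.large →
      ∀ i ∈ T, ∀ i' ∈ T, asg i = j → asg i' = j → i = i') ∧
  (∀ j < k, lab j = CLabel.horizontal →
      ∀ i ∈ T, ∀ i' ∈ T, asg i = j → asg i' = j → i ≠ i' →
        (place i).y2 ≤ (place i').y1 ∨ (place i').y2 ≤ (place i).y1) ∧
  (∀ j < k, lab j = CLabel.vertical →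
      ∀ i ∈ T, ∀ i' ∈ T, asg i = j → asg i' = j → i ≠ i' →
        (place i).x2 ≤ (place i').x1 ∨ (place i').x2 ≤ (place i).x1) ∧
  (∀ j < k, lab j = CLabel.area → ∀ i ∈ T, asg i = j →
      (place i).width ≤ ε * (cont j).width ∧ (place i).height ≤ ε * (cont j).height)

/-- A container packing of the items of `S` into the piece `P` with 90 degree
rotations allowed, using at most `k` pairwise non-overlapping containers. -/
def IsContainerPackingRot {ι : Type*} (wd ht : ι → ℝ) (ε : ℝ) (S : Finset ι)
    (place : ι → Rect) (P : Rect) (k : ℕ) : Prop :=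
  IsPackingRot wd ht S place P ∧
  ∃ (cont : ℕ → Rect) (lab : ℕ → CLabel) (asg : ι → ℕ),
    (∀ j < k, (cont j).SubRect P) ∧
    (∀ j < k, ∀ j' < k, j ≠ j' → Disjoint (cont j).toSet (cont j').toSet) ∧
    (∀ i ∈ S, asg i < k ∧ (place i).SubRect (cont (asg i))) ∧
    ContainerLabelOK S place k cont lab asg ε

/-!
Scale the knapsack to the unit square. By averaging over the scales of a rapidly decreasing sequence
of thresholds, some consecutive pair `μ < δ` is such that hardly any optimal item has its long side
in `(μ, δ]`; items with both sides above `μ` are either few compared with all items, or there are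
only boundedly many items at all. What remains are thin long items (thickness at most `μ`, length
more than `δ`) and small ones (both sides at most `μ`).

For the thin long items the tree of guillotine cuts yields a depth function `d`: up to a small
fraction, the items of depth more than `t` fit into a box with one side shortened by some `s`
proportional to `t`, while the items of depth at most `t'` have total thickness `O(t')`. For
`t' ≪ t`, averaging over the bands `t' < d i ≤ t` of a sequence of depths makes it cheap to discard
one band. The deep items then leave a strip of width `s` free, half of which pays for rounding them
to boundedly many containers: the horizontal ones are aligned with rows of constant height, and the
vertical ones between two cuts are packed by linear grouping and configurations, as in bin packing.
The shallow items and those lost in the rounding are so thin that they are stacked in a quarter of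
the strip, and an area of order `s` remains unused. Hence the small items can be added by Next-Fit
Decreasing Height, rotated so that the short side is horizontal. Only the fractions lost to
averaging are missing, hence the bound `1 - O(ε)`.
-/

namespace Rect

variable {r s t : Rect}

/-- The reflection of a rectangle in the diagonal, which exchanges the two directions of cuts. -/
def transpose (r : Rect) : Rect := ⟨r.y1, r.y2, r.x1, r.x2⟩

lemma subRect_refl (r : Rect) : r.SubRect r := ⟨le_rfl, le_rfl, le_rfl, le_rfl⟩

lemma SubRect.trans (hrs : r.SubRect s) (hst : s.SubRect t) : r.SubRect t :=
  ⟨hst.1.trans hrs.1, hrs.2.1.trans hst.2.1, hst.2.2.1.trans hrs.2.2.1,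
    hrs.2.2.2.trans hst.2.2.2⟩

lemma SubRect.transpose (h : r.SubRect s) : r.transpose.SubRect s.transpose :=
  ⟨h.2.2.1, h.2.2.2, h.1, h.2.1⟩

lemma SubRect.toSet_subset (h : r.SubRect s) : r.toSet ⊆ s.toSet := fun _ hz =>
  ⟨h.1.trans_lt hz.1, hz.2.1.trans_le h.2.1, h.2.2.1.trans_lt hz.2.2.1, hz.2.2.2.trans_le h.2.2.2⟩

lemma disjoint_toSet_of_x2_le_x1 (h : r.x2 ≤ s.x1) : Disjoint r.toSet s.toSet :=
  Set.disjoint_left.2 fun _ hr hs => (hr.2.1.trans_le h).not_gt hs.1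

lemma disjoint_toSet_of_y2_le_y1 (h : r.y2 ≤ s.y1) : Disjoint r.toSet s.toSet :=
  Set.disjoint_left.2 fun _ hr hs => (hr.2.2.2.trans_le h).not_gt hs.2.2.1

lemma disjoint_toSet_transpose (h : Disjoint r.toSet s.toSet) :
    Disjoint r.transpose.toSet s.transpose.toSet :=
  Set.disjoint_left.2 fun z hr hs => h.notMem_of_mem_left (a := z.swap)
    ⟨hr.2.2.1, hr.2.2.2, hr.1, hr.2.1⟩ ⟨hs.2.2.1, hs.2.2.2, hs.1, hs.2.1⟩

end Rect

namespace GuillotineSep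

variable {ι : Type*} {pl pl' : ι → Rect} {P : Rect} {S : Finset ι}

lemma congr (g : GuillotineSep pl P S) (hpl : ∀ i ∈ S, pl' i = pl i) : GuillotineSep pl' P S := by
  induction g with
  | base P S hS => exact .base _ _ hS
  | vcut P S c h₁ h₂ hcross _ _ ihL ihR =>
    refine .vcut _ _ c h₁ h₂ (fun i hi => by rw [hpl i hi]; exact hcross i hi) ?_ ?_
    · rw [Finset.filter_congr fun i hi => by rw [hpl i hi]]
      exact ihL fun i hi => hpl i (Finset.mem_filter.1 hi).1
    · rw [Finset.filter_congr fun i hi => by rw [hpl i hi]]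
      exact ihR fun i hi => hpl i (Finset.mem_filter.1 hi).1
  | hcut P S c h₁ h₂ hcross _ _ ihB ihT =>
    refine .hcut _ _ c h₁ h₂ (fun i hi => by rw [hpl i hi]; exact hcross i hi) ?_ ?_
    · rw [Finset.filter_congr fun i hi => by rw [hpl i hi]]
      exact ihB fun i hi => hpl i (Finset.mem_filter.1 hi).1
    · rw [Finset.filter_congr fun i hi => by rw [hpl i hi]]
      exact ihT fun i hi => hpl i (Finset.mem_filter.1 hi).1

lemma transpose (g : GuillotineSep pl P S) :
    GuillotineSep (fun i => (pl i).transpose) P.transpose S := by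
  induction g with
  | base P S hS => exact .base _ _ hS
  | vcut P S c h₁ h₂ hcross _ _ ihL ihR => exact .hcut _ _ c h₁ h₂ hcross ihL ihR
  | hcut P S c h₁ h₂ hcross _ _ ihB ihT => exact .vcut _ _ c h₁ h₂ hcross ihB ihT

end GuillotineSep

namespace GuillotineKnapsack

open Finset

/-! ### Averaging over finite sets -/

lemma exists_card_mul_le_of_pairwiseDisjoint {ι κ : Type*} {J : Finset κ} {D : κ → Finset ι}
    {T : Finset ι} (hJ : J.Nonempty) (hD : ∀ j ∈ J, D j ⊆ T)
    (hdis : (J : Set κ).PairwiseDisjoint D) : ∃ j ∈ J, #J * #(D j) ≤ #T := by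
  classical
  refine exists_le_of_sum_le hJ ?_
  rw [← mul_sum, ← card_biUnion hdis, sum_const, smul_eq_mul]
  exact Nat.mul_le_mul_left _ (card_le_card (biUnion_subset.2 hD))

lemma exists_card_band_le {ι α : Type*} [LinearOrder α] (d : ι → α) {t : ℕ → α} (ht : Antitone t)
    (T : Finset ι) {L : ℕ} (hL : 0 < L) :
    ∃ j < L, L * #{i ∈ T | t (j + 1) < d i ∧ d i ≤ t j} ≤ #T := by
  have hdis (j k : ℕ) (hjk : j < k) : Disjoint {i ∈ T | t (j + 1) < d i ∧ d i ≤ t j}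
      {i ∈ T | t (k + 1) < d i ∧ d i ≤ t k} :=
    disjoint_filter.2 fun i _ hj hk => (hk.2.trans (ht hjk)).not_gt hj.1
  obtain ⟨j, hj, hcard⟩ := exists_card_mul_le_of_pairwiseDisjoint (nonempty_range_iff.2 hL.ne')
    (fun j _ => filter_subset _ T) fun j _ k _ hjk =>
      hjk.lt_or_gt.elim (hdis j k) fun hkj => (hdis k j hkj).symm
  exact ⟨j, mem_range.1 hj, by rwa [card_range] at hcard⟩

section Fitting

variable {ι : Type*} [DecidableEq ι]

lemma sum_biUnion_le_sum {κ : Type*} (s : Finset κ) (X : κ → Finset ι) {p : ι → ℝ}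
    (hp : ∀ r ∈ s, ∀ i ∈ X r, 0 ≤ p i) : ∑ i ∈ s.biUnion X, p i ≤ ∑ r ∈ s, ∑ i ∈ X r, p i := by
  classical
  induction s using Finset.induction_on with
  | empty => simp
  | insert r s hr ih =>
    have hinter : 0 ≤ ∑ i ∈ X r ∩ s.biUnion X, p i :=
      sum_nonneg fun i hi => hp r (mem_insert_self _ _) i (mem_inter.1 hi).1
    rw [biUnion_insert, sum_insert hr]
    linarith [sum_union_inter (s₁ := X r) (s₂ := s.biUnion X) (f := p),
      ih fun r' hr' => hp r' (mem_insert_of_mem hr')]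

lemma exists_upper_subset_sum_between (κ g : ι → ℝ) {m θ : ℝ} (T : Finset ι) (hm : 0 ≤ m)
    (hg : ∀ i ∈ T, g i ≤ m) (hθ : θ ≤ ∑ i ∈ T, g i) (hθ0 : 0 ≤ θ) :
    ∃ A ⊆ T, (∀ i ∈ A, ∀ j ∈ T \ A, κ j ≤ κ i) ∧ θ ≤ ∑ i ∈ A, g i ∧ ∑ i ∈ A, g i ≤ θ + m := by
  induction T using Finset.strongInduction with
  | H T ih =>
    rcases T.eq_empty_or_nonempty with rfl | hne
    · exact ⟨∅, subset_rfl, by simp, hθ, by simpa using add_nonneg hθ0 hm⟩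
    obtain ⟨x, hx, hmin⟩ := exists_min_image T κ hne
    by_cases hle : θ ≤ ∑ i ∈ T.erase x, g i
    · obtain ⟨A, hAT, hupper, hA⟩ := ih (T.erase x) (erase_ssubset hx)
        (fun i hi => hg i (mem_of_mem_erase hi)) hle
      refine ⟨A, hAT.trans (erase_subset _ _), fun i hi j hj => ?_, hA⟩
      obtain ⟨hjT, hjA⟩ := mem_sdiff.1 hj
      obtain rfl | hjx := eq_or_ne j x
      · exact hmin i (mem_of_mem_erase (hAT hi))
      · exact hupper i hi j (mem_sdiff.2 ⟨mem_erase.2 ⟨hjx, hjT⟩, hjA⟩)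
    · refine ⟨T, subset_rfl, by simp, hθ, ?_⟩
      linarith [add_sum_erase T g hx, hg x hx]

lemma card_mul_sum_le_of_upper {g : ι → ℝ} {A S : Finset ι} (hA : A ⊆ S)
    (h : ∀ i ∈ A, ∀ j ∈ S \ A, g j ≤ g i) :
    (#A : ℝ) * ∑ i ∈ S, g i ≤ #S * ∑ i ∈ A, g i := by
  have hcross : ∑ _i ∈ A, ∑ j ∈ S \ A, g j ≤ ∑ i ∈ A, ∑ _j ∈ S \ A, g i :=
    sum_le_sum fun _ hi => sum_le_sum fun _ hj => h _ hi _ hj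
  have hcard : (#(S \ A) : ℝ) + #A = #S := mod_cast card_sdiff_add_card_eq_card hA
  simp only [sum_const, nsmul_eq_mul, ← mul_sum] at hcross
  rw [← hcard, ← sum_sdiff hA]
  linarith

/-! ### Guillotine packings without coordinates -/

/-- The items of `S`, item `i` having width `w i` and height `h i`, can be packed into an `a × b`
box by a guillotine cutting sequence. Only the tree of cuts is recorded, no coordinates; the base
case `single` allows slack around the item. -/
inductive GuillotineFits (w h : ι → ℝ) : ℝ → ℝ → Finset ι → Prop
  | nil {a b} (ha : 0 ≤ a) (hb : 0 ≤ b) : GuillotineFits w h a b ∅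
  | single {a b i} (ha : 0 ≤ a) (hb : 0 ≤ b) (hw : w i ≤ a) (hh : h i ≤ b) :
      GuillotineFits w h a b {i}
  | vcut {a₁ a₂ b S₁ S₂} (hd : Disjoint S₁ S₂) (g₁ : GuillotineFits w h a₁ b S₁)
      (g₂ : GuillotineFits w h a₂ b S₂) : GuillotineFits w h (a₁ + a₂) b (S₁ ∪ S₂)
  | hcut {a b₁ b₂ S₁ S₂} (hd : Disjoint S₁ S₂) (g₁ : GuillotineFits w h a b₁ S₁)
      (g₂ : GuillotineFits w h a b₂ S₂) : GuillotineFits w h a (b₁ + b₂) (S₁ ∪ S₂)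

namespace GuillotineFits

variable {w h : ι → ℝ} {a a₁ a₂ b b₁ b₂ : ℝ} {S S₁ S₂ : Finset ι}

lemma nonneg (g : GuillotineFits w h a b S) : 0 ≤ a ∧ 0 ≤ b := by
  induction g with
  | nil ha hb => exact ⟨ha, hb⟩
  | single ha hb _ _ => exact ⟨ha, hb⟩
  | vcut _ _ _ ih₁ ih₂ => exact ⟨add_nonneg ih₁.1 ih₂.1, ih₁.2⟩
  | hcut _ _ _ ih₁ ih₂ => exact ⟨ih₁.1, add_nonneg ih₁.2 ih₂.2⟩

lemma mono (g : GuillotineFits w h a b S) {a' b' : ℝ} (ha' : a ≤ a') (hb' : b ≤ b') :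
    GuillotineFits w h a' b' S := by
  induction g generalizing a' b' with
  | nil ha hb => exact .nil (ha.trans ha') (hb.trans hb')
  | single ha hb hw hh =>
    exact .single (ha.trans ha') (hb.trans hb') (hw.trans ha') (hh.trans hb')
  | @vcut a₁ a₂ b S₁ S₂ hd _ _ ih₁ ih₂ =>
    rw [← add_sub_cancel a₁ a']
    exact .vcut hd (ih₁ le_rfl hb') (ih₂ (by linarith) hb')
  | @hcut a b₁ b₂ S₁ S₂ hd _ _ ih₁ ih₂ =>
    rw [← add_sub_cancel b₁ b']
    exact .hcut hd (ih₁ ha' le_rfl) (ih₂ ha' (by linarith))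

lemma vcut_of_le (g₁ : GuillotineFits w h a₁ b S₁) (g₂ : GuillotineFits w h a₂ b S₂)
    (hd : Disjoint S₁ S₂) (ha : a₁ + a₂ ≤ a) : GuillotineFits w h a b (S₁ ∪ S₂) :=
  (vcut hd g₁ g₂).mono ha le_rfl

lemma hcut_of_le (g₁ : GuillotineFits w h a b₁ S₁) (g₂ : GuillotineFits w h a b₂ S₂)
    (hd : Disjoint S₁ S₂) (hb : b₁ + b₂ ≤ b) : GuillotineFits w h a b (S₁ ∪ S₂) :=
  (hcut hd g₁ g₂).mono le_rfl hb

lemma subset (g : GuillotineFits w h a b S) {S' : Finset ι} (hS : S' ⊆ S) :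
    GuillotineFits w h a b S' := by
  induction g generalizing S' with
  | nil ha hb => rw [subset_empty.1 hS]; exact .nil ha hb
  | single ha hb hw hh =>
    rcases subset_singleton_iff.1 hS with rfl | rfl
    · exact .nil ha hb
    · exact .single ha hb hw hh
  | vcut hd _ _ ih₁ ih₂ =>
    rw [← inter_eq_left.2 hS, inter_union_distrib_left]
    exact .vcut (hd.mono inter_subset_right inter_subset_right) (ih₁ inter_subset_right)
      (ih₂ inter_subset_right)
  | hcut hd _ _ ih₁ ih₂ =>
    rw [← inter_eq_left.2 hS, inter_union_distrib_left]
    exact .hcut (hd.mono inter_subset_right inter_subset_right) (ih₁ inter_subset_right)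
      (ih₂ inter_subset_right)

lemma swap (g : GuillotineFits w h a b S) : GuillotineFits h w b a S := by
  induction g with
  | nil ha hb => exact .nil hb ha
  | single ha hb hw hh => exact .single hb ha hh hw
  | vcut hd _ _ ih₁ ih₂ => exact .hcut hd ih₁ ih₂
  | hcut hd _ _ ih₁ ih₂ => exact .vcut hd ih₁ ih₂

lemma scale (g : GuillotineFits w h a b S) {c : ℝ} (hc : 0 ≤ c) :
    GuillotineFits (fun i => c * w i) (fun i => c * h i) (c * a) (c * b) S := by
  induction g with
  | nil ha hb => exact .nil (by positivity) (by positivity)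
  | single ha hb hw hh => exact .single (by positivity) (by positivity) (by gcongr) (by gcongr)
  | vcut hd _ _ ih₁ ih₂ => rw [mul_add]; exact .vcut hd ih₁ ih₂
  | hcut hd _ _ ih₁ ih₂ => rw [mul_add]; exact .hcut hd ih₁ ih₂

lemma sum_area_le (g : GuillotineFits w h a b S) (hpos : ∀ i ∈ S, 0 ≤ w i ∧ 0 ≤ h i) :
    ∑ i ∈ S, w i * h i ≤ a * b := by
  induction g with
  | nil ha hb => simpa using mul_nonneg ha hb
  | single ha _ hw hh => simpa using mul_le_mul hw hh (hpos _ (mem_singleton_self _)).2 ha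
  | vcut hd _ _ ih₁ ih₂ =>
    rw [sum_union hd, add_mul]
    exact add_le_add (ih₁ fun i hi => hpos i (mem_union_left _ hi))
      (ih₂ fun i hi => hpos i (mem_union_right _ hi))
  | hcut hd _ _ ih₁ ih₂ =>
    rw [sum_union hd, mul_add]
    exact add_le_add (ih₁ fun i hi => hpos i (mem_union_left _ hi))
      (ih₂ fun i hi => hpos i (mem_union_right _ hi))

lemma dims_le (g : GuillotineFits w h a b S) {i : ι} (hi : i ∈ S) : w i ≤ a ∧ h i ≤ b := by
  induction g with
  | nil => simp at hi
  | single _ _ hw hh => rw [mem_singleton.1 hi]; exact ⟨hw, hh⟩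
  | vcut _ g₁ g₂ ih₁ ih₂ =>
    rcases mem_union.1 hi with hi | hi
    · exact ⟨by linarith [(ih₁ hi).1, g₂.nonneg.1], (ih₁ hi).2⟩
    · exact ⟨by linarith [(ih₂ hi).1, g₁.nonneg.1], (ih₂ hi).2⟩
  | hcut _ g₁ g₂ ih₁ ih₂ =>
    rcases mem_union.1 hi with hi | hi
    · exact ⟨(ih₁ hi).1, by linarith [(ih₁ hi).2, g₂.nonneg.2]⟩
    · exact ⟨(ih₂ hi).1, by linarith [(ih₂ hi).2, g₁.nonneg.2]⟩

end GuillotineFits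

/-! ### Guillotine packings with vertical coordinates -/

/-- The items of `S` whose interval `[u i, u i + h i)` contains `y`. -/
noncomputable def activeAt (u h : ι → ℝ) (S : Finset ι) (y : ℝ) : Finset ι :=
  {i ∈ S | u i ≤ y ∧ y < u i + h i}

/-- A guillotine packing of `S` into a box of width `a` spanning the heights from `y₀` to `y₁`,
with the lower edge of item `i` at height `u i`. Horizontal positions are not recorded. -/
inductive GuillotineFitsAt (w h u : ι → ℝ) : ℝ → ℝ → ℝ → Finset ι → Prop
  | nil {a y₀ y₁} (ha : 0 ≤ a) (hy : y₀ ≤ y₁) : GuillotineFitsAt w h u a y₀ y₁ ∅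
  | single {a y₀ y₁ i} (ha : 0 ≤ a) (hy : y₀ ≤ y₁) (hw : w i ≤ a) (hlo : y₀ ≤ u i)
      (hhi : u i + h i ≤ y₁) : GuillotineFitsAt w h u a y₀ y₁ {i}
  | vcut {a₁ a₂ y₀ y₁ S₁ S₂} (hd : Disjoint S₁ S₂) (g₁ : GuillotineFitsAt w h u a₁ y₀ y₁ S₁)
      (g₂ : GuillotineFitsAt w h u a₂ y₀ y₁ S₂) :
      GuillotineFitsAt w h u (a₁ + a₂) y₀ y₁ (S₁ ∪ S₂)
  | hcut {a y₀ c y₁ S₁ S₂} (hd : Disjoint S₁ S₂) (g₁ : GuillotineFitsAt w h u a y₀ c S₁)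
      (g₂ : GuillotineFitsAt w h u a c y₁ S₂) : GuillotineFitsAt w h u a y₀ y₁ (S₁ ∪ S₂)

namespace GuillotineFitsAt

variable {w h u : ι → ℝ} {a y₀ y₁ : ℝ} {S : Finset ι}

lemma congr (g : GuillotineFitsAt w h u a y₀ y₁ S) {u' : ι → ℝ} (hu : ∀ i ∈ S, u' i = u i) :
    GuillotineFitsAt w h u' a y₀ y₁ S := by
  induction g with
  | nil ha hy => exact .nil ha hy
  | single ha hy hw hlo hhi =>
    rw [← hu _ (mem_singleton_self _)] at hlo hhi
    exact .single ha hy hw hlo hhi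
  | vcut hd _ _ ih₁ ih₂ =>
    exact .vcut hd (ih₁ fun i hi => hu i (mem_union_left _ hi))
      (ih₂ fun i hi => hu i (mem_union_right _ hi))
  | hcut hd _ _ ih₁ ih₂ =>
    exact .hcut hd (ih₁ fun i hi => hu i (mem_union_left _ hi))
      (ih₂ fun i hi => hu i (mem_union_right _ hi))

lemma guillotineFits (g : GuillotineFitsAt w h u a y₀ y₁ S) :
    GuillotineFits w h a (y₁ - y₀) S := by
  induction g with
  | nil ha hy => exact .nil ha (sub_nonneg.2 hy)
  | single ha hy hw hlo hhi => exact .single ha (sub_nonneg.2 hy) hw (by linarith)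
  | vcut hd _ _ ih₁ ih₂ => exact .vcut hd ih₁ ih₂
  | hcut hd _ _ ih₁ ih₂ => exact ih₁.hcut_of_le ih₂ hd (by linarith)

lemma le (g : GuillotineFitsAt w h u a y₀ y₁ S) : y₀ ≤ y₁ :=
  sub_nonneg.1 g.guillotineFits.nonneg.2

lemma subset (g : GuillotineFitsAt w h u a y₀ y₁ S) {S' : Finset ι} (hS : S' ⊆ S) :
    GuillotineFitsAt w h u a y₀ y₁ S' := by
  induction g generalizing S' with
  | nil ha hy => rw [subset_empty.1 hS]; exact .nil ha hy
  | single ha hy hw hlo hhi =>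
    rcases subset_singleton_iff.1 hS with rfl | rfl
    · exact .nil ha hy
    · exact .single ha hy hw hlo hhi
  | vcut hd _ _ ih₁ ih₂ =>
    rw [← inter_eq_left.2 hS, inter_union_distrib_left]
    exact .vcut (hd.mono inter_subset_right inter_subset_right) (ih₁ inter_subset_right)
      (ih₂ inter_subset_right)
  | hcut hd _ _ ih₁ ih₂ =>
    rw [← inter_eq_left.2 hS, inter_union_distrib_left]
    exact .hcut (hd.mono inter_subset_right inter_subset_right) (ih₁ inter_subset_right)
      (ih₂ inter_subset_right)

lemma bounds (g : GuillotineFitsAt w h u a y₀ y₁ S) {i : ι} (hi : i ∈ S) :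
    y₀ ≤ u i ∧ u i + h i ≤ y₁ := by
  induction g with
  | nil => simp at hi
  | single _ _ _ hlo hhi => rw [mem_singleton.1 hi]; exact ⟨hlo, hhi⟩
  | vcut _ _ _ ih₁ ih₂ => exact (mem_union.1 hi).elim (fun hi => ih₁ hi) (fun hi => ih₂ hi)
  | hcut _ g₁ g₂ ih₁ ih₂ =>
    rcases mem_union.1 hi with hi | hi
    · exact ⟨(ih₁ hi).1, (ih₁ hi).2.trans g₂.le⟩
    · exact ⟨g₁.le.trans (ih₂ hi).1, (ih₂ hi).2⟩

lemma sum_activeAt_le (g : GuillotineFitsAt w h u a y₀ y₁ S) (hw : ∀ i ∈ S, 0 ≤ w i) (y : ℝ) :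
    ∑ i ∈ activeAt u h S y, w i ≤ a := by
  unfold activeAt
  induction g with
  | nil ha _ => simpa using ha
  | single ha _ hwa _ _ => rw [filter_singleton]; split_ifs <;> simp [hwa, ha]
  | vcut hd _ _ ih₁ ih₂ =>
    rw [filter_union, sum_union (disjoint_filter_filter hd)]
    exact add_le_add (ih₁ fun i hi => hw i (mem_union_left _ hi))
      (ih₂ fun i hi => hw i (mem_union_right _ hi))
  | @hcut a y₀ c y₁ S₁ S₂ _ g₁ g₂ ih₁ ih₂ =>
    rw [filter_union]
    rcases lt_or_ge y c with hy | hy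
    · rw [filter_false_of_mem (s := S₂) fun i hi hact => by linarith [(g₂.bounds hi).1, hact.1],
        union_empty]
      exact ih₁ fun i hi => hw i (mem_union_left _ hi)
    · rw [filter_false_of_mem (s := S₁) fun i hi hact => by linarith [(g₁.bounds hi).2, hact.2],
        empty_union]
      exact ih₂ fun i hi => hw i (mem_union_right _ hi)

/-- The height function of `GuillotineFitsAt.removeStrip`: the strip `[z, z + s]` is collapsed to
the level `z`. -/
noncomputable def collapse (z s y : ℝ) : ℝ := max (min y z) (y - s)

lemma collapse_mono (z s : ℝ) : Monotone (collapse z s) := fun _ _ hxy =>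
  max_le_max (min_le_min_right _ hxy) (sub_le_sub_right hxy _)

lemma collapse_of_le {z s y : ℝ} (hs : 0 ≤ s) (hy : y ≤ z) : collapse z s y = y := by
  rw [collapse, min_eq_left hy, max_eq_left (by linarith)]

lemma collapse_of_ge {z s y : ℝ} (hy : z + s ≤ y) : collapse z s y = y - s := by
  rw [collapse, max_eq_right ((min_le_right _ _).trans (by linarith))]

lemma removeStrip (g : GuillotineFitsAt w h u a y₀ y₁ S) {z s : ℝ} (hs : 0 ≤ s)
    (hh : ∀ i ∈ S, 0 ≤ h i) (hz : ∀ i ∈ S, u i + h i ≤ z ∨ z + s ≤ u i) :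
    GuillotineFits w h a (collapse z s y₁ - collapse z s y₀) S := by
  induction g with
  | nil ha hy => exact .nil ha (sub_nonneg.2 (collapse_mono z s hy))
  | @single a y₀ y₁ i ha hy hw hlo hhi =>
    refine .single ha (sub_nonneg.2 (collapse_mono z s hy)) hw ?_
    have hi := hh i (mem_singleton_self _)
    have hcol : collapse z s (u i + h i) - collapse z s (u i) = h i := by
      rcases hz i (mem_singleton_self _) with hbelow | habove
      · rw [collapse_of_le hs hbelow, collapse_of_le hs (by linarith)]; ring
      · rw [collapse_of_ge (by linarith), collapse_of_ge habove]; ring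
    linarith [collapse_mono z s hlo, collapse_mono z s hhi]
  | vcut hd _ _ ih₁ ih₂ =>
    exact .vcut hd
      (ih₁ (fun i hi => hh i (mem_union_left _ hi)) fun i hi => hz i (mem_union_left _ hi))
      (ih₂ (fun i hi => hh i (mem_union_right _ hi)) fun i hi => hz i (mem_union_right _ hi))
  | hcut hd _ _ ih₁ ih₂ =>
    exact GuillotineFits.hcut_of_le
      (ih₁ (fun i hi => hh i (mem_union_left _ hi)) fun i hi => hz i (mem_union_left _ hi))
      (ih₂ (fun i hi => hh i (mem_union_right _ hi)) fun i hi => hz i (mem_union_right _ hi))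
      hd (by linarith)

end GuillotineFitsAt

namespace GuillotineFits

variable {w h : ι → ℝ} {a b : ℝ} {S : Finset ι}

lemma exists_fitsAt (g : GuillotineFits w h a b S) (y₀ : ℝ) :
    ∃ u, GuillotineFitsAt w h u a y₀ (y₀ + b) S := by
  induction g generalizing y₀ with
  | nil ha hb => exact ⟨fun _ => 0, .nil ha (by linarith)⟩
  | single ha hb hw hh => exact ⟨fun _ => y₀, .single ha (by linarith) hw le_rfl (by linarith)⟩
  | @vcut a₁ a₂ b S₁ S₂ hd _ _ ih₁ ih₂ =>
    obtain ⟨u₁, h₁⟩ := ih₁ y₀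
    obtain ⟨u₂, h₂⟩ := ih₂ y₀
    exact ⟨fun i => if i ∈ S₁ then u₁ i else u₂ i, .vcut hd (h₁.congr fun i hi => if_pos hi)
      (h₂.congr fun i hi => if_neg (disjoint_right.1 hd hi))⟩
  | @hcut a b₁ b₂ S₁ S₂ hd _ _ ih₁ ih₂ =>
    obtain ⟨u₁, h₁⟩ := ih₁ y₀
    obtain ⟨u₂, h₂⟩ := ih₂ (y₀ + b₁)
    rw [add_assoc] at h₂
    exact ⟨fun i => if i ∈ S₁ then u₁ i else u₂ i, .hcut hd (h₁.congr fun i hi => if_pos hi)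
      (h₂.congr fun i hi => if_neg (disjoint_right.1 hd hi))⟩

/- The strips `[2 j s, (2 j + 1) s]`, `j < L`, are so far apart that no item meets two of them; one
of them is met by at most a fraction `1 / L` of the items and is removed. -/
lemma exists_contract_of_flat {s : ℝ} {L : ℕ} (g : GuillotineFits w h a b S) (hL : 0 < L)
    (hs : 0 < s) (hh : ∀ i ∈ S, 0 ≤ h i ∧ h i ≤ s) (hb : 2 * L * s ≤ b) :
    ∃ E ⊆ S, L * #E ≤ #S ∧ GuillotineFits w h a (b - s) (S \ E) := by
  obtain ⟨u, gu⟩ := g.exists_fitsAt 0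
  rw [zero_add] at gu
  let E (j : ℕ) : Finset ι := {i ∈ S | ¬(u i + h i ≤ 2 * j * s ∨ 2 * j * s + s ≤ u i)}
  have hdis : ∀ j k : ℕ, j < k → Disjoint (E j) (E k) := by
    intro j k hjk
    refine disjoint_left.2 fun i hij hik => ?_
    simp only [E, mem_filter, not_or, not_le] at hij hik
    have hjk : (j : ℝ) + 1 ≤ k := mod_cast hjk
    nlinarith [hij.2.2, hik.2.1, hh i hij.1]
  obtain ⟨j, hj, hcard⟩ := exists_card_mul_le_of_pairwiseDisjoint (nonempty_range_iff.2 hL.ne')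
    (fun j _ => filter_subset _ S) fun j _ k _ hjk =>
      hjk.lt_or_gt.elim (hdis j k) fun hkj => (hdis k j hkj).symm
  rw [card_range] at hcard
  refine ⟨E j, filter_subset _ _, hcard, ?_⟩
  have hjL : (j : ℝ) + 1 ≤ L := mod_cast mem_range.1 hj
  have hz : 0 ≤ 2 * j * s := by positivity
  have hfit := (gu.subset sdiff_subset).removeStrip (z := 2 * j * s) hs.le
    (fun i hi => (hh i (mem_sdiff.1 hi).1).1) (S := S \ E j) fun i hi => by
      simp only [E, mem_sdiff, mem_filter, not_and, not_not] at hi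
      exact hi.2 hi.1
  rwa [GuillotineFitsAt.collapse_of_ge (by nlinarith), GuillotineFitsAt.collapse_of_le hs.le hz,
    sub_zero] at hfit

end GuillotineFits

end Fitting

/-! ### Thin long items -/

section ThinLong

variable {ι : Type*}

/-- Item `i`, with short side `p i` and long side `q i`, is placed with width `w i` and height
`h i`, its long side being horizontal or vertical. -/
def IsOriented (w h p q : ι → ℝ) (i : ι) : Prop :=
  (w i = q i ∧ h i = p i) ∨ (w i = p i ∧ h i = q i)

variable {w h p q : ι → ℝ} {δ μ : ℝ} {i : ι}

lemma IsOriented.swap (H : IsOriented w h p q i) : IsOriented h w p q i :=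
  H.symm.imp And.symm And.symm

lemma IsOriented.mul_eq (H : IsOriented w h p q i) : w i * h i = p i * q i := by
  rcases H with ⟨hw, hh⟩ | ⟨hw, hh⟩ <;> rw [hw, hh]
  exact mul_comm _ _

lemma IsOriented.nonneg (H : IsOriented w h p q i) (hp : 0 ≤ p i) (hq : 0 ≤ q i) :
    0 ≤ w i ∧ 0 ≤ h i := by
  rcases H with ⟨hw, hh⟩ | ⟨hw, hh⟩ <;> rw [hw, hh]
  exacts [⟨hq, hp⟩, ⟨hp, hq⟩]

/-- All items of `T` have thickness `p i ∈ (0, μ]` and length `q i > δ`. -/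
structure ThinLong (w h p q : ι → ℝ) (δ μ : ℝ) (T : Finset ι) : Prop where
  pos : ∀ i ∈ T, 0 < p i
  le : ∀ i ∈ T, p i ≤ μ
  lt : ∀ i ∈ T, δ < q i
  oriented : ∀ i ∈ T, IsOriented w h p q i

namespace ThinLong

variable {T T' : Finset ι}

lemma swap (H : ThinLong w h p q δ μ T) : ThinLong h w p q δ μ T :=
  ⟨H.pos, H.le, H.lt, fun i hi => (H.oriented i hi).swap⟩

lemma mono (H : ThinLong w h p q δ μ T) (hT : T' ⊆ T) : ThinLong w h p q δ μ T' :=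
  ⟨fun i hi => H.pos i (hT hi), fun i hi => H.le i (hT hi), fun i hi => H.lt i (hT hi),
    fun i hi => H.oriented i (hT hi)⟩

lemma nonneg (H : ThinLong w h p q δ μ T) (hδ : 0 ≤ δ) (hi : i ∈ T) : 0 ≤ w i ∧ 0 ≤ h i :=
  (H.oriented i hi).nonneg (H.pos i hi).le (hδ.trans (H.lt i hi).le)

lemma eq_of_width_le (H : ThinLong w h p q δ μ T) (hi : i ∈ T) (hw : w i ≤ δ) :
    w i = p i ∧ h i = q i :=
  (H.oriented i hi).resolve_left fun hor => (hor.1 ▸ H.lt i hi).not_ge hw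

lemma eq_of_height_le (H : ThinLong w h p q δ μ T) (hi : i ∈ T) (hh : h i ≤ δ) :
    w i = q i ∧ h i = p i :=
  (H.swap.eq_of_width_le hi hh).symm

variable [DecidableEq ι] {a b : ℝ}

lemma sum_area_le (H : ThinLong w h p q δ μ T) (hδ : 0 ≤ δ) (g : GuillotineFits w h a b T) :
    ∑ i ∈ T, p i * q i ≤ a * b :=
  (sum_congr rfl fun i hi => (H.oriented i hi).mul_eq).symm.trans_le
    (g.sum_area_le fun _ hi => H.nonneg hδ hi)

lemma mul_sum_thickness_le (H : ThinLong w h p q δ μ T) (hδ : 0 ≤ δ)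
    (g : GuillotineFits w h a b T) (hb : b ≤ 1) : δ * ∑ i ∈ T, p i ≤ a :=
  calc
    δ * ∑ i ∈ T, p i ≤ ∑ i ∈ T, p i * q i := by
      rw [mul_sum]
      exact sum_le_sum fun i hi => by nlinarith [H.pos i hi, H.lt i hi]
    _ ≤ a * b := H.sum_area_le hδ g
    _ ≤ a := mul_le_of_le_one_right g.nonneg.1 hb

end ThinLong

end ThinLong

/-! ### Contracting a guillotine packing of thin long items -/

section Contraction

variable {ι : Type*} [DecidableEq ι] {w h p q : ι → ℝ} {δ μ a a₁ a₂ b X Y s t : ℝ} {L : ℕ}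
  {T T₁ T₂ R C : Finset ι} {d : ι → ℝ}

/-- After discarding at most `#T / L` items, `R` fits into one of the boxes `(a + X) × b` and
`a × (b + Y)` with the extended side shortened by `s`. -/
def Contracts (w h : ι → ℝ) (L : ℕ) (T : Finset ι) (a b X Y s : ℝ) (R : Finset ι) : Prop :=
  ∃ E ⊆ T, L * #E ≤ #T ∧
    (GuillotineFits w h (a + X - s) b (R \ E) ∨ GuillotineFits w h a (b + Y - s) (R \ E))

namespace Contracts

lemma swap (H : Contracts w h L T a b X Y s R) : Contracts h w L T b a Y X s R := by
  obtain ⟨E, hE, hcard, hfit⟩ := H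
  exact ⟨E, hE, hcard, hfit.symm.imp GuillotineFits.swap GuillotineFits.swap⟩

lemma of_slack (g : GuillotineFits w h a b T) (hR : R ⊆ T) (hs : s ≤ X ∨ s ≤ Y) :
    Contracts w h L T a b X Y s R := by
  refine ⟨∅, empty_subset _, by simp, ?_⟩
  rw [sdiff_empty]
  exact hs.imp (fun hX => (g.mono (by linarith) le_rfl).subset hR)
    fun hY => (g.mono le_rfl (by linarith)).subset hR

lemma of_thin_left (g₁ : GuillotineFits w h a₁ b T₁) (g₂ : GuillotineFits w h a₂ b T₂)
    (hd : Disjoint T₁ T₂) (hthin : ∀ i ∈ T₁, 0 ≤ w i ∧ w i ≤ s) (hL : 0 < L) (hs : 0 < s)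
    (hsa : 2 * L * s ≤ a₁) (hX : 0 ≤ X) (hR : R ⊆ T₁ ∪ T₂) :
    Contracts w h L (T₁ ∪ T₂) (a₁ + a₂) b X Y s R := by
  obtain ⟨E, hE, hcard, hfit⟩ := g₁.swap.exists_contract_of_flat hL hs hthin hsa
  have hfit := hfit.swap.vcut_of_le g₂ (hd.mono_left sdiff_subset) (a := a₁ + a₂ + X - s)
    (by linarith)
  refine ⟨E, hE.trans subset_union_left, hcard.trans (card_le_card subset_union_left), .inl ?_⟩
  refine hfit.subset fun i hi => ?_
  obtain ⟨hiR, hiE⟩ := mem_sdiff.1 hi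
  exact mem_union.2 ((mem_union.1 (hR hiR)).imp_left fun hi₁ => mem_sdiff.2 ⟨hi₁, hiE⟩)

lemma absorb_left (H : Contracts w h L T₂ a₂ b (X + a₁) Y s R) (ha₁ : 0 ≤ a₁) :
    Contracts w h L (T₁ ∪ T₂) (a₁ + a₂) b X Y s R := by
  obtain ⟨E, hE, hcard, hfit⟩ := H
  refine ⟨E, hE.trans subset_union_right, hcard.trans (card_le_card subset_union_right), ?_⟩
  exact hfit.imp (fun g => g.mono (by linarith) le_rfl) fun g => g.mono (by linarith) le_rfl

lemma union (H₁ : Contracts w h L T₁ a₁ b 0 0 s (R ∩ T₁))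
    (H₂ : Contracts w h L T₂ a₂ b 0 0 s (R ∩ T₂)) (g₁ : GuillotineFits w h a₁ b T₁)
    (g₂ : GuillotineFits w h a₂ b T₂) (hd : Disjoint T₁ T₂) (hX : 0 ≤ X) (hY : 0 ≤ Y)
    (hR : R ⊆ T₁ ∪ T₂) : Contracts w h L (T₁ ∪ T₂) (a₁ + a₂) b X Y s R := by
  obtain ⟨E₁, hE₁, hcard₁, hfit₁⟩ := H₁
  obtain ⟨E₂, hE₂, hcard₂, hfit₂⟩ := H₂
  have hsub : R \ (E₁ ∪ E₂) ⊆ ((R ∩ T₁) \ E₁) ∪ ((R ∩ T₂) \ E₂) := by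
    intro i hi
    simp only [mem_sdiff, mem_union, mem_inter] at hi ⊢
    have := mem_union.1 (hR hi.1)
    tauto
  have hsub₁ : (R ∩ T₁) \ E₁ ⊆ T₁ := sdiff_subset.trans inter_subset_right
  have hsub₂ : (R ∩ T₂) \ E₂ ⊆ T₂ := sdiff_subset.trans inter_subset_right
  have hdis : Disjoint ((R ∩ T₁) \ E₁) ((R ∩ T₂) \ E₂) := hd.mono hsub₁ hsub₂
  refine ⟨E₁ ∪ E₂, union_subset_union hE₁ hE₂, ?_, ?_⟩
  · rw [card_union_of_disjoint hd]
    nlinarith [card_union_le E₁ E₂]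
  rcases hfit₁ with hfit₁ | hfit₁
  · exact .inl ((hfit₁.vcut_of_le (g₂.subset hsub₂) hdis (by linarith)).subset hsub)
  rcases hfit₂ with hfit₂ | hfit₂
  · exact .inl (((g₁.subset hsub₁).vcut_of_le hfit₂ hdis (by linarith)).subset hsub)
  · exact .inr (((GuillotineFits.vcut hdis hfit₁ hfit₂).mono le_rfl (by linarith)).subset hsub)

end Contracts

/-- The factor by which the total thickness of the non-chain items of depth at most `t` in an
`a × b` box is bounded, see `IsContractionDepth`. It is superadditive under cuts into pieces with
sides at least `δ`, with `2` to spare for the two chains of the pieces. -/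
noncomputable def depthFactor (δ a b : ℝ) : ℝ := 2 * (max a δ * max b δ) / δ ^ 2 - 2

lemma depthFactor_comm (δ a b : ℝ) : depthFactor δ a b = depthFactor δ b a := by
  rw [depthFactor, mul_comm (max a δ), depthFactor]

lemma depthFactor_nonneg (hδ : 0 < δ) : 0 ≤ depthFactor δ a b := by
  have hprod : δ * δ ≤ max a δ * max b δ :=
    mul_le_mul (le_max_right _ _) (le_max_right _ _) hδ.le (hδ.le.trans (le_max_right _ _))
  rw [depthFactor, sub_nonneg, le_div_iff₀ (by positivity)]
  linarith

lemma depthFactor_mono_left (hδ : 0 < δ) (ha : a₁ ≤ a₂) :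
    depthFactor δ a₁ b ≤ depthFactor δ a₂ b := by
  unfold depthFactor
  gcongr

lemma depthFactor_add (ha₁ : δ ≤ a₁) (ha₂ : δ ≤ a₂) (hδ : 0 < δ) (hb : δ ≤ b) :
    depthFactor δ (a₁ + a₂) b = depthFactor δ a₁ b + depthFactor δ a₂ b + 2 := by
  simp only [depthFactor, max_eq_left ha₁, max_eq_left ha₂, max_eq_left hb,
    max_eq_left (show δ ≤ a₁ + a₂ by linarith)]
  ring

/-- A depth function `d` on the items `T` packed in an `a × b` box. Discarding the items of depth at
most `t` costs little thickness and makes the packing contractible. The items of the chain `C` lie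
in nested subpieces; when the box is part of a piece larger by `X` and `Y`, their depth there is
larger by `X + Y`. -/
structure IsContractionDepth (w h p : ι → ℝ) (δ μ : ℝ) (L : ℕ) (a b : ℝ) (T C : Finset ι)
    (d : ι → ℝ) : Prop where
  subset : C ⊆ T
  chain_le : ∀ t ≤ δ / 2, δ * ∑ i ∈ C with d i ≤ t, p i ≤ max t 0
  rest_le : ∀ t ≤ δ / 2, δ * ∑ i ∈ T \ C with d i ≤ t, p i ≤ depthFactor δ a b * max t 0
  contracts : ∀ X Y t s, 0 ≤ X → 0 ≤ Y → t ≤ δ / 2 → X + Y ≤ t → δ ≤ a + X → δ ≤ b + Y →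
    μ ≤ s → 8 * L * s ≤ t → ∀ R ⊆ T, (∀ i ∈ R, i ∈ C → t < d i + (X + Y)) →
    (∀ i ∈ R, i ∉ C → t < d i) → Contracts w h L T a b X Y s R

namespace IsContractionDepth

lemma swap (H : IsContractionDepth w h p δ μ L a b T C d) :
    IsContractionDepth h w p δ μ L b a T C d where
  subset := H.subset
  chain_le := H.chain_le
  rest_le := depthFactor_comm δ a b ▸ H.rest_le
  contracts X Y t s hX hY ht hXY ha hb hμ hs R hR hC hN :=
    (H.contracts Y X t s hY hX ht (by linarith) hb ha hμ hs R hR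
      (fun i hi hiC => by linarith [hC i hi hiC]) hN).swap

lemma sum_thickness_le (H : IsContractionDepth w h p δ μ L a b T C d) (ht : t ≤ δ / 2) :
    δ * ∑ i ∈ T with d i ≤ t, p i ≤ (depthFactor δ a b + 1) * max t 0 := by
  rw [← union_sdiff_of_subset H.subset, filter_union,
    sum_union (disjoint_filter_filter disjoint_sdiff)]
  linarith [H.chain_le t ht, H.rest_le t ht]

lemma of_vertical (hL : 0 < L) (hδ : 0 < δ) (hμ : 0 < μ) (H : ThinLong w h p q δ μ T)
    (g : GuillotineFits w h a b T) (hvert : ∀ i ∈ T, w i ≤ δ) :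
    IsContractionDepth w h p δ μ L a b T ∅ fun _ => δ where
  subset := empty_subset _
  chain_le t _ := by simp
  rest_le t ht := by
    rw [filter_false_of_mem fun i _ => by linarith]
    simpa using mul_nonneg (depthFactor_nonneg hδ) (le_max_right t 0)
  contracts X Y t s hX _ ht hXY ha _ hμs hs R hR _ _ := by
    have hthin : ∀ i ∈ T, 0 ≤ w i ∧ w i ≤ s := fun i hi => by
      rw [(H.eq_of_width_le hi (hvert i hi)).1]
      exact ⟨(H.pos i hi).le, (H.le i hi).trans hμs⟩
    have hs0 : 0 < s := hμ.trans_le hμs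
    have := Contracts.of_thin_left (Y := Y) g (.nil le_rfl g.nonneg.2) (disjoint_empty_right T)
      hthin hL hs0 (by linarith) hX (hR.trans subset_union_left)
    rwa [union_empty, add_zero] at this

/-- The depth function for a box whose left part, of width `a₁` and with items `T₁`, is peeled off
in front of a part with depth function `d` and chain `C`. -/
noncomputable def peelDepth (a₁ : ℝ) (T₁ C : Finset ι) (d : ι → ℝ) (i : ι) : ℝ :=
  if i ∈ T₁ then a₁ else if i ∈ C then a₁ + d i else d i

lemma peelDepth_of_mem {i : ι} (hi : i ∈ T₁) : peelDepth a₁ T₁ C d i = a₁ := if_pos hi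

lemma peelDepth_of_mem_chain (hd : Disjoint T₁ T₂) (hC : C ⊆ T₂) {i : ι} (hi : i ∈ C) :
    peelDepth a₁ T₁ C d i = a₁ + d i := by
  rw [peelDepth, if_neg (disjoint_right.1 hd (hC hi)), if_pos hi]

lemma peelDepth_of_notMem (hd : Disjoint T₁ T₂) {i : ι} (hi : i ∈ T₂) (hC : i ∉ C) :
    peelDepth a₁ T₁ C d i = d i := by
  rw [peelDepth, if_neg (disjoint_right.1 hd hi), if_neg hC]

lemma chain_le_peel (B₂ : IsContractionDepth w h p δ μ L a₂ b T₂ C d) (hd : Disjoint T₁ T₂)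
    (ha₁ : 0 ≤ a₁) (hthick : δ * ∑ i ∈ T₁, p i ≤ a₁) (ht : t ≤ δ / 2) :
    δ * ∑ i ∈ T₁ ∪ C with peelDepth a₁ T₁ C d i ≤ t, p i ≤ max t 0 := by
  have hchain : {i ∈ C | peelDepth a₁ T₁ C d i ≤ t} = {i ∈ C | d i ≤ t - a₁} :=
    filter_congr fun i hi => by rw [peelDepth_of_mem_chain hd B₂.subset hi, le_sub_iff_add_le']
  have hrec := B₂.chain_le (t - a₁) (by linarith)
  rw [filter_union, sum_union (disjoint_filter_filter (hd.mono_right B₂.subset)), mul_add, hchain]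
  rcases le_or_gt a₁ t with hat | hat
  · rw [filter_true_of_mem fun i hi => (peelDepth_of_mem hi).trans_le hat]
    rw [max_eq_left (by linarith)] at hrec ⊢
    linarith
  · rw [filter_false_of_mem fun i hi => by rw [peelDepth_of_mem hi]; exact hat.not_ge]
    rw [max_eq_right (by linarith)] at hrec
    simpa using hrec.trans (le_max_right t 0)

lemma rest_le_peel (B₂ : IsContractionDepth w h p δ μ L a₂ b T₂ C d) (hd : Disjoint T₁ T₂)
    (hδ : 0 < δ) (ha₁ : 0 ≤ a₁) (ht : t ≤ δ / 2) :
    δ * ∑ i ∈ (T₁ ∪ T₂) \ (T₁ ∪ C) with peelDepth a₁ T₁ C d i ≤ t, p i ≤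
      depthFactor δ (a₁ + a₂) b * max t 0 := by
  have hrest : (T₁ ∪ T₂) \ (T₁ ∪ C) = T₂ \ C := by
    ext i
    have : i ∈ T₂ → i ∉ T₁ := fun hi => disjoint_right.1 hd hi
    simp only [mem_sdiff, mem_union]
    tauto
  have hfilter : {i ∈ T₂ \ C | peelDepth a₁ T₁ C d i ≤ t} = {i ∈ T₂ \ C | d i ≤ t} :=
    filter_congr fun i hi => by
      rw [peelDepth_of_notMem hd (mem_sdiff.1 hi).1 (mem_sdiff.1 hi).2]
  rw [hrest, hfilter]
  exact (B₂.rest_le t ht).trans <|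
    mul_le_mul_of_nonneg_right (depthFactor_mono_left hδ (by linarith)) (le_max_right _ _)

/- If the margin peeled off so far stays below `t`, the strip only adds to it. Otherwise either the
margin was already at least `t / 2`, which is slack enough, or the strip has width at least `t / 2`
and can itself be contracted. -/
lemma contracts_peel (B₂ : IsContractionDepth w h p δ μ L a₂ b T₂ C d) (hd : Disjoint T₁ T₂)
    (g₁ : GuillotineFits w h a₁ b T₁) (g₂ : GuillotineFits w h a₂ b T₂) (hL : 0 < L)
    (hμ : 0 < μ) (hthin : ∀ i ∈ T₁, 0 ≤ w i ∧ w i ≤ μ) (hX : 0 ≤ X) (hY : 0 ≤ Y)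
    (ht : t ≤ δ / 2) (ha : δ ≤ a₁ + a₂ + X) (hb : δ ≤ b + Y) (hμs : μ ≤ s)
    (hs : 8 * L * s ≤ t) (hR : R ⊆ T₁ ∪ T₂)
    (hC : ∀ i ∈ R, i ∈ T₁ ∪ C → t < peelDepth a₁ T₁ C d i + (X + Y))
    (hN : ∀ i ∈ R, i ∉ T₁ ∪ C → t < peelDepth a₁ T₁ C d i) :
    Contracts w h L (T₁ ∪ T₂) (a₁ + a₂) b X Y s R := by
  have hL1 : (1 : ℝ) ≤ L := mod_cast hL
  have hs0 : 0 < s := hμ.trans_le hμs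
  have hLs : s ≤ L * s := le_mul_of_one_le_left hs0.le hL1
  rcases le_or_gt (X + Y + a₁) t with hmargin | hmargin
  · have hRT₂ : R ⊆ T₂ := fun i hi => by
      refine (mem_union.1 (hR hi)).resolve_left fun hi₁ => ?_
      have := hC i hi (mem_union_left _ hi₁)
      rw [peelDepth_of_mem hi₁] at this
      linarith
    refine (B₂.contracts (X + a₁) Y t s (add_nonneg hX g₁.nonneg.1) hY ht (by linarith)
      (by linarith) hb hμs hs R hRT₂ (fun i hi hiC => ?_) fun i hi hiC => ?_).absorb_left
      g₁.nonneg.1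
    · have := hC i hi (mem_union_right _ hiC)
      rw [peelDepth_of_mem_chain hd B₂.subset hiC] at this
      linarith
    · have := hN i hi (notMem_union.2 ⟨disjoint_right.1 hd (hRT₂ hi), hiC⟩)
      rwa [peelDepth_of_notMem hd (hRT₂ hi) hiC] at this
  rcases le_or_gt (t / 2) (X + Y) with hslack | hslack
  · refine .of_slack (.vcut hd g₁ g₂) hR ?_
    by_contra! hXY
    linarith
  · exact .of_thin_left g₁ g₂ hd (fun i hi => ⟨(hthin i hi).1, (hthin i hi).2.trans hμs⟩) hL hs0
      (by linarith) hX hR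

lemma peel (B₂ : IsContractionDepth w h p δ μ L a₂ b T₂ C d) (hL : 0 < L) (hδ : 0 < δ)
    (hμ : 0 < μ) (hd : Disjoint T₁ T₂) (H₁ : ThinLong w h p q δ μ T₁)
    (g₁ : GuillotineFits w h a₁ b T₁) (g₂ : GuillotineFits w h a₂ b T₂) (hb : b ≤ 1)
    (hvert : ∀ i ∈ T₁, w i ≤ δ) :
    IsContractionDepth w h p δ μ L (a₁ + a₂) b (T₁ ∪ T₂) (T₁ ∪ C) (peelDepth a₁ T₁ C d) where
  subset := union_subset_union_right B₂.subset
  chain_le _ := B₂.chain_le_peel hd g₁.nonneg.1 (H₁.mul_sum_thickness_le hδ.le g₁ hb)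
  rest_le _ := B₂.rest_le_peel hd hδ g₁.nonneg.1
  contracts X Y t s hX hY ht _ ha hb hμs hs R hR hC hN := by
    refine B₂.contracts_peel hd g₁ g₂ hL hμ (fun i hi => ?_) hX hY ht ha hb hμs hs hR hC hN
    rw [(H₁.eq_of_width_le hi (hvert i hi)).1]
    exact ⟨(H₁.pos i hi).le, H₁.le i hi⟩

lemma branch {C₁ C₂ : Finset ι} {d₁ d₂ : ι → ℝ}
    (B₁ : IsContractionDepth w h p δ μ L a₁ b T₁ C₁ d₁)
    (B₂ : IsContractionDepth w h p δ μ L a₂ b T₂ C₂ d₂) (hδ : 0 < δ)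
    (hd : Disjoint T₁ T₂) (g₁ : GuillotineFits w h a₁ b T₁) (g₂ : GuillotineFits w h a₂ b T₂)
    (ha₁ : δ ≤ a₁) (ha₂ : δ ≤ a₂) (hb : δ ≤ b) :
    IsContractionDepth w h p δ μ L (a₁ + a₂) b (T₁ ∪ T₂) ∅
      (fun i => if i ∈ T₁ then d₁ i else d₂ i) where
  subset := empty_subset _
  chain_le t _ := by simp
  rest_le t ht := by
    have hfilter₁ : {i ∈ T₁ | (if i ∈ T₁ then d₁ i else d₂ i) ≤ t} = {i ∈ T₁ | d₁ i ≤ t} :=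
      filter_congr fun i hi => by rw [if_pos hi]
    have hfilter₂ : {i ∈ T₂ | (if i ∈ T₁ then d₁ i else d₂ i) ≤ t} = {i ∈ T₂ | d₂ i ≤ t} :=
      filter_congr fun i hi => by rw [if_neg (disjoint_right.1 hd hi)]
    rw [sdiff_empty, filter_union, sum_union (disjoint_filter_filter hd), hfilter₁, hfilter₂,
      depthFactor_add ha₁ ha₂ hδ hb]
    linarith [B₁.sum_thickness_le ht, B₂.sum_thickness_le ht]
  contracts X Y t s hX hY ht hXY _ _ hμs hs R hR _ hN := by
    have ht0 : 0 ≤ t := (add_nonneg hX hY).trans hXY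
    have hdeep₁ : ∀ i ∈ R ∩ T₁, t < d₁ i := fun i hi => by
      simpa [(mem_inter.1 hi).2] using hN i (mem_inter.1 hi).1 (notMem_empty i)
    have hdeep₂ : ∀ i ∈ R ∩ T₂, t < d₂ i := fun i hi => by
      simpa [disjoint_right.1 hd (mem_inter.1 hi).2] using
        hN i (mem_inter.1 hi).1 (notMem_empty i)
    exact Contracts.union
      (B₁.contracts 0 0 t s le_rfl le_rfl ht (by simpa using ht0) (by simpa using ha₁)
        (by simpa using hb) hμs hs _ inter_subset_right
        (fun i hi _ => by simpa using hdeep₁ i hi) fun i hi _ => hdeep₁ i hi)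
      (B₂.contracts 0 0 t s le_rfl le_rfl ht (by simpa using ht0) (by simpa using ha₂)
        (by simpa using hb) hμs hs _ inter_subset_right
        (fun i hi _ => by simpa using hdeep₂ i hi) fun i hi _ => hdeep₂ i hi)
      g₁ g₂ hd hX hY hR

end IsContractionDepth

lemma exists_isContractionDepth_vcut (hL : 0 < L) (hδ : 0 < δ) (hμ : 0 < μ) (hd : Disjoint T₁ T₂)
    (H : ThinLong w h p q δ μ (T₁ ∪ T₂)) (g₁ : GuillotineFits w h a₁ b T₁)
    (g₂ : GuillotineFits w h a₂ b T₂) (hb : b ≤ 1) (htall : ∃ i ∈ T₁ ∪ T₂, δ < h i)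
    (B₁ : ∃ C d, IsContractionDepth w h p δ μ L a₁ b T₁ C d)
    (B₂ : ∃ C d, IsContractionDepth w h p δ μ L a₂ b T₂ C d) :
    ∃ C d, IsContractionDepth w h p δ μ L (a₁ + a₂) b (T₁ ∪ T₂) C d := by
  obtain ⟨C₁, d₁, B₁⟩ := B₁
  obtain ⟨C₂, d₂, B₂⟩ := B₂
  by_cases hvert₁ : ∀ i ∈ T₁, w i ≤ δ
  · exact ⟨_, _, B₂.peel hL hδ hμ hd (H.mono subset_union_left) g₁ g₂ hb hvert₁⟩
  by_cases hvert₂ : ∀ i ∈ T₂, w i ≤ δ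
  · rw [add_comm, union_comm]
    exact ⟨_, _, B₁.peel hL hδ hμ hd.symm (H.mono subset_union_right) g₂ g₁ hb hvert₂⟩
  push Not at hvert₁ hvert₂
  obtain ⟨i, hi, hwi⟩ := hvert₁
  obtain ⟨j, hj, hwj⟩ := hvert₂
  obtain ⟨k, hk, hhk⟩ := htall
  exact ⟨_, _, B₁.branch B₂ hδ hd g₁ g₂ (hwi.le.trans (g₁.dims_le hi).1)
    (hwj.le.trans (g₂.dims_le hj).1)
    (hhk.le.trans ((GuillotineFits.vcut hd g₁ g₂).dims_le hk).2)⟩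

theorem exists_isContractionDepth (hL : 0 < L) (hδ : 0 < δ) (hμ : 0 < μ) (hμδ : μ ≤ δ)
    (g : GuillotineFits w h a b T) (H : ThinLong w h p q δ μ T) (ha : a ≤ 1) (hb : b ≤ 1) :
    ∃ C d, IsContractionDepth w h p δ μ L a b T C d := by
  have of_horizontal {a b : ℝ} {T : Finset ι} (g : GuillotineFits w h a b T)
      (H : ThinLong w h p q δ μ T) (hhor : ∀ i ∈ T, h i ≤ δ) :
      ∃ C d, IsContractionDepth w h p δ μ L a b T C d :=
    ⟨_, _, (IsContractionDepth.of_vertical hL hδ hμ H.swap g.swap hhor).swap⟩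
  induction g with
  | nil ha₀ hb₀ => exact of_horizontal (.nil ha₀ hb₀) H (by simp)
  | @single a b i ha₀ hb₀ hwi hhi =>
    rcases H.oriented i (mem_singleton_self i) with ⟨_, hh⟩ | ⟨hw, _⟩
    · refine of_horizontal (.single ha₀ hb₀ hwi hhi) H ?_
      simp only [mem_singleton, forall_eq]
      exact hh.trans_le ((H.le i (mem_singleton_self i)).trans hμδ)
    · refine ⟨_, _, .of_vertical hL hδ hμ H (.single ha₀ hb₀ hwi hhi) ?_⟩
      simp only [mem_singleton, forall_eq]
      exact hw.trans_le ((H.le i (mem_singleton_self i)).trans hμδ)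
  | @vcut a₁ a₂ b S₁ S₂ hd g₁ g₂ ih₁ ih₂ =>
    by_cases hhor : ∀ j ∈ S₁ ∪ S₂, h j ≤ δ
    · exact of_horizontal (.vcut hd g₁ g₂) H hhor
    push Not at hhor
    exact exists_isContractionDepth_vcut hL hδ hμ hd H g₁ g₂ hb hhor
      (ih₁ (H.mono subset_union_left) (by linarith [g₂.nonneg.1]) hb)
      (ih₂ (H.mono subset_union_right) (by linarith [g₁.nonneg.1]) hb)
  | @hcut a b₁ b₂ S₁ S₂ hd g₁ g₂ ih₁ ih₂ =>
    by_cases hvert : ∀ j ∈ S₁ ∪ S₂, w j ≤ δ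
    · exact ⟨_, _, .of_vertical hL hδ hμ H (.hcut hd g₁ g₂) hvert⟩
    push Not at hvert
    obtain ⟨C₁, d₁, B₁⟩ := ih₁ (H.mono subset_union_left) ha (by linarith [g₂.nonneg.2])
    obtain ⟨C₂, d₂, B₂⟩ := ih₂ (H.mono subset_union_right) ha (by linarith [g₁.nonneg.2])
    obtain ⟨C, d, B⟩ := exists_isContractionDepth_vcut hL hδ hμ hd H.swap g₁.swap g₂.swap ha hvert
      ⟨C₁, d₁, B₁.swap⟩ ⟨C₂, d₂, B₂.swap⟩
    exact ⟨C, d, B.swap⟩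

end Contraction

/-! ### Container packings of long items -/

section LongFits

variable {ι : Type*} [DecidableEq ι]

/-- Guillotine cuts split an `a × b` box into at most `k` pieces, which are empty or horizontal or
vertical containers. The containers hold the items `S`, with thicknesses `p` and lengths `q`, and
the empty pieces have total area at least `f`. -/
inductive LongFits (p q : ι → ℝ) : ℕ → ℝ → ℝ → Finset ι → ℝ → Prop
  | free {a b} (ha : 0 ≤ a) (hb : 0 ≤ b) : LongFits p q 1 a b ∅ (a * b)
  | hcont {a b S} (ha : 0 ≤ a) (hb : 0 ≤ b) (hq : ∀ i ∈ S, q i ≤ a) (hp : ∑ i ∈ S, p i ≤ b) :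
      LongFits p q 1 a b S 0
  | vcont {a b S} (ha : 0 ≤ a) (hb : 0 ≤ b) (hq : ∀ i ∈ S, q i ≤ b) (hp : ∑ i ∈ S, p i ≤ a) :
      LongFits p q 1 a b S 0
  | vcut {k₁ k₂ a₁ a₂ b S₁ S₂ f₁ f₂} (hd : Disjoint S₁ S₂) (g₁ : LongFits p q k₁ a₁ b S₁ f₁)
      (g₂ : LongFits p q k₂ a₂ b S₂ f₂) :
      LongFits p q (k₁ + k₂) (a₁ + a₂) b (S₁ ∪ S₂) (f₁ + f₂)
  | hcut {k₁ k₂ a b₁ b₂ S₁ S₂ f₁ f₂} (hd : Disjoint S₁ S₂) (g₁ : LongFits p q k₁ a b₁ S₁ f₁)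
      (g₂ : LongFits p q k₂ a b₂ S₂ f₂) :
      LongFits p q (k₁ + k₂) a (b₁ + b₂) (S₁ ∪ S₂) (f₁ + f₂)
  | weaken {k k' a b S f f'} (hk : k ≤ k') (hf : f' ≤ f) (g : LongFits p q k a b S f) :
      LongFits p q k' a b S f'

namespace LongFits

variable {p q : ι → ℝ} {k : ℕ} {a a₁ b b₁ f : ℝ} {S : Finset ι}

lemma nonneg (g : LongFits p q k a b S f) : 0 ≤ a ∧ 0 ≤ b := by
  induction g with
  | free ha hb => exact ⟨ha, hb⟩
  | hcont ha hb => exact ⟨ha, hb⟩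
  | vcont ha hb => exact ⟨ha, hb⟩
  | vcut _ _ _ ih₁ ih₂ => exact ⟨add_nonneg ih₁.1 ih₂.1, ih₁.2⟩
  | hcut _ _ _ ih₁ ih₂ => exact ⟨ih₁.1, add_nonneg ih₁.2 ih₂.2⟩
  | weaken _ _ _ ih => exact ih

lemma swap (g : LongFits p q k a b S f) : LongFits p q k b a S f := by
  induction g with
  | free ha hb => rw [mul_comm]; exact .free hb ha
  | hcont ha hb hq hp => exact .vcont hb ha hq hp
  | vcont ha hb hq hp => exact .hcont hb ha hq hp
  | vcut hd _ _ ih₁ ih₂ => exact .hcut hd ih₁ ih₂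
  | hcut hd _ _ ih₁ ih₂ => exact .vcut hd ih₁ ih₂
  | weaken hk hf _ ih => exact .weaken hk hf ih

lemma vcut_free (g : LongFits p q k a₁ b S f) (ha : a₁ ≤ a) :
    LongFits p q (k + 1) a b S (f + (a - a₁) * b) := by
  have hcut := g.vcut (disjoint_empty_right S) (.free (sub_nonneg.2 ha) g.nonneg.2)
  rwa [add_sub_cancel, union_empty] at hcut

lemma hcut_free (g : LongFits p q k a b₁ S f) (hb : b₁ ≤ b) :
    LongFits p q (k + 1) a b S (f + (b - b₁) * a) :=
  (g.swap.vcut_free hb).swap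

lemma extend (g : LongFits p q k a₁ b₁ S f) (ha : a₁ ≤ a) (hb : b₁ ≤ b) :
    LongFits p q (k + 2) a b S (f + (a * b - a₁ * b₁)) :=
  ((g.vcut_free ha).hcut_free hb).weaken le_rfl (by linarith)

lemma vcut_biUnion {σ : Type*} {Q : Finset σ} {a f : σ → ℝ} {S : σ → Finset ι} (hb : 0 ≤ b)
    (hd : (Q : Set σ).PairwiseDisjoint S) (hg : ∀ s ∈ Q, LongFits p q k (a s) b (S s) (f s)) :
    LongFits p q (1 + #Q * k) (∑ s ∈ Q, a s) b (Q.biUnion S) (∑ s ∈ Q, f s) := by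
  classical
  induction Q using Finset.induction_on with
  | empty => simpa using LongFits.free (p := p) (q := q) le_rfl hb
  | insert s Q hs ih =>
    rw [coe_insert, Set.pairwiseDisjoint_insert_of_notMem (mod_cast hs)] at hd
    rw [sum_insert hs, sum_insert hs, biUnion_insert, card_insert_of_notMem hs]
    refine (LongFits.vcut ((disjoint_biUnion_right _ _ _).2 hd.2) (hg s (mem_insert_self s Q))
      (ih hd.1 fun t ht => hg t (mem_insert_of_mem ht))).weaken (by linarith) le_rfl

lemma hcut_biUnion {σ : Type*} {Q : Finset σ} {b f : σ → ℝ} {S : σ → Finset ι} (ha : 0 ≤ a)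
    (hd : (Q : Set σ).PairwiseDisjoint S) (hg : ∀ s ∈ Q, LongFits p q k a (b s) (S s) (f s)) :
    LongFits p q (1 + #Q * k) a (∑ s ∈ Q, b s) (Q.biUnion S) (∑ s ∈ Q, f s) :=
  (vcut_biUnion ha hd fun s hs => (hg s hs).swap).swap

end LongFits

/-- All items of `C` except some of total thickness at most `e` fit into an `a × b` box with
`LongFits`, leaving at least as much free area as the items of `C` leave uncovered. -/
def AlmostFits (p q : ι → ℝ) (k : ℕ) (e a b : ℝ) (C : Finset ι) : Prop :=
  ∃ R ⊆ C, LongFits p q k a b R (a * b - ∑ i ∈ C, p i * q i) ∧ ∑ i ∈ C \ R, p i ≤ e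

namespace AlmostFits

variable {p q : ι → ℝ} {k k₁ k₂ : ℕ} {a a₁ a₂ b b₁ b₂ : ℝ} {e e' e₁ e₂ : ℝ} {C C₁ C₂ : Finset ι}

lemma swap (H : AlmostFits p q k e a b C) : AlmostFits p q k e b a C := by
  obtain ⟨R, hR, g, he⟩ := H
  exact ⟨R, hR, mul_comm a b ▸ g.swap, he⟩

lemma mono (H : AlmostFits p q k₁ e a b C) (hk : k₁ ≤ k₂) (he : e ≤ e') :
    AlmostFits p q k₂ e' a b C := by
  obtain ⟨R, hR, g, hRe⟩ := H
  exact ⟨R, hR, g.weaken hk le_rfl, hRe.trans he⟩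

lemma vcut (hd : Disjoint C₁ C₂) (H₁ : AlmostFits p q k₁ e₁ a₁ b C₁)
    (H₂ : AlmostFits p q k₂ e₂ a₂ b C₂) :
    AlmostFits p q (k₁ + k₂) (e₁ + e₂) (a₁ + a₂) b (C₁ ∪ C₂) := by
  obtain ⟨R₁, hR₁, g₁, he₁⟩ := H₁
  obtain ⟨R₂, hR₂, g₂, he₂⟩ := H₂
  refine ⟨R₁ ∪ R₂, union_subset_union hR₁ hR₂,
    (g₁.vcut (hd.mono hR₁ hR₂) g₂).weaken le_rfl ?_, ?_⟩
  · rw [sum_union hd]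
    linarith
  · have hsdiff : (C₁ ∪ C₂) \ (R₁ ∪ R₂) = (C₁ \ R₁) ∪ (C₂ \ R₂) := by
      ext i
      have := @hR₁ i
      have := @hR₂ i
      have : i ∈ C₁ → i ∉ C₂ := fun hi => disjoint_left.1 hd hi
      simp only [mem_sdiff, mem_union]
      tauto
    rw [hsdiff, sum_union (hd.mono sdiff_subset sdiff_subset)]
    linarith

lemma hcut (hd : Disjoint C₁ C₂) (H₁ : AlmostFits p q k₁ e₁ a b₁ C₁)
    (H₂ : AlmostFits p q k₂ e₂ a b₂ C₂) :
    AlmostFits p q (k₁ + k₂) (e₁ + e₂) a (b₁ + b₂) (C₁ ∪ C₂) :=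
  (vcut hd H₁.swap H₂.swap).swap

lemma empty (hk : 1 ≤ k) (he : 0 ≤ e) (ha : 0 ≤ a) (hb : 0 ≤ b) : AlmostFits p q k e a b ∅ :=
  ⟨∅, subset_rfl, (LongFits.free ha hb).weaken hk (by simp), by simpa using he⟩

end AlmostFits

end LongFits

/-! ### Rounding one-dimensional loads -/

section Load

variable {ι : Type*} {l m u v : ι → ℝ} {a a₁ a₂ b : ℝ} {S S₁ S₂ : Finset ι}

/-- The intervals `[v i, v i + l i)` of the items of `S` lie in `[0, a]`, and the weights `m` of the
items active at any point sum to at most `b`. -/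
structure LoadLE (l m v : ι → ℝ) (a b : ℝ) (S : Finset ι) : Prop where
  nonneg : ∀ i ∈ S, 0 ≤ v i
  le : ∀ i ∈ S, v i + l i ≤ a
  load_le : ∀ x, ∑ i ∈ activeAt v l S x, m i ≤ b

lemma LoadLE.append [DecidableEq ι] {v₁ v₂ : ι → ℝ} (hd : Disjoint S₁ S₂)
    (H₁ : LoadLE l m v₁ a₁ b S₁) (H₂ : LoadLE l m v₂ a₂ b S₂) (ha₁ : 0 ≤ a₁) (ha₂ : 0 ≤ a₂) :
    LoadLE l m (fun i => if i ∈ S₁ then v₁ i else a₁ + v₂ i) (a₁ + a₂) b (S₁ ∪ S₂) where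
  nonneg i hi := by
    split_ifs with hi₁
    · exact H₁.nonneg i hi₁
    · exact add_nonneg ha₁ (H₂.nonneg i ((mem_union.1 hi).resolve_left hi₁))
  le i hi := by
    split_ifs with hi₁
    · exact (H₁.le i hi₁).trans (le_add_of_nonneg_right ha₂)
    · linarith [H₂.le i ((mem_union.1 hi).resolve_left hi₁)]
  load_le x := by
    have hactive₁ : activeAt (fun i => if i ∈ S₁ then v₁ i else a₁ + v₂ i) l S₁ x =
        activeAt v₁ l S₁ x := filter_congr fun i hi => by simp only [if_pos hi]
    have hactive₂ : activeAt (fun i => if i ∈ S₁ then v₁ i else a₁ + v₂ i) l S₂ x =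
        activeAt v₂ l S₂ (x - a₁) := filter_congr fun i hi => by
      simp only [if_neg (disjoint_right.1 hd hi), add_assoc, le_sub_iff_add_le',
        sub_lt_iff_lt_add']
    rw [activeAt, filter_union, ← activeAt, ← activeAt, hactive₁, hactive₂]
    rcases lt_or_ge x a₁ with hx | hx
    · have hempty : activeAt v₂ l S₂ (x - a₁) = ∅ := filter_false_of_mem fun i hi => by
        intro hactive
        linarith [H₂.nonneg i hi, hactive.1]
      rw [hempty, union_empty]
      exact H₁.load_le x
    · have hempty : activeAt v₁ l S₁ x = ∅ := filter_false_of_mem fun i hi => by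
        intro hactive
        linarith [H₁.le i hi, hactive.2]
      rw [hempty, empty_union]
      exact H₂.load_le (x - a₁)

/-- Weights `lam` of sets of items summing to `b`, such that the sets containing item `i` have total
weight `p i`. -/
structure IsLevelDecomposition [DecidableEq ι] (p : ι → ℝ) (b : ℝ) (T : Finset ι)
    (𝒜 : Finset (Finset ι)) (lam : Finset ι → ℝ) : Prop where
  subset : ∀ A ∈ 𝒜, A ⊆ T
  nonneg : ∀ A ∈ 𝒜, 0 ≤ lam A
  sum_eq : ∑ A ∈ 𝒜, lam A = b
  sum_mem : ∀ i ∈ T, ∑ A ∈ 𝒜 with i ∈ A, lam A = p i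

lemma mem_activeAt {i : ι} {y : ℝ} : i ∈ activeAt u l S y ↔ i ∈ S ∧ y ∈ Set.Ico (u i) (u i + l i) :=
  mem_filter

open MeasureTheory in
lemma measurableSet_activeAt_eq {A : Finset ι} (hA : A ⊆ S) :
    MeasurableSet (activeAt u l S ⁻¹' {A}) := by
  classical
  have heq : activeAt u l S ⁻¹' {A} =
      ⋂ i ∈ S, {y | i ∈ A ↔ y ∈ Set.Ico (u i) (u i + l i)} := by
    ext y
    simp only [Set.mem_preimage, Set.mem_singleton_iff, Set.mem_iInter, Finset.ext_iff,
      mem_activeAt, Set.mem_ofPred_eq]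
    exact ⟨fun h i hi => by simp [← h i, hi], fun h i =>
      ⟨fun hi => (h i hi.1).2 hi.2, fun hi => ⟨hA hi, (h i (hA hi)).1 hi⟩⟩⟩
  rw [heq]
  exact Finset.measurableSet_biInter _ fun i _ => (MeasurableSet.const _).iff measurableSet_Ico

open MeasureTheory in
lemma sum_volume_activeAt_eq {x z : ℝ} (hxz : x ≤ z) :
    ∑ A ∈ S.powerset, volume.real (activeAt u l S ⁻¹' {A} ∩ Set.Ico x z) = z - x := by
  have hpre : activeAt u l S ⁻¹' (S.powerset : Set (Finset ι)) = Set.univ :=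
    Set.eq_univ_of_forall fun y => mem_powerset.2 (filter_subset _ S)
  calc
    _ = ∑ A ∈ S.powerset, (volume.restrict (Set.Ico x z)).real (activeAt u l S ⁻¹' {A}) :=
      sum_congr rfl fun A hA =>
        (measureReal_restrict_apply (measurableSet_activeAt_eq (mem_powerset.1 hA))).symm
    _ = (volume.restrict (Set.Ico x z)).real Set.univ := by
      rw [sum_measureReal_preimage_singleton _ fun A hA =>
        measurableSet_activeAt_eq (mem_powerset.1 hA), hpre]
    _ = z - x := by simp [hxz]

open MeasureTheory in
lemma LoadLE.exists_isLevelDecomposition [DecidableEq ι] (H : LoadLE l m u b a S)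
    (hl : ∀ i ∈ S, 0 ≤ l i) (hb : 0 ≤ b) :
    ∃ 𝒜 lam, IsLevelDecomposition l b S 𝒜 lam ∧ ∀ A ∈ 𝒜, ∑ i ∈ A, m i ≤ a := by
  classical
  let pre : Finset ι → Set ℝ := fun A => activeAt u l S ⁻¹' {A}
  have hsum {x z : ℝ} (hxz : x ≤ z) :
      ∑ A ∈ {A ∈ S.powerset | (pre A).Nonempty}, volume.real (pre A ∩ Set.Ico x z) = z - x := by
    rw [← sum_volume_activeAt_eq hxz]
    refine sum_filter_of_ne fun A _ hA => ?_
    by_contra hempty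
    rw [Set.not_nonempty_iff_eq_empty] at hempty
    exact hA (by simp [pre, hempty])
  refine ⟨{A ∈ S.powerset | (pre A).Nonempty}, fun A => volume.real (pre A ∩ Set.Ico 0 b),
    ⟨fun A hA => mem_powerset.1 (mem_filter.1 hA).1, fun A _ => measureReal_nonneg,
      by rw [hsum hb, sub_zero], fun i hi => ?_⟩, fun A hA => ?_⟩
  · rw [← add_sub_cancel_left (u i) (l i), ← hsum (le_add_of_nonneg_right (hl i hi)), sum_filter]
    refine sum_congr rfl fun A _ => ?_
    split_ifs with hiA
    · have hsub : pre A ⊆ Set.Ico (u i) (u i + l i) := by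
        rintro y rfl
        exact (mem_activeAt.1 hiA).2
      rw [Set.inter_eq_left.2 hsub, Set.inter_eq_left.2
        (hsub.trans (Set.Ico_subset_Ico (H.nonneg i hi) (H.le i hi)))]
    · have hempty : pre A ∩ Set.Ico (u i) (u i + l i) = ∅ := by
        rw [Set.eq_empty_iff_forall_notMem]
        rintro y ⟨rfl, hy⟩
        exact hiA (mem_activeAt.2 ⟨hi, hy⟩)
      simp [hempty]
  · obtain ⟨y, rfl⟩ := (mem_filter.1 hA).2
    exact H.load_le y

end Load

section Assignment

variable {ι : Type*} [DecidableEq ι] {p : ι → ℝ} {m c : ℝ} {J : ℕ}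

lemma exists_partial_assignment {σ : Type*} {lam : σ → ℝ} {Q : Finset σ} {X : Finset ι}
    (hm : 0 ≤ m) (hc : 0 ≤ c) (hlam : ∀ s ∈ Q, 0 ≤ lam s) (hp : ∀ i ∈ X, p i ≤ m)
    (hsum : ∑ i ∈ X, p i ≤ ∑ s ∈ Q, lam s + c) :
    ∃ B : σ → Finset ι, (∀ s ∈ Q, B s ⊆ X) ∧ (Q : Set σ).PairwiseDisjoint B ∧
      (∀ s ∈ Q, ∑ i ∈ B s, p i ≤ lam s) ∧ ∑ i ∈ X \ Q.biUnion B, p i ≤ c + #Q * m := by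
  classical
  induction Q using Finset.induction_on generalizing X c with
  | empty => exact ⟨fun _ => ∅, by simp, by simp, by simp, by simpa using hsum⟩
  | insert s Q hs ih =>
    rw [sum_insert hs] at hsum
    have hs0 : 0 ≤ lam s := hlam s (mem_insert_self s Q)
    have hQ0 : 0 ≤ ∑ t ∈ Q, lam t := sum_nonneg fun t ht => hlam t (mem_insert_of_mem ht)
    obtain ⟨A, hA, hAs, hAc⟩ : ∃ A ⊆ X, ∑ i ∈ A, p i ≤ lam s ∧
        ∑ i ∈ X \ A, p i ≤ ∑ t ∈ Q, lam t + (c + m) := by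
      rcases le_or_gt (lam s) m with hsm | hsm
      · exact ⟨∅, empty_subset X, by simpa using hs0, by simpa using by linarith⟩
      rcases le_or_gt (∑ i ∈ X, p i) (lam s) with hXs | hXs
      · exact ⟨X, subset_rfl, hXs, by simpa using by linarith⟩
      obtain ⟨A, hA, _, hlo, hhi⟩ := exists_upper_subset_sum_between (θ := lam s - m) p p X hm hp
        (by linarith) (by linarith)
      exact ⟨A, hA, by linarith, by linarith [sum_sdiff (f := p) hA]⟩
    obtain ⟨B, hB, hBd, hBs, hBc⟩ := ih (X := X \ A) (c := c + m) (by linarith)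
      (fun t ht => hlam t (mem_insert_of_mem ht)) (fun i hi => hp i (mem_sdiff.1 hi).1) hAc
    have hne {t : σ} (ht : t ∈ Q) : t ≠ s := fun h => hs (h ▸ ht)
    have hB' : ∀ t ∈ Q, Function.update B s A t = B t := fun t ht =>
      Function.update_of_ne (hne ht) A B
    refine ⟨Function.update B s A, ?_, ?_, ?_, ?_⟩
    · simp only [forall_mem_insert, Function.update_self]
      exact ⟨hA, fun t ht => (hB' t ht).symm ▸ (hB t ht).trans sdiff_subset⟩
    · rw [coe_insert, Set.pairwiseDisjoint_insert_of_notMem (mod_cast hs), Function.update_self]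
      refine ⟨fun t ht t' ht' htt' => ?_, fun t ht => ?_⟩
      · simpa only [Function.onFun, hB' t ht, hB' t' ht'] using hBd ht ht' htt'
      · exact hB' t ht ▸ disjoint_sdiff.mono_right (hB t ht)
    · simp only [forall_mem_insert, Function.update_self]
      exact ⟨hAs, fun t ht => (hB' t ht).symm ▸ hBs t ht⟩
    · rw [biUnion_insert, Function.update_self, biUnion_congr rfl hB', ← sup_eq_union,
        ← sdiff_sdiff_left, card_insert_of_notMem hs]
      push_cast
      linarith

lemma exists_partial_assignment_of_types {σ : Type*} {lam : σ → ℝ} {Q : Finset σ} {X : Finset ι}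
    {type : σ → ℕ} {grp : ι → ℕ} (hm : 0 ≤ m) (hlam : ∀ s ∈ Q, 0 ≤ lam s)
    (hp : ∀ i ∈ X, 0 ≤ p i ∧ p i ≤ m) (hgrp : ∀ i ∈ X, grp i < J) (htype : ∀ s ∈ Q, type s < J)
    (hsum : ∀ j < J, ∑ i ∈ X with grp i = j, p i ≤ ∑ s ∈ Q with type s = j, lam s + m) :
    ∃ B : σ → Finset ι, (∀ s ∈ Q, ∀ i ∈ B s, i ∈ X ∧ grp i = type s) ∧
      (Q : Set σ).PairwiseDisjoint B ∧ (∀ s ∈ Q, ∑ i ∈ B s, p i ≤ lam s) ∧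
      ∑ i ∈ X \ Q.biUnion B, p i ≤ (J + #Q) * m := by
  have hassign : ∀ j : ℕ, ∃ B : σ → Finset ι, j < J →
      (∀ s ∈ Q, type s = j → B s ⊆ {i ∈ X | grp i = j}) ∧
      ({s ∈ Q | type s = j} : Set σ).PairwiseDisjoint B ∧
      (∀ s ∈ Q, type s = j → ∑ i ∈ B s, p i ≤ lam s) ∧
      ∑ i ∈ {i ∈ X | grp i = j} \ {s ∈ Q | type s = j}.biUnion B, p i ≤
        m + #{s ∈ Q | type s = j} * m := fun j => by
    by_cases hj : j < J
    · obtain ⟨B, hB, hd, hload, hrest⟩ := exists_partial_assignment (p := p)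
        (Q := {s ∈ Q | type s = j}) (X := {i ∈ X | grp i = j}) hm hm
        (fun s hs => hlam s (mem_filter.1 hs).1) (fun i hi => (hp i (mem_filter.1 hi).1).2)
        (hsum j hj)
      refine ⟨B, fun _ => ⟨fun s hs hsj => hB s (mem_filter.2 ⟨hs, hsj⟩), ?_,
        fun s hs hsj => hload s (mem_filter.2 ⟨hs, hsj⟩), hrest⟩⟩
      simpa using hd
    · exact ⟨fun _ => ∅, fun h => absurd h hj⟩
  choose B hB using hassign
  have hmem : ∀ s ∈ Q, ∀ i ∈ B (type s) s, i ∈ X ∧ grp i = type s := fun s hs i hi =>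
    mem_filter.1 ((hB _ (htype s hs)).1 s hs rfl hi)
  refine ⟨fun s => B (type s) s, hmem, fun s hs t ht hst => ?_,
    fun s hs => (hB _ (htype s hs)).2.2.1 s hs rfl, ?_⟩
  · by_cases htypes : type s = type t
    · simp only [Function.onFun, htypes]
      exact (hB _ (htype t ht)).2.1 ⟨hs, htypes⟩ ⟨ht, rfl⟩ hst
    · refine disjoint_left.2 fun i his hit => htypes ?_
      rw [← (hmem s hs i his).2, (hmem t ht i hit).2]
  have hrest : ∀ j ∈ range J, ∑ i ∈ X \ Q.biUnion (fun s => B (type s) s) with grp i = j, p i ≤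
      m + #{s ∈ Q | type s = j} * m := fun j hj => by
    refine le_trans (sum_le_sum_of_subset_of_nonneg (fun i hi => ?_) fun i hi _ =>
      (hp i (mem_filter.1 (mem_sdiff.1 hi).1).1).1) (hB j (mem_range.1 hj)).2.2.2
    simp only [mem_filter, mem_sdiff, mem_biUnion, not_exists, not_and] at hi ⊢
    exact ⟨⟨hi.1.1, hi.2⟩, fun s hs his => hi.1.2 s hs.1 (hs.2.symm ▸ his)⟩
  rw [← sum_fiberwise_of_maps_to (g := grp) (t := range J)
    fun i hi => mem_range.2 (hgrp i (mem_sdiff.1 hi).1)]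
  refine (sum_le_sum hrest).trans_eq ?_
  rw [sum_add_distrib, ← sum_mul, ← Nat.cast_sum,
    ← card_eq_sum_card_fiberwise fun s hs => mem_coe.2 (mem_range.2 (htype s hs))]
  simp [add_mul]

end Assignment

section Grouping

variable {ι : Type*} {p q : ι → ℝ} {m : ℝ} {J : ℕ} {T : Finset ι}

/-- A partition of the items of `T` into `J` groups of nonincreasing length and, up to `m`,
nonincreasing total thickness. The length `W j` separates the groups `j` and `j + 1`. -/
structure IsLinearGrouping (p q : ι → ℝ) (m : ℝ) (J : ℕ) (T : Finset ι) (grp : ι → ℕ)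
    (W : ℕ → ℝ) : Prop where
  lt : ∀ i ∈ T, grp i < J
  nonneg : ∀ j, 0 ≤ W j
  width_le : ∀ i ∈ T, W (grp i) ≤ q i
  le_width : ∀ i ∈ T, ∀ j, grp i = j + 1 → q i ≤ W j
  sum_succ_le : ∀ j, ∑ i ∈ T with grp i = j + 1, p i ≤ ∑ i ∈ T with grp i = j, p i + m

lemma exists_grouping_of_sum_le_one {G : ℝ} (hm : 0 ≤ m) (hp : ∀ i ∈ T, 0 ≤ p i ∧ p i ≤ m)
    (hsum : ∑ i ∈ T, p i ≤ G) :
    ∃ grp : ι → ℕ, (∀ i ∈ T, grp i < J + 1) ∧ (∀ i ∈ T, ∀ j ∈ T, grp i < grp j → q j ≤ q i) ∧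
      ∑ i ∈ T with grp i = 0, p i ≤ G + m ∧
      ∀ n, ∑ i ∈ T with grp i = n + 1, p i ≤ ∑ i ∈ T with grp i = n, p i + m := by
  refine ⟨fun _ => 0, by simp, by simp, by simpa using by linarith, fun n => ?_⟩
  have hnonneg : 0 ≤ ∑ i ∈ T with 0 = n, p i :=
    sum_nonneg fun i hi => (hp i (mem_filter.1 hi).1).1
  simpa using add_nonneg hnonneg hm

lemma exists_grouping_of_sum_le {G : ℝ} (hm : 0 ≤ m) (hG : 0 ≤ G)
    (hp : ∀ i ∈ T, 0 ≤ p i ∧ p i ≤ m) (hsum : ∑ i ∈ T, p i ≤ J * G) :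
    ∃ grp : ι → ℕ, (∀ i ∈ T, grp i < J + 1) ∧ (∀ i ∈ T, ∀ j ∈ T, grp i < grp j → q j ≤ q i) ∧
      ∑ i ∈ T with grp i = 0, p i ≤ G + m ∧
      ∀ n, ∑ i ∈ T with grp i = n + 1, p i ≤ ∑ i ∈ T with grp i = n, p i + m := by
  classical
  induction J generalizing T with
  | zero => exact exists_grouping_of_sum_le_one hm hp (hsum.trans (by simpa using hG))
  | succ J ih =>
    rcases le_or_gt (∑ i ∈ T, p i) G with hle | hlt
    · exact exists_grouping_of_sum_le_one hm hp hle
    obtain ⟨A, hA, hupper, hlo, hhi⟩ := exists_upper_subset_sum_between q p T hm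
      (fun i hi => (hp i hi).2) hlt.le hG
    obtain ⟨grp, hgrp, hmono, hzero, hsucc⟩ := ih (T := T \ A)
      (fun i hi => hp i (mem_sdiff.1 hi).1)
      (by push_cast at hsum; linarith [sum_sdiff (f := p) hA])
    let grp' : ι → ℕ := fun i => if i ∈ A then 0 else grp i + 1
    have hfilter_zero : {i ∈ T | grp' i = 0} = A := by
      ext i
      by_cases hi : i ∈ A <;> simp [grp', hi, @hA i]
    have hfilter_succ (n : ℕ) : {i ∈ T | grp' i = n + 1} = {i ∈ T \ A | grp i = n} := by
      ext i
      by_cases hi : i ∈ A <;> simp [grp', hi]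
    refine ⟨grp', fun i hi => ?_, fun i hi j hj hij => ?_, hfilter_zero.symm ▸ hhi, fun n => ?_⟩
    · by_cases hiA : i ∈ A
      · simp [grp', hiA]
      · simpa [grp', hiA] using hgrp i (mem_sdiff.2 ⟨hi, hiA⟩)
    · have hjA : j ∉ A := fun hjA => by simp [grp', hjA] at hij
      by_cases hiA : i ∈ A
      · exact hupper i hiA j (mem_sdiff.2 ⟨hj, hjA⟩)
      · exact hmono i (mem_sdiff.2 ⟨hi, hiA⟩) j (mem_sdiff.2 ⟨hj, hjA⟩)
          (by simpa [grp', hiA, hjA] using hij)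
    · rw [hfilter_succ]
      cases n with
      | zero =>
        rw [hfilter_zero]
        linarith
      | succ n => rw [hfilter_succ]; exact hsucc n

lemma exists_isLinearGrouping {G : ℝ} (hm : 0 ≤ m) (hG : 0 ≤ G)
    (hp : ∀ i ∈ T, 0 ≤ p i ∧ p i ≤ m) (hq : ∀ i ∈ T, 0 ≤ q i) (hsum : ∑ i ∈ T, p i ≤ J * G) :
    ∃ grp W, IsLinearGrouping p q m (J + 1) T grp W ∧ ∑ i ∈ T with grp i = 0, p i ≤ G + m := by
  obtain ⟨grp, hlt, hmono, hzero, hsucc⟩ := exists_grouping_of_sum_le (q := q) hm hG hp hsum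
  have hwidth : ∀ n, ∃ W : ℝ, 0 ≤ W ∧ (∀ i ∈ T, grp i = n → W ≤ q i) ∧
      ∀ i ∈ T, grp i = n + 1 → q i ≤ W := fun n => by
    rcases {i ∈ T | grp i = n + 1}.eq_empty_or_nonempty with hempty | hne
    · exact ⟨0, le_rfl, fun i hi _ => hq i hi, fun i hi hin =>
        absurd hin (filter_eq_empty_iff.1 hempty hi)⟩
    · obtain ⟨x, hx, hmax⟩ := exists_max_image _ q hne
      obtain ⟨hxT, hxn⟩ := mem_filter.1 hx
      exact ⟨q x, hq x hxT, fun i hi hin => hmono i hi x hxT (by omega),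
        fun i hi hin => hmax i (mem_filter.2 ⟨hi, hin⟩)⟩
  choose W hW hle hge using hwidth
  exact ⟨grp, W, ⟨hlt, hW, fun i hi => hle _ i hi rfl, fun i hi j => hge j i hi, hsucc⟩, hzero⟩

end Grouping

section Configuration

variable {ι : Type*} {p q W' : ι → ℝ} {a b m : ℝ} {J D : ℕ} {T A : Finset ι}
  {𝒜 : Finset (Finset ι)} {lam : Finset ι → ℝ} {grp : ι → ℕ} {W : ℕ → ℝ}

/-- The configuration of a set `A` of items: the pairs `(j, n)` with `j < J` and `n` less than the
number of items of `A` in group `j`. The pair `(j, n)` is a slot to be filled by items of group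
`j + 1`, which are no longer than those of group `j`. -/
def configuration (grp : ι → ℕ) (J : ℕ) (A : Finset ι) : Finset (Σ _ : ℕ, ℕ) :=
  (range J).sigma fun j => range #{i ∈ A | grp i = j}

/-- The total weight of the sets of `𝒜` whose configuration is `n`. -/
def configurationWeight (grp : ι → ℕ) (J : ℕ) (𝒜 : Finset (Finset ι)) (lam : Finset ι → ℝ)
    (n : Finset (Σ _ : ℕ, ℕ)) : ℝ :=
  ∑ A ∈ 𝒜 with configuration grp J A = n, lam A

lemma configuration_mem_powerset (hA : #A ≤ D) :
    configuration grp J A ∈ ((range J).sigma fun _ => range D).powerset :=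
  mem_powerset.2 <| sigma_mono subset_rfl fun _ =>
    range_subset_range.2 ((card_filter_le A _).trans hA)

lemma sum_configuration (hA : ∀ i ∈ A, grp i < J) (φ : ℕ → ℝ) :
    ∑ s ∈ configuration grp J A, φ s.1 = ∑ i ∈ A, φ (grp i) := by
  rw [configuration, sum_sigma, ← sum_fiberwise_of_maps_to fun i hi => mem_range.2 (hA i hi)]
  refine sum_congr rfl fun j _ => ?_
  rw [sum_congr rfl fun i hi => congrArg φ (mem_filter.1 hi).2]
  simp

lemma sum_configurationWeight_mul (ψ : Finset (Σ _ : ℕ, ℕ) → ℝ) :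
    ∑ n ∈ 𝒜.image (configuration grp J), configurationWeight grp J 𝒜 lam n * ψ n =
      ∑ A ∈ 𝒜, lam A * ψ (configuration grp J A) := by
  rw [← sum_fiberwise_of_maps_to fun A hA => mem_image_of_mem (configuration grp J) hA]
  refine sum_congr rfl fun n _ => ?_
  rw [configurationWeight, sum_mul]
  exact sum_congr rfl fun A hA => by rw [(mem_filter.1 hA).2]

variable [DecidableEq ι]

lemma IsLevelDecomposition.sum_mul_sum (HD : IsLevelDecomposition p b T 𝒜 lam) (φ : ι → ℝ) :
    ∑ A ∈ 𝒜, lam A * ∑ i ∈ A, φ i = ∑ i ∈ T, p i * φ i := by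
  calc ∑ A ∈ 𝒜, lam A * ∑ i ∈ A, φ i
      = ∑ A ∈ 𝒜, ∑ i ∈ T, if i ∈ A then lam A * φ i else 0 :=
        sum_congr rfl fun A hA => by
          rw [mul_sum, ← sum_filter, filter_mem_eq_inter, inter_eq_right.2 (HD.subset A hA)]
    _ = ∑ i ∈ T, p i * φ i := by
        rw [sum_comm]
        refine sum_congr rfl fun i hi => ?_
        rw [← HD.sum_mem i hi, sum_mul, sum_filter]

lemma IsLevelDecomposition.sum_slot_weight (HD : IsLevelDecomposition p b T 𝒜 lam)
    (hgrp : ∀ i ∈ T, grp i < J) (φ : ℕ → ℝ) :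
    ∑ n ∈ 𝒜.image (configuration grp J),
      configurationWeight grp J 𝒜 lam n * ∑ s ∈ n, φ s.1 = ∑ i ∈ T, p i * φ (grp i) := by
  rw [sum_configurationWeight_mul, ← HD.sum_mul_sum]
  exact sum_congr rfl fun A hA => by
    rw [sum_configuration fun i hi => hgrp i (HD.subset A hA hi)]

lemma IsLevelDecomposition.sum_slot_weight_filter (HD : IsLevelDecomposition p b T 𝒜 lam)
    (hgrp : ∀ i ∈ T, grp i < J) (j : ℕ) :
    ∑ s ∈ (𝒜.image (configuration grp J)).sigma id with s.2.1 = j,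
      configurationWeight grp J 𝒜 lam s.1 = ∑ i ∈ T with grp i = j, p i := by
  have hslot := HD.sum_slot_weight hgrp fun j' => if j' = j then 1 else 0
  simp only [mul_sum, mul_ite, mul_one, mul_zero] at hslot
  simpa [sum_filter, sum_sigma] using hslot

lemma IsLevelDecomposition.configurationWeight_nonneg (HD : IsLevelDecomposition p b T 𝒜 lam)
    (n : Finset (Σ _ : ℕ, ℕ)) : 0 ≤ configurationWeight grp J 𝒜 lam n :=
  sum_nonneg fun A hA => HD.nonneg A (mem_filter.1 hA).1

lemma longFits_slots {σ : Type*} {𝒞 : Finset (Finset σ)} {weight : Finset σ → ℝ} {width : σ → ℝ}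
    {M N : ℕ} {B : (Σ _ : Finset σ, σ) → Finset ι} (ha : 0 ≤ a) (hw : ∀ s, 0 ≤ width s)
    (hN : #𝒞 ≤ N) (hM : ∀ n ∈ 𝒞, #n ≤ M) (hsum : ∀ n ∈ 𝒞, ∑ s ∈ n, width s ≤ a)
    (hweight : ∀ n ∈ 𝒞, 0 ≤ weight n) (hq : ∀ s ∈ 𝒞.sigma id, ∀ i ∈ B s, q i ≤ width s.2)
    (hd : (𝒞.sigma id : Set (Σ _ : Finset σ, σ)).PairwiseDisjoint B)
    (hp : ∀ s ∈ 𝒞.sigma id, ∑ i ∈ B s, p i ≤ weight s.1) :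
    LongFits p q (1 + N * (M + 2)) a (∑ n ∈ 𝒞, weight n) ((𝒞.sigma id).biUnion B)
      (∑ n ∈ 𝒞, (a - ∑ s ∈ n, width s) * weight n) := by
  classical
  have hmem {n} (hn : n ∈ 𝒞) {s} (hs : s ∈ n) : (⟨n, s⟩ : Σ _, _) ∈ 𝒞.sigma id :=
    mem_sigma.2 ⟨hn, hs⟩
  have hslab : ∀ n ∈ 𝒞, LongFits p q (M + 2) a (weight n) (n.biUnion fun s => B ⟨n, s⟩)
      ((a - ∑ s ∈ n, width s) * weight n) := fun n hn => by
    have hslots := LongFits.vcut_biUnion (p := p) (q := q) (k := 1) (f := fun _ => 0) (Q := n)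
      (a := width) (S := fun s => B ⟨n, s⟩) (hweight n hn)
      (fun s hs t ht hst => hd (hmem hn hs) (hmem hn ht) (by simpa using hst))
      fun s hs => .hcont (hw s) (hweight n hn) (hq _ (hmem hn hs)) (hp _ (hmem hn hs))
    exact (hslots.vcut_free (hsum n hn)).weaken (by linarith [hM n hn]) (by simp)
  have hdisj : (𝒞 : Set (Finset σ)).PairwiseDisjoint fun n => n.biUnion fun s => B ⟨n, s⟩ := by
    intro n hn n' hn' hne
    simp only [Function.onFun, disjoint_biUnion_left, disjoint_biUnion_right]
    exact fun t ht s hs => hd (hmem hn hs) (hmem hn' ht) (by simp [hne])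
  have hunion : (𝒞.sigma id).biUnion B = 𝒞.biUnion fun n => n.biUnion fun s => B ⟨n, s⟩ := by
    ext i
    simp [Sigma.exists, and_assoc]
  rw [hunion]
  exact (LongFits.hcut_biUnion ha hdisj hslab).weaken (by gcongr) le_rfl

lemma IsLevelDecomposition.exists_slot_assignment (HD : IsLevelDecomposition p b T 𝒜 lam)
    (HG : IsLinearGrouping p q m J T grp W) (hp : ∀ i ∈ T, 0 ≤ p i ∧ p i ≤ m) (hm : 0 ≤ m) :
    ∃ B : (Σ _ : Finset (Σ _ : ℕ, ℕ), Σ _ : ℕ, ℕ) → Finset ι,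
      (∀ s ∈ (𝒜.image (configuration grp J)).sigma id, ∀ i ∈ B s, i ∈ T ∧ grp i = s.2.1 + 1) ∧
      ((𝒜.image (configuration grp J)).sigma id : Set (Σ _, _)).PairwiseDisjoint B ∧
      (∀ s ∈ (𝒜.image (configuration grp J)).sigma id,
        ∑ i ∈ B s, p i ≤ configurationWeight grp J 𝒜 lam s.1) ∧
      ∑ i ∈ T \ ((𝒜.image (configuration grp J)).sigma id).biUnion B, p i ≤
        ∑ i ∈ T with grp i = 0, p i +
          ((J + 1 : ℕ) + #((𝒜.image (configuration grp J)).sigma id)) * m := by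
  set Q := (𝒜.image (configuration grp J)).sigma id with hQ
  have htype : ∀ s ∈ Q, s.2.1 + 1 < J + 1 := fun s hs => by
    obtain ⟨A, _, hAs⟩ := mem_image.1 (mem_sigma.1 hs).1
    have hs2 : s.2 ∈ configuration grp J A := hAs ▸ (mem_sigma.1 hs).2
    simpa using (mem_sigma.1 hs2).1
  have hcapacity : ∀ j < J + 1, ∑ i ∈ {i ∈ T | grp i ≠ 0} with grp i = j, p i ≤
      ∑ s ∈ Q with s.2.1 + 1 = j, configurationWeight grp J 𝒜 lam s.1 + m := fun j _ => by
    cases j with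
    | zero => simpa [filter_filter] using hm
    | succ j =>
      have hgrp : {i ∈ {i ∈ T | grp i ≠ 0} | grp i = j + 1} = {i ∈ T | grp i = j + 1} := by
        rw [filter_filter]
        exact filter_congr fun i _ => ⟨And.right, fun h => ⟨by omega, h⟩⟩
      simp only [hgrp, add_left_inj, hQ, HD.sum_slot_weight_filter HG.lt]
      exact HG.sum_succ_le j
  obtain ⟨B, hB, hd, hload, hrest⟩ := exists_partial_assignment_of_types (J := J + 1)
    (Q := Q) (X := {i ∈ T | grp i ≠ 0}) (type := fun s => s.2.1 + 1) hm
    (fun s _ => HD.configurationWeight_nonneg s.1) (fun i hi => hp i (mem_filter.1 hi).1)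
    (fun i hi => (HG.lt i (mem_filter.1 hi).1).trans (Nat.lt_succ_self J)) htype hcapacity
  refine ⟨B, fun s hs i hi => ⟨(mem_filter.1 (hB s hs i hi).1).1, (hB s hs i hi).2⟩, hd, hload, ?_⟩
  have hcover : T \ Q.biUnion B ⊆
      {i ∈ T | grp i = 0} ∪ {i ∈ T | grp i ≠ 0} \ Q.biUnion B := fun i hi => by
    by_cases hi0 : grp i = 0 <;> simp_all
  refine (sum_le_sum_of_subset_of_nonneg hcover fun i hi _ => (hp i ?_).1).trans ?_
  · exact union_subset (filter_subset _ T) (sdiff_subset.trans (filter_subset _ T)) hi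
  rw [sum_union (disjoint_filter_filter_not T T _ |>.mono_right sdiff_subset)]
  exact add_le_add_right hrest _

/-- Configuration rounding: the items of every group move into the slots of the group before it,
where they fit because they are no longer. Only the items of group `0` and one item per slot and
group are lost. -/
lemma IsLevelDecomposition.exists_longFits (HD : IsLevelDecomposition p b T 𝒜 lam)
    (HG : IsLinearGrouping p q m J T grp W) (hq : ∀ A ∈ 𝒜, ∑ i ∈ A, q i ≤ a)
    (hcard : ∀ A ∈ 𝒜, #A ≤ D) (ha : 0 ≤ a) (hp : ∀ i ∈ T, 0 ≤ p i ∧ p i ≤ m) (hm : 0 ≤ m) :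
    ∃ R ⊆ T, LongFits p q (1 + 2 ^ (J * D) * (J * D + 2)) a b R (a * b - ∑ i ∈ T, p i * q i) ∧
      ∑ i ∈ T \ R, p i ≤
        ∑ i ∈ T with grp i = 0, p i + (J + 1 + 2 ^ (J * D) * (J * D) : ℕ) * m := by
  obtain ⟨B, hB, hd, hload, hrest⟩ := HD.exists_slot_assignment HG hp hm
  set 𝒞 := 𝒜.image (configuration grp J)
  set weight := configurationWeight grp J 𝒜 lam
  have hN : #𝒞 ≤ 2 ^ (J * D) := by
    refine (card_le_card (image_subset_iff.2 fun A hA =>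
      configuration_mem_powerset (hcard A hA))).trans_eq ?_
    simp
  have hM : ∀ n ∈ 𝒞, #n ≤ J * D := forall_mem_image.2 fun _ hA => by
    simpa using card_le_card (mem_powerset.1 (configuration_mem_powerset (hcard _ hA)))
  have hwidth : ∀ n ∈ 𝒞, ∑ s ∈ n, W s.1 ≤ a := forall_mem_image.2 fun A hA => by
    rw [sum_configuration fun i hi => HG.lt i (HD.subset A hA hi)]
    exact (sum_le_sum fun i hi => HG.width_le i (HD.subset A hA hi)).trans (hq A hA)
  have hheight : ∑ n ∈ 𝒞, weight n = b := by
    simpa [weight, HD.sum_eq] using sum_configurationWeight_mul (𝒜 := 𝒜) (grp := grp) (J := J)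
      (lam := lam) fun _ => 1
  have hfree : a * b - ∑ i ∈ T, p i * q i ≤ ∑ n ∈ 𝒞, (a - ∑ s ∈ n, W s.1) * weight n := by
    have hW : ∑ n ∈ 𝒞, weight n * ∑ s ∈ n, W s.1 ≤ ∑ i ∈ T, p i * q i :=
      (HD.sum_slot_weight HG.lt W).trans_le <|
        sum_le_sum fun i hi => mul_le_mul_of_nonneg_left (HG.width_le i hi) (hp i hi).1
    simp only [mul_comm _ (weight _), mul_sub, sum_sub_distrib, ← sum_mul, hheight]
    linarith
  refine ⟨(𝒞.sigma id).biUnion B, biUnion_subset.2 fun s hs i hi => (hB s hs i hi).1, ?_, ?_⟩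
  · rw [← hheight] at hfree ⊢
    exact (longFits_slots ha (fun s => HG.nonneg s.1) hN hM hwidth
      (fun n _ => HD.configurationWeight_nonneg n)
      (fun s hs i hi => HG.le_width i (hB s hs i hi).1 _ (hB s hs i hi).2) hd
      hload).weaken le_rfl hfree
  · have hslots : #(𝒞.sigma id) ≤ 2 ^ (J * D) * (J * D) := by
      rw [card_sigma]
      exact (sum_le_card_nsmul _ _ _ hM).trans (Nat.mul_le_mul_right _ hN)
    refine hrest.trans (add_le_add_right (mul_le_mul_of_nonneg_right ?_ hm) _)
    exact_mod_cast Nat.add_le_add_left hslots _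

end Configuration

/-- Items of thickness at most `μ` and length more than `δ` whose lengths have load at most `a ≤ 1`
along an interval of length `b ≤ 1` fit into an `a × b` box, up to a total thickness `η`. -/
def LoadRounding (ι : Type*) (δ η μ : ℝ) (k : ℕ) : Prop :=
  ∀ [DecidableEq ι] (p q u : ι → ℝ) (a b : ℝ) (T : Finset ι), 0 ≤ a → a ≤ 1 → 0 ≤ b → b ≤ 1 →
    (∀ i ∈ T, 0 < p i ∧ p i ≤ μ ∧ δ < q i) → LoadLE p q u b a T → AlmostFits p q k η a b T

theorem exists_loadRounding {δ η : ℝ} (hδ : 0 < δ) (hη : 0 < η) :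
    ∃ (k : ℕ) (μ₀ : ℝ), 0 < μ₀ ∧
      ∀ μ, 0 < μ → μ ≤ μ₀ → ∀ ι : Type*, LoadRounding ι δ η μ k := by
  set J := ⌈1 / δ / (η / 2)⌉₊
  set D := ⌈1 / δ⌉₊
  set M := (J + 1) * D
  set c := J + 1 + 1 + 2 ^ M * M
  refine ⟨1 + 2 ^ M * (M + 2), η / (2 * (c + 1)), by positivity, fun μ hμ hμ₀ ι => ?_⟩
  intro _ p q u a b T ha ha1 hb hb1 hT H
  have hp : ∀ i ∈ T, 0 ≤ p i ∧ p i ≤ μ := fun i hi => ⟨(hT i hi).1.le, (hT i hi).2.1⟩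
  obtain ⟨𝒜, lam, HD, hq⟩ := H.exists_isLevelDecomposition (fun i hi => (hp i hi).1) hb
  have hcard : ∀ A ∈ 𝒜, #A ≤ D := fun A hA => by
    have hlen : #A * δ ≤ 1 := by
      rw [← nsmul_eq_mul]
      exact (card_nsmul_le_sum A q δ fun i hi => (hT i (HD.subset A hA hi)).2.2.le).trans
        ((hq A hA).trans ha1)
    exact_mod_cast ((le_div_iff₀ hδ).2 hlen).trans (Nat.le_ceil _)
  have harea : ∑ i ∈ T, p i * q i ≤ 1 := by
    rw [← HD.sum_mul_sum]
    calc ∑ A ∈ 𝒜, lam A * ∑ i ∈ A, q i ≤ ∑ A ∈ 𝒜, lam A * 1 := sum_le_sum fun A hA =>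
          mul_le_mul_of_nonneg_left ((hq A hA).trans ha1) (HD.nonneg A hA)
      _ ≤ 1 := by rwa [← sum_mul, HD.sum_eq, mul_one]
  have hthick : ∑ i ∈ T, p i ≤ J * (η / 2) := by
    rw [← div_le_iff₀ (half_pos hη)]
    refine (div_le_div_of_nonneg_right ((le_div_iff₀ hδ).2 (le_trans ?_ harea))
      (half_pos hη).le).trans (Nat.le_ceil _)
    rw [sum_mul]
    exact sum_le_sum fun i hi => mul_le_mul_of_nonneg_left (hT i hi).2.2.le (hp i hi).1
  obtain ⟨grp, W, HG, hzero⟩ := exists_isLinearGrouping hμ.le (half_pos hη).le hp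
    (fun i hi => hδ.le.trans (hT i hi).2.2.le) hthick
  obtain ⟨R, hR, g, hloss⟩ := HD.exists_longFits HG hq hcard ha hp hμ.le
  refine ⟨R, hR, g, hloss.trans ?_⟩
  have hμc : (c + 1) * μ ≤ η / 2 := by
    rw [le_div_iff₀ (by positivity)] at hμ₀
    linarith
  change _ + (c : ℝ) * μ ≤ η
  linarith

/-! ### Rounding a packing of long items into rows -/

lemma LoadLE.congr {ι : Type*} {l m l' m' v : ι → ℝ} {a b : ℝ} {C : Finset ι}
    (H : LoadLE l m v a b C) (hl : ∀ i ∈ C, l i = l' i) (hm : ∀ i ∈ C, m i = m' i) :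
    LoadLE l' m' v a b C where
  nonneg := H.nonneg
  le i hi := hl i hi ▸ H.le i hi
  load_le x := by
    have hactive : activeAt v l' C x = activeAt v l C x :=
      filter_congr fun i hi => by rw [hl i hi]
    rw [hactive]
    exact (sum_congr rfl fun i hi => hm i (mem_filter.1 hi).1).symm.trans_le (H.load_le x)

section PartlyFits

variable {ι : Type*} [DecidableEq ι] {w h p q u v : ι → ℝ} {δ μ η e a a₁ a₂ b y₀ y₁ : ℝ}
  {k k₁ k₂ : ℕ} {C C₁ C₂ T : Finset ι}

/-- The items of `C` fit into an `a × b` box cut vertically into two parts: the vertical items in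
the first part respect only the load bound, the items in the second part satisfy `AlmostFits`. -/
def PartlyFits (w h p q : ι → ℝ) (δ : ℝ) (k : ℕ) (e a b : ℝ) (C : Finset ι) : Prop :=
  ∃ (aV aR : ℝ) (X : Finset ι) (v : ι → ℝ), 0 ≤ aV ∧ 0 ≤ aR ∧ aV + aR = a ∧ X ⊆ C ∧
    (∀ i ∈ X, δ < h i) ∧ LoadLE w h v aV b X ∧ AlmostFits p q k e aR b (C \ X)

lemma AlmostFits.partlyFits (H : AlmostFits p q k e a b C) (ha : 0 ≤ a) (hb : 0 ≤ b) :
    PartlyFits w h p q δ k e a b C :=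
  ⟨0, a, ∅, fun _ => 0, le_rfl, ha, zero_add a, empty_subset C, by simp,
    ⟨by simp, by simp, by simpa [activeAt] using hb⟩, by simpa using H⟩

lemma LoadLE.partlyFits (H : LoadLE w h v a b C) (hC : ∀ i ∈ C, δ < h i) (hk : 1 ≤ k) (he : 0 ≤ e)
    (ha : 0 ≤ a) (hb : 0 ≤ b) : PartlyFits w h p q δ k e a b C :=
  ⟨a, 0, C, v, ha, le_rfl, add_zero a, subset_rfl, hC, H, by
    simpa using AlmostFits.empty hk he le_rfl hb⟩

namespace PartlyFits

lemma almostFits (H : PartlyFits w h p q δ k₂ e a b C) (hround : LoadRounding ι δ η μ k₁)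
    (hμδ : μ ≤ δ) (hT : ThinLong w h p q δ μ C) (ha : a ≤ 1) (hb : 0 ≤ b) (hb1 : b ≤ 1) :
    AlmostFits p q (k₁ + k₂) (η + e) a b C := by
  obtain ⟨aV, aR, X, v, haV, haR, rfl, hXC, hXh, hload, hrest⟩ := H
  have hX : ∀ i ∈ X, w i = p i ∧ h i = q i := fun i hi =>
    (hT.oriented i (hXC hi)).resolve_left fun hor =>
      ((hT.le i (hXC hi)).trans hμδ).not_gt (hor.2 ▸ hXh i hi)
  have hvert : AlmostFits p q k₁ η b aV X :=
    hround p q v b aV X hb hb1 haV (by linarith)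
      (fun i hi => ⟨hT.pos i (hXC hi), hT.le i (hXC hi), hT.lt i (hXC hi)⟩)
      (hload.congr (fun i hi => (hX i hi).1) fun i hi => (hX i hi).2)
  simpa only [union_sdiff_of_subset hXC] using hvert.swap.vcut disjoint_sdiff hrest

lemma append (H₂ : PartlyFits w h p q δ k e a₂ b C₂) (H₁ : LoadLE w h v a₁ b C₁)
    (hd : Disjoint C₁ C₂) (hC₁ : ∀ i ∈ C₁, δ < h i) (ha₁ : 0 ≤ a₁) :
    PartlyFits w h p q δ k e (a₁ + a₂) b (C₁ ∪ C₂) := by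
  obtain ⟨aV, aR, X, v₂, haV, haR, rfl, hXC, hXh, hload, hrest⟩ := H₂
  refine ⟨a₁ + aV, aR, C₁ ∪ X, _, by linarith, haR, by ring, union_subset_union subset_rfl hXC,
    fun i hi => (mem_union.1 hi).elim (hC₁ i) (hXh i),
    H₁.append (hd.mono_right hXC) hload ha₁ haV, ?_⟩
  rwa [← sup_eq_union (s := C₁) (t := X), ← sdiff_sdiff_left, union_sdiff_cancel_left hd]

end PartlyFits

lemma GuillotineFitsAt.exists_loadLE (g : GuillotineFitsAt w h u a y₀ y₁ T) (hδ : 0 < δ)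
    (hC : C ⊆ T) (hCh : ∀ i ∈ C, δ < h i) (hb : 0 ≤ b) (hy : δ < y₁ - y₀ → y₁ - y₀ ≤ b) :
    ∃ v, LoadLE w h v a b C := by
  obtain ⟨v, gv⟩ := (g.subset hC).guillotineFits.swap.exists_fitsAt 0
  rw [zero_add] at gv
  refine ⟨v, fun i hi => (gv.bounds hi).1, fun i hi => (gv.bounds hi).2, fun x => ?_⟩
  rcases C.eq_empty_or_nonempty with rfl | ⟨i, hi⟩
  · simpa [activeAt] using hb
  · have hbound := g.bounds (hC hi)
    exact (gv.sum_activeAt_le (fun i hi => (hδ.trans (hCh i hi)).le) x).trans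
      (hy (by linarith [hCh i hi]))

end PartlyFits

section Rows

variable {ι : Type*} {w h p q u : ι → ℝ} {δ μ η g g' a a₁ a₂ b c y₀ y₁ : ℝ}
  {k r m m₁ m₂ n : ℕ} {S T T' S₁ S₂ : Finset ι} {i : ι}

lemma ThinLong.height_pos (H : ThinLong w h p q δ μ T) (hδ : 0 ≤ δ) (hi : i ∈ T) : 0 < h i := by
  rcases H.oriented i hi with ⟨_, hh⟩ | ⟨_, hh⟩ <;> rw [hh]
  exacts [H.pos i hi, hδ.trans_lt (H.lt i hi)]

/-- The rows `[j * g, (j + 1) * g]` with `r ≤ j < r + m` lie in `[y₀, y₁]` and cover it up to one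
row at either end. -/
structure RowSpan (g : ℝ) (r m : ℕ) (y₀ y₁ : ℝ) : Prop where
  left_le : y₀ ≤ r * g
  le_left_add : r * g ≤ y₀ + g
  le_right : (r + m) * g ≤ y₁
  right_le : y₁ ≤ (r + m + 1) * g

lemma RowSpan.exists_split (H : RowSpan g r m y₀ y₁) (hg : 0 < g) (hc₀ : r * g < c)
    (hc₁ : c < (r + m) * g) :
    ∃ m₁ m₂, m = m₁ + 1 + m₂ ∧ RowSpan g r m₁ y₀ c ∧ RowSpan g (r + m₁ + 1) m₂ c y₁ := by
  have hc : 0 ≤ c / g := div_nonneg (le_trans (by positivity) hc₀.le) hg.le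
  have hlo : (⌊c / g⌋₊ : ℝ) * g ≤ c := (le_div_iff₀ hg).1 (Nat.floor_le hc)
  have hhi : c < (⌊c / g⌋₊ + 1) * g := (div_lt_iff₀ hg).1 (Nat.lt_floor_add_one _)
  have hrle : r ≤ ⌊c / g⌋₊ := Nat.le_floor ((le_div_iff₀ hg).2 hc₀.le)
  have hltm : ⌊c / g⌋₊ < r + m :=
    (Nat.floor_lt hc).2 (by rw [div_lt_iff₀ hg]; push_cast; exact hc₁)
  obtain ⟨m₁, hm₁⟩ := Nat.exists_eq_add_of_le hrle
  obtain ⟨m₂, hm₂⟩ := Nat.exists_eq_add_of_lt (hm₁ ▸ hltm)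
  obtain rfl : m = m₁ + 1 + m₂ := by omega
  obtain ⟨h₁, h₂, h₃, h₄⟩ := H
  rw [hm₁] at hlo hhi
  push_cast at hlo hhi h₃ h₄
  refine ⟨m₁, m₂, rfl, ⟨h₁, h₂, hlo, hhi.le⟩, ⟨?_, ?_, ?_, ?_⟩⟩ <;> push_cast <;> linarith

/-- Rows of height `g` are stretched to height `g'`, so that any `m` stretched rows make up for the
two partial rows at the ends of an interval longer than `δ`. -/
structure RowStretch (δ g g' : ℝ) : Prop where
  pos : 0 < g
  lt : g < δ
  le : g ≤ g'
  stretch : ∀ m : ℕ, δ ≤ (m + 2) * g → (m + 2) * g ≤ m * g'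

lemma RowSpan.length_le (H : RowSpan g r m y₀ y₁) (hg : RowStretch δ g g') (hy : δ < y₁ - y₀) :
    y₁ - y₀ ≤ m * g' := by
  have hlen : y₁ - y₀ ≤ (m + 2) * g := by linarith [H.le_left_add, H.right_le]
  exact hlen.trans (hg.stretch m (by linarith))

/-- Thin long items, the horizontal ones of which are placed inside the rows of height `g`. -/
structure RowItems (w h p q u : ι → ℝ) (δ μ g : ℝ) (T : Finset ι) : Prop extends
    ThinLong w h p q δ μ T where
  row : ∀ i ∈ T, h i ≤ δ → ∃ j : ℕ, j * g ≤ u i ∧ u i + h i ≤ (j + 1) * g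

lemma RowItems.mono (H : RowItems w h p q u δ μ g T) (hT : T' ⊆ T) :
    RowItems w h p q u δ μ g T' :=
  ⟨H.toThinLong.mono hT, fun i hi => H.row i (hT hi)⟩

/-- The vertical items of `T` and the items inside the rows `j` with `r ≤ j < r + m`. -/
noncomputable def core (h u : ι → ℝ) (δ g : ℝ) (r m : ℕ) (T : Finset ι) : Finset ι :=
  {i ∈ T | δ < h i ∨ (r * g ≤ u i ∧ u i + h i ≤ (r + m) * g)}

lemma core_subset : core h u δ g r m T ⊆ T :=
  filter_subset _ T

lemma core_eq_empty (hi : ∀ i ∈ T, ¬ δ < h i ∧ ¬ (r * g ≤ u i ∧ u i + h i ≤ (r + m) * g)) :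
    core h u δ g r m T = ∅ :=
  filter_eq_empty_iff.2 fun i hiT => not_or.2 (hi i hiT)

lemma disjoint_core {r' m' : ℕ} (hd : Disjoint S₁ S₂) :
    Disjoint (core h u δ g r m S₁) (core h u δ g r' m' S₂) :=
  hd.mono core_subset core_subset

variable [DecidableEq ι]

lemma core_union : core h u δ g r m (S₁ ∪ S₂) = core h u δ g r m S₁ ∪ core h u δ g r m S₂ :=
  filter_union _ _ _

lemma core_subset_left (hg : 0 ≤ g) :
    core h u δ g r m₁ S₁ ⊆ core h u δ g r (m₁ + 1 + m₂) (S₁ ∪ S₂) := fun i hi => by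
  obtain ⟨hiS, hcore⟩ := mem_filter.1 hi
  refine mem_filter.2 ⟨mem_union_left _ hiS, hcore.imp_right fun hrow => ⟨hrow.1, ?_⟩⟩
  refine hrow.2.trans (mul_le_mul_of_nonneg_right ?_ hg)
  push_cast
  linarith [Nat.cast_nonneg (α := ℝ) m₂]

lemma core_subset_right (hg : 0 ≤ g) :
    core h u δ g (r + m₁ + 1) m₂ S₂ ⊆ core h u δ g r (m₁ + 1 + m₂) (S₁ ∪ S₂) := fun i hi => by
  obtain ⟨hiS, hcore⟩ := mem_filter.1 hi
  push_cast at hcore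
  refine mem_filter.2 ⟨mem_union_right _ hiS, hcore.imp_right fun hrow => ⟨?_, ?_⟩⟩
  · refine le_trans (mul_le_mul_of_nonneg_right ?_ hg) hrow.1
    linarith [Nat.cast_nonneg (α := ℝ) m₁]
  · push_cast
    linarith [hrow.2]

/-- When a horizontal cut at height `c` goes through row `r + m₁`, the core items that leave the
cores of both parts lie in that row. -/
lemma RowItems.mem_middle_row (H : RowItems w h p q u δ μ g (S₁ ∪ S₂)) (hδ : 0 ≤ δ) (hg : 0 < g)
    (hS₁ : ∀ i ∈ S₁, u i + h i ≤ c) (hS₂ : ∀ i ∈ S₂, c ≤ u i)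
    (hlo : (r + m₁) * g ≤ c) (hhi : c ≤ (r + m₁ + 1) * g)
    (hi : i ∈ core h u δ g r (m₁ + 1 + m₂) (S₁ ∪ S₂) \
      (core h u δ g r m₁ S₁ ∪ core h u δ g (r + m₁ + 1) m₂ S₂)) :
    h i ≤ δ ∧ (r + m₁) * g ≤ u i ∧ u i + h i ≤ (r + m₁) * g + g := by
  obtain ⟨hicore, hinot⟩ := mem_sdiff.1 hi
  obtain ⟨hiS, hcore⟩ := mem_filter.1 hicore
  rw [mem_union, not_or] at hinot
  have hhor : h i ≤ δ := by
    by_contra! hvert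
    rcases mem_union.1 hiS with hi₁ | hi₂
    exacts [hinot.1 (mem_filter.2 ⟨hi₁, .inl hvert⟩), hinot.2 (mem_filter.2 ⟨hi₂, .inl hvert⟩)]
  obtain ⟨hstart, hend⟩ := hcore.resolve_left hhor.not_gt
  obtain ⟨j, hj₀, hj₁⟩ := H.row i hiS hhor
  have hpos := H.height_pos hδ hiS
  suffices hj : j = r + m₁ by
    rw [hj] at hj₀ hj₁
    push_cast at hj₀ hj₁
    exact ⟨hhor, hj₀, by linarith⟩
  rcases mem_union.1 hiS with hi₁ | hi₂
  · have hlt : (j : ℝ) < (r + m₁ + 1 : ℕ) :=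
      lt_of_mul_lt_mul_right (by push_cast; linarith [hS₁ i hi₁]) hg.le
    refine le_antisymm (Nat.lt_succ_iff.1 (mod_cast hlt)) ?_
    by_contra! hj
    refine hinot.1 (mem_filter.2 ⟨hi₁, .inr ⟨hstart, hj₁.trans ?_⟩⟩)
    exact mul_le_mul_of_nonneg_right (mod_cast hj) hg.le
  · have hlt : ((r + m₁ : ℕ) : ℝ) < (j + 1 : ℕ) :=
      lt_of_mul_lt_mul_right (by push_cast; linarith [hS₂ i hi₂]) hg.le
    refine le_antisymm ?_ (Nat.lt_succ_iff.1 (mod_cast hlt))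
    by_contra! hj
    refine hinot.2 (mem_filter.2 ⟨hi₂, .inr ⟨le_trans ?_ hj₀, ?_⟩⟩)
    · exact mul_le_mul_of_nonneg_right (mod_cast hj) hg.le
    · push_cast at hend ⊢
      linarith

lemma AlmostFits.single (hq₀ : 0 ≤ q i) (hp₀ : 0 ≤ p i) (hq : q i ≤ a) (hp : p i ≤ b) :
    AlmostFits p q 3 0 a b {i} := by
  have hcont : LongFits p q 1 (q i) (p i) {i} 0 := .hcont hq₀ hp₀ (by simp) (by simp)
  exact ⟨{i}, subset_rfl, (hcont.extend hq hp).weaken le_rfl (by simp [mul_comm]), by simp⟩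

lemma GuillotineFitsAt.almostFits_of_row (G : GuillotineFitsAt w h u a y₀ y₁ T)
    (hround : LoadRounding ι δ η μ k) (hT : ThinLong w h p q δ μ T) (hδ : 0 ≤ δ) (ha : a ≤ 1)
    (hb : 0 ≤ b) (hb1 : b ≤ 1) (hS : S ⊆ T)
    (hrow : ∀ i ∈ S, h i ≤ δ ∧ c ≤ u i ∧ u i + h i ≤ c + b) : AlmostFits p q k η a b S := by
  have hor : ∀ i ∈ S, w i = q i ∧ h i = p i := fun i hi =>
    hT.eq_of_height_le (hS hi) (hrow i hi).1
  have hload : LoadLE h w (fun i => u i - c) b a S := by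
    refine ⟨fun i hi => sub_nonneg.2 (hrow i hi).2.1, fun i hi => by linarith [(hrow i hi).2.2],
      fun x => ?_⟩
    have hactive : activeAt (fun i => u i - c) h S x = activeAt u h S (x + c) :=
      filter_congr fun i _ => by rw [sub_le_iff_le_add, sub_add_eq_add_sub, lt_sub_iff_add_lt]
    rw [hactive]
    exact (G.subset hS).sum_activeAt_le (fun i hi => (hT.nonneg hδ (hS hi)).1) (x + c)
  exact hround p q _ a b S G.guillotineFits.nonneg.1 ha hb hb1
    (fun i hi => ⟨hT.pos i (hS hi), hT.le i (hS hi), hT.lt i (hS hi)⟩)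
    (hload.congr (fun i hi => (hor i hi).2) fun i hi => (hor i hi).1)

/-- Every core of `T` fits partly into the stretched rows. The number of containers and the loss
grow with `m + ⌊a / δ⌋₊`, which bounds the depth of the recursion over the guillotine cuts. -/
def CoresFit (w h p q u : ι → ℝ) (δ η g g' : ℝ) (k : ℕ) (a y₀ y₁ : ℝ) (T : Finset ι) : Prop :=
  ∀ r m n, RowSpan g r m y₀ y₁ → a ≤ 1 → m * g' ≤ 1 → m + ⌊a / δ⌋₊ ≤ n →
    PartlyFits w h p q δ ((k + 1) * 3 ^ (n + 1)) (η * 3 ^ (n + 1)) a (m * g') (core h u δ g r m T)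

lemma RowStretch.pos_right (hg : RowStretch δ g g') : 0 < g' :=
  hg.pos.trans_le hg.le

lemma RowStretch.mul_nonneg (hg : RowStretch δ g g') (m : ℕ) : 0 ≤ m * g' :=
  _root_.mul_nonneg m.cast_nonneg hg.pos_right.le

lemma three_le_mul_three_pow (k n : ℕ) : 3 * (k + 1) ≤ (k + 1) * 3 ^ (n + 1) := by
  rw [pow_succ]
  nlinarith [Nat.one_le_pow n 3 (by norm_num)]

lemma add_add_le_mul_three_pow (k n : ℕ) :
    k + (k + 1) * 3 ^ (n + 1) + k + (k + (k + 1) * 3 ^ (n + 1)) ≤ (k + 1) * 3 ^ (n + 2) := by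
  have := three_le_mul_three_pow k n
  rw [pow_succ _ (n + 1)]
  linarith

lemma add_add_le_mul_three_pow_real (hη : 0 ≤ η) (n : ℕ) :
    η + η * 3 ^ (n + 1) + η + (η + η * 3 ^ (n + 1)) ≤ η * 3 ^ (n + 2) := by
  have : η * 1 ≤ η * 3 ^ n := mul_le_mul_of_nonneg_left (one_le_pow₀ (by norm_num)) hη
  linarith [pow_succ (3 : ℝ) n, pow_succ (3 : ℝ) (n + 1),
    show η * 3 ^ (n + 1) = 3 * (η * 3 ^ n) by ring, show η * 3 ^ (n + 2) = 9 * (η * 3 ^ n) by ring]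

lemma GuillotineFitsAt.partlyFits_core_of_vertical (G : GuillotineFitsAt w h u a y₀ y₁ T)
    (hδ : 0 < δ) (hη : 0 ≤ η) (hg : RowStretch δ g g') (H : RowSpan g r m y₀ y₁)
    (hC : ∀ i ∈ core h u δ g r m T, δ < h i) :
    PartlyFits w h p q δ ((k + 1) * 3 ^ (n + 1)) (η * 3 ^ (n + 1)) a (m * g')
      (core h u δ g r m T) := by
  obtain ⟨v, hv⟩ := G.exists_loadLE hδ core_subset hC (hg.mul_nonneg m) (H.length_le hg)
  exact hv.partlyFits hC (by linarith [three_le_mul_three_pow k n]) (by positivity)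
    G.guillotineFits.nonneg.1 (hg.mul_nonneg m)

namespace CoresFit

lemma nil (hδ : 0 < δ) (hη : 0 ≤ η) (hg : RowStretch δ g g') (ha : 0 ≤ a) (hy : y₀ ≤ y₁) :
    CoresFit w h p q u δ η g g' k a y₀ y₁ ∅ := fun _ _ _ H _ _ _ =>
  (GuillotineFitsAt.nil ha hy).partlyFits_core_of_vertical hδ hη hg H
    fun _ hi => absurd (core_subset hi) (notMem_empty _)

lemma single (hδ : 0 < δ) (hη : 0 ≤ η) (hg : RowStretch δ g g')
    (G : GuillotineFitsAt w h u a y₀ y₁ {i}) (hw : w i ≤ a) (hT : ThinLong w h p q δ μ {i}) :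
    CoresFit w h p q u δ η g g' k a y₀ y₁ {i} := by
  intro r m n H _ _ _
  by_cases hvert : ∀ j ∈ core h u δ g r m {i}, δ < h j
  · exact G.partlyFits_core_of_vertical hδ hη hg H hvert
  push Not at hvert
  obtain ⟨j, hj, hhor⟩ := hvert
  obtain rfl : j = i := mem_singleton.1 (core_subset hj)
  obtain ⟨hlo, hhi⟩ := (mem_filter.1 hj).2.resolve_left hhor.not_gt
  have hor := hT.eq_of_height_le (mem_singleton_self j) hhor
  have hp : p j ≤ m * g' :=
    calc p j = h j := hor.2.symm
      _ ≤ m * g := by linarith [add_mul (r : ℝ) m g]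
      _ ≤ m * g' := mul_le_mul_of_nonneg_left hg.le m.cast_nonneg
  rw [core_subset.antisymm (singleton_subset_iff.2 hj)]
  have hnonneg := hT.nonneg hδ.le (mem_singleton_self j)
  exact (((AlmostFits.single (hor.1 ▸ hnonneg.1) (hor.2 ▸ hnonneg.2) (hor.1 ▸ hw) hp).mono
    (by linarith [three_le_mul_three_pow k n]) (by positivity)).partlyFits
      G.guillotineFits.nonneg.1 (hg.mul_nonneg m))

lemma almostFits (H : CoresFit w h p q u δ η g g' k a y₀ y₁ T) (hg : RowStretch δ g g')
    (hround : LoadRounding ι δ η μ k) (hμδ : μ ≤ δ) (hspan : RowSpan g r m y₀ y₁)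
    (hT : ThinLong w h p q δ μ T) (ha : a ≤ 1) (hm : m * g' ≤ 1) (hn : m + ⌊a / δ⌋₊ ≤ n) :
    AlmostFits p q (k + (k + 1) * 3 ^ (n + 1)) (η + η * 3 ^ (n + 1)) a (m * g')
      (core h u δ g r m T) :=
  (H r m n hspan ha hm hn).almostFits hround hμδ (hT.mono core_subset) ha (hg.mul_nonneg m) hm

lemma vcut_of_vertical (H₂ : CoresFit w h p q u δ η g g' k a₂ y₀ y₁ S₂)
    (G₁ : GuillotineFitsAt w h u a₁ y₀ y₁ S₁) (hδ : 0 < δ) (hg : RowStretch δ g g')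
    (hd : Disjoint S₁ S₂) (hspan : RowSpan g r m y₀ y₁)
    (hvert : ∀ i ∈ core h u δ g r m S₁, δ < h i) (ha : a₁ + a₂ ≤ 1) (hm : m * g' ≤ 1)
    (hn : m + ⌊(a₁ + a₂) / δ⌋₊ ≤ n) :
    PartlyFits w h p q δ ((k + 1) * 3 ^ (n + 1)) (η * 3 ^ (n + 1)) (a₁ + a₂) (m * g')
      (core h u δ g r m (S₁ ∪ S₂)) := by
  have ha₁ := G₁.guillotineFits.nonneg.1
  obtain ⟨v, hv⟩ := G₁.exists_loadLE hδ core_subset hvert (hg.mul_nonneg m) (hspan.length_le hg)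
  have hfloor : ⌊a₂ / δ⌋₊ ≤ ⌊(a₁ + a₂) / δ⌋₊ :=
    Nat.floor_mono (div_le_div_of_nonneg_right (by linarith) hδ.le)
  rw [core_union]
  exact (H₂ r m n hspan (by linarith) hm (by omega)).append hv (disjoint_core hd) hvert ha₁

lemma le_width_of_horizontal (G : GuillotineFitsAt w h u a y₀ y₁ T)
    (hT : ThinLong w h p q δ μ T) (hi : i ∈ core h u δ g r m T) (hh : h i ≤ δ) : δ ≤ a :=
  calc δ ≤ q i := (hT.lt i (core_subset hi)).le
    _ = w i := (hT.eq_of_height_le (core_subset hi) hh).1.symm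
    _ ≤ a := (G.guillotineFits.dims_le (core_subset hi)).1

lemma floor_div_add_one_le (hδ : 0 < δ) (ha : 0 ≤ a) (h : a + δ ≤ b) :
    ⌊a / δ⌋₊ + 1 ≤ ⌊b / δ⌋₊ := by
  rw [← Nat.floor_add_one (div_nonneg ha hδ.le), div_add_one hδ.ne']
  exact Nat.floor_mono (div_le_div_of_nonneg_right h hδ.le)

/-- If both parts of a vertical cut contain a horizontal core item, then both are at least `δ` wide,
so that `⌊a / δ⌋₊` decreases for both; otherwise no progress is needed. -/
lemma vcut (hδ : 0 < δ) (hη : 0 ≤ η) (hμδ : μ ≤ δ) (hg : RowStretch δ g g')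
    (hround : LoadRounding ι δ η μ k) (hd : Disjoint S₁ S₂)
    (G₁ : GuillotineFitsAt w h u a₁ y₀ y₁ S₁) (G₂ : GuillotineFitsAt w h u a₂ y₀ y₁ S₂)
    (hT : ThinLong w h p q δ μ (S₁ ∪ S₂)) (H₁ : CoresFit w h p q u δ η g g' k a₁ y₀ y₁ S₁)
    (H₂ : CoresFit w h p q u δ η g g' k a₂ y₀ y₁ S₂) :
    CoresFit w h p q u δ η g g' k (a₁ + a₂) y₀ y₁ (S₁ ∪ S₂) := by
  intro r m n hspan ha hm hn
  have ha₁ := G₁.guillotineFits.nonneg.1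
  have ha₂ := G₂.guillotineFits.nonneg.1
  by_cases hvert₁ : ∀ i ∈ core h u δ g r m S₁, δ < h i
  · exact H₂.vcut_of_vertical G₁ hδ hg hd hspan hvert₁ ha hm hn
  by_cases hvert₂ : ∀ i ∈ core h u δ g r m S₂, δ < h i
  · rw [add_comm a₁, union_comm]
    rw [add_comm a₁] at ha hn
    exact H₁.vcut_of_vertical G₂ hδ hg hd.symm hspan hvert₂ ha hm hn
  push Not at hvert₁ hvert₂
  obtain ⟨i₁, hi₁, hh₁⟩ := hvert₁
  obtain ⟨i₂, hi₂, hh₂⟩ := hvert₂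
  have hT₁ := hT.mono (subset_union_left (s₂ := S₂))
  have hT₂ := hT.mono (subset_union_right (s₁ := S₁))
  have hδ₁ := le_width_of_horizontal G₁ hT₁ hi₁ hh₁
  have hδ₂ := le_width_of_horizontal G₂ hT₂ hi₂ hh₂
  have hfloor₁ := floor_div_add_one_le (b := a₁ + a₂) hδ ha₁ (by linarith)
  have hfloor₂ := floor_div_add_one_le (b := a₁ + a₂) hδ ha₂ (by linarith)
  obtain ⟨n, rfl⟩ := Nat.exists_eq_add_of_le' (show 1 ≤ n by omega)
  rw [core_union]
  refine (((H₁.almostFits hg hround hμδ hspan hT₁ (n := n) (by linarith) hm (by omega)).vcut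
    (disjoint_core hd)
    (H₂.almostFits hg hround hμδ hspan hT₂ (n := n) (by linarith) hm (by omega))).mono
    ?_ ?_).partlyFits (by linarith) (hg.mul_nonneg m)
  · linarith [add_add_le_mul_three_pow k n]
  · linarith [add_add_le_mul_three_pow_real hη n]

lemma hcut_through_row (hδ : 0 ≤ δ) (hη : 0 ≤ η) (hμδ : μ ≤ δ) (hg : RowStretch δ g g')
    (hround : LoadRounding ι δ η μ k) (hd : Disjoint S₁ S₂)
    (G₁ : GuillotineFitsAt w h u a y₀ c S₁) (G₂ : GuillotineFitsAt w h u a c y₁ S₂)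
    (hT : RowItems w h p q u δ μ g (S₁ ∪ S₂)) (H₁ : CoresFit w h p q u δ η g g' k a y₀ c S₁)
    (H₂ : CoresFit w h p q u δ η g g' k a c y₁ S₂) (hspan₁ : RowSpan g r m₁ y₀ c)
    (hspan₂ : RowSpan g (r + m₁ + 1) m₂ c y₁) (ha : a ≤ 1) (hm : (m₁ + 1 + m₂) * g' ≤ 1)
    (hn : m₁ + 1 + m₂ + ⌊a / δ⌋₊ ≤ n + 1) :
    AlmostFits p q ((k + 1) * 3 ^ (n + 2)) (η * 3 ^ (n + 2)) a ((m₁ + 1 + m₂) * g')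
      (core h u δ g r (m₁ + 1 + m₂) (S₁ ∪ S₂)) := by
  have hsum : (m₁ + 1 + m₂) * g' = m₁ * g' + g' + m₂ * g' := by ring
  have hm₁ := hg.mul_nonneg m₁
  have hm₂ := hg.mul_nonneg m₂
  have hg' := hg.pos_right
  have F₁ := H₁.almostFits hg hround hμδ hspan₁ (hT.mono subset_union_left).toThinLong ha
    (by linarith) (n := n) (by omega)
  have F₂ := H₂.almostFits hg hround hμδ hspan₂ (hT.mono subset_union_right).toThinLong ha
    (by linarith) (n := n) (by omega)
  have F := (G₁.hcut hd G₂).almostFits_of_row hround hT.toThinLong hδ ha hg'.le (by linarith)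
    (sdiff_subset.trans core_subset) fun i hi => by
      have hrow := hT.mem_middle_row (m₂ := m₂) hδ hg.pos (fun i hi => (G₁.bounds hi).2)
        (fun i hi => (G₂.bounds hi).1) hspan₁.le_right hspan₁.right_le hi
      exact ⟨hrow.1, hrow.2.1, hrow.2.2.trans (add_le_add_right hg.le _)⟩
  have hd₁ := (disjoint_sdiff (t := core h u δ g r (m₁ + 1 + m₂) (S₁ ∪ S₂))).mono_left
    (subset_union_left (s₁ := core h u δ g r m₁ S₁) (s₂ := core h u δ g (r + m₁ + 1) m₂ S₂))
  have hd₂ := (disjoint_sdiff (t := core h u δ g r (m₁ + 1 + m₂) (S₁ ∪ S₂))).mono_left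
    (subset_union_right (s₁ := core h u δ g r m₁ S₁) (s₂ := core h u δ g (r + m₁ + 1) m₂ S₂))
  have hall := AlmostFits.hcut (disjoint_union_left.2 ⟨disjoint_core hd, hd₂.symm⟩)
    (F₁.hcut hd₁ F) F₂
  rw [union_right_comm, union_sdiff_of_subset
    (union_subset (core_subset_left hg.pos.le) (core_subset_right hg.pos.le)), ← hsum] at hall
  exact hall.mono (add_add_le_mul_three_pow k n) (add_add_le_mul_three_pow_real hη n)

/-- If the cut goes through an inner row, the cores of both parts and that row are packed
separately, and `m` decreases for both parts; otherwise one of the parts has no core item. -/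
lemma hcut (hδ : 0 < δ) (hη : 0 ≤ η) (hμδ : μ ≤ δ) (hg : RowStretch δ g g')
    (hround : LoadRounding ι δ η μ k) (hd : Disjoint S₁ S₂)
    (G₁ : GuillotineFitsAt w h u a y₀ c S₁) (G₂ : GuillotineFitsAt w h u a c y₁ S₂)
    (hT : RowItems w h p q u δ μ g (S₁ ∪ S₂)) (H₁ : CoresFit w h p q u δ η g g' k a y₀ c S₁)
    (H₂ : CoresFit w h p q u δ η g g' k a c y₁ S₂) :
    CoresFit w h p q u δ η g g' k a y₀ y₁ (S₁ ∪ S₂) := by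
  intro r m n hspan ha hm hn
  obtain ⟨hspan_left, hspan_le, hspan_right, hspan_ge⟩ := id hspan
  have hpos : ∀ i ∈ S₁ ∪ S₂, 0 < h i := fun i => hT.height_pos hδ.le
  have hgδ := hg.lt
  rcases le_or_gt c (r * g) with hc₀ | hc₀
  · have hcore : core h u δ g r m S₁ = ∅ := core_eq_empty fun i hi => by
      have := G₁.bounds hi
      have := hpos i (mem_union_left _ hi)
      exact ⟨fun _ => by linarith, fun _ => by linarith⟩
    rw [core_union, hcore, empty_union]
    exact H₂ r m n ⟨hc₀, by linarith [G₁.le], hspan_right, hspan_ge⟩ ha hm hn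
  rcases le_or_gt ((r + m) * g) c with hc₁ | hc₁
  · have hcore : core h u δ g r m S₂ = ∅ := core_eq_empty fun i hi => by
      have := G₂.bounds hi
      have := hpos i (mem_union_right _ hi)
      exact ⟨fun _ => by linarith, fun _ => by linarith⟩
    rw [core_union, hcore, union_empty]
    exact H₁ r m n ⟨hspan_left, hspan_le, hc₁, by linarith [G₂.le]⟩ ha hm hn
  obtain ⟨m₁, m₂, rfl, hspan₁, hspan₂⟩ := hspan.exists_split hg.pos hc₀ hc₁
  obtain ⟨n, rfl⟩ := Nat.exists_eq_add_of_le' (show 1 ≤ n by omega)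
  have hfits := hcut_through_row hδ.le hη hμδ hg hround hd G₁ G₂ hT H₁ H₂ hspan₁ hspan₂ ha
    (mod_cast hm) hn
  exact (mod_cast hfits : AlmostFits p q _ _ a ((m₁ + 1 + m₂ : ℕ) * g') _).partlyFits
    G₁.guillotineFits.nonneg.1 (hg.mul_nonneg _)

end CoresFit

theorem GuillotineFitsAt.coresFit (G : GuillotineFitsAt w h u a y₀ y₁ T) (hδ : 0 < δ)
    (hη : 0 ≤ η) (hμδ : μ ≤ δ) (hg : RowStretch δ g g') (hround : LoadRounding ι δ η μ k)
    (hT : RowItems w h p q u δ μ g T) : CoresFit w h p q u δ η g g' k a y₀ y₁ T := by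
  induction G with
  | nil ha hy => exact .nil hδ hη hg ha hy
  | single ha hy hw hlo hhi => exact .single hδ hη hg (.single ha hy hw hlo hhi) hw hT.toThinLong
  | vcut hd G₁ G₂ ih₁ ih₂ =>
    exact .vcut hδ hη hμδ hg hround hd G₁ G₂ hT.toThinLong (ih₁ (hT.mono subset_union_left))
      (ih₂ (hT.mono subset_union_right))
  | hcut hd G₁ G₂ ih₁ ih₂ =>
    exact .hcut hδ hη hμδ hg hround hd G₁ G₂ hT (ih₁ (hT.mono subset_union_left))
      (ih₂ (hT.mono subset_union_right))

end Rows

/-! ### Long items in a box with free area -/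

section Slack

variable {ι : Type*} {w h p q u : ι → ℝ} {δ μ g a b s e e' : ℝ} {k M : ℕ} {T T' : Finset ι}

lemma exists_rowStretch (hδ : 0 < δ) (hs : 0 < s) (hs1 : s ≤ 1 / 2) :
    ∃ M : ℕ, 0 < M ∧ RowStretch δ ((1 - s) / M) ((1 - s / 2) / M) := by
  obtain ⟨M, hM⟩ := exists_nat_ge ((4 / s + 2) / δ)
  rw [div_le_iff₀ hδ] at hM
  have hs4 : 0 < 4 / s := by positivity
  have hM0 : (0 : ℝ) < M := pos_of_mul_pos_left (lt_of_lt_of_le (by positivity) hM) hδ.le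
  refine ⟨M, mod_cast hM0, div_pos (by linarith) hM0, ?_, ?_, fun m hm => ?_⟩
  · rw [div_lt_iff₀ hM0]
    linarith
  · exact div_le_div_of_nonneg_right (by linarith) hM0.le
  · rw [mul_div_assoc', le_div_iff₀ hM0] at hm
    rw [mul_div_assoc', mul_div_assoc']
    refine div_le_div_of_nonneg_right ?_ hM0.le
    have hms : 4 / s ≤ m := by nlinarith [Nat.cast_nonneg (α := ℝ) m]
    rw [div_le_iff₀ hs] at hms
    linarith

open scoped Classical in
/-- The horizontal items that meet the boundary of a row of height `g`. -/
noncomputable def crossing (h u : ι → ℝ) (δ g : ℝ) (T : Finset ι) : Finset ι :=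
  {i ∈ T | h i ≤ δ ∧ ¬∃ j : ℕ, j * g ≤ u i ∧ u i + h i ≤ (j + 1) * g}

lemma crossing_subset : crossing h u δ g T ⊆ T := by
  classical exact filter_subset _ _

variable [DecidableEq ι]

lemma ThinLong.rowItems_sdiff_crossing (H : ThinLong w h p q δ μ T) :
    RowItems w h p q u δ μ g (T \ crossing h u δ g T) :=
  ⟨H.mono sdiff_subset, fun i hi hh => by
    by_contra hrow
    exact (mem_sdiff.1 hi).2 (by classical exact mem_filter.2 ⟨(mem_sdiff.1 hi).1, hh, hrow⟩)⟩

lemma GuillotineFitsAt.sum_thickness_activeAt_le {y₀ y₁ : ℝ}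
    (G : GuillotineFitsAt w h u a y₀ y₁ T) (H : ThinLong w h p q δ μ T) (hδ : 0 < δ)
    (hμ : 0 ≤ μ) (ha : a ≤ 1) (y : ℝ) :
    ∑ i ∈ activeAt u h {i ∈ T | h i ≤ δ} y, p i ≤ μ / δ := by
  have hsub : activeAt u h {i ∈ T | h i ≤ δ} y ⊆ {i ∈ T | h i ≤ δ} := filter_subset _ _
  have hload := (G.subset (filter_subset (fun i => h i ≤ δ) T)).sum_activeAt_le
    (fun i hi => (H.nonneg hδ.le (mem_filter.1 hi).1).1) y
  rw [le_div_iff₀ hδ, sum_mul]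
  calc ∑ i ∈ activeAt u h {i ∈ T | h i ≤ δ} y, p i * δ
      ≤ ∑ i ∈ activeAt u h {i ∈ T | h i ≤ δ} y, μ * w i := sum_le_sum fun i hi => by
        obtain ⟨hiT, hhi⟩ := mem_filter.1 (hsub hi)
        rw [(H.eq_of_height_le hiT hhi).1]
        exact mul_le_mul (H.le i hiT) (H.lt i hiT).le hδ.le hμ
    _ = μ * ∑ i ∈ activeAt u h {i ∈ T | h i ≤ δ} y, w i := (mul_sum _ _ _).symm
    _ ≤ μ := mul_le_of_le_one_right hμ (hload.trans ha)

lemma GuillotineFitsAt.sum_thickness_crossing_le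
    (G : GuillotineFitsAt w h u a 0 (M * g) T) (H : ThinLong w h p q δ μ T) (hδ : 0 < δ)
    (hμ : 0 ≤ μ) (hg : 0 < g) (ha : a ≤ 1) : ∑ i ∈ crossing h u δ g T, p i ≤ M * (μ / δ) := by
  let X (j : ℕ) := activeAt u h {i ∈ T | h i ≤ δ} ((j + 1) * g)
  have hXT (j : ℕ) : X j ⊆ T := (filter_subset _ _).trans (filter_subset _ _)
  have hcover : crossing h u δ g T ⊆ (range M).biUnion X := fun i hi => by
    obtain ⟨hiT, hhi, hcross⟩ := by classical exact mem_filter.1 hi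
    obtain ⟨hlo, hhi'⟩ := G.bounds hiT
    have hfloor : (⌊u i / g⌋₊ : ℝ) * g ≤ u i :=
      (le_div_iff₀ hg).1 (Nat.floor_le (div_nonneg hlo hg.le))
    have hceil : u i < (⌊u i / g⌋₊ + 1) * g := (div_lt_iff₀ hg).1 (Nat.lt_floor_add_one _)
    have hM : (⌊u i / g⌋₊ : ℝ) < M :=
      lt_of_mul_lt_mul_right (by linarith [H.height_pos hδ.le hiT]) hg.le
    exact mem_biUnion.2 ⟨_, mem_range.2 (mod_cast hM), mem_filter.2
      ⟨mem_filter.2 ⟨hiT, hhi⟩, hceil.le, not_le.1 fun hle => hcross ⟨_, hfloor, hle⟩⟩⟩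
  calc ∑ i ∈ crossing h u δ g T, p i ≤ ∑ i ∈ (range M).biUnion X, p i :=
        sum_le_sum_of_subset_of_nonneg hcover fun i hi _ =>
          (H.pos i (biUnion_subset.2 (fun j _ => hXT j) hi)).le
    _ ≤ ∑ j ∈ range M, ∑ i ∈ X j, p i :=
        sum_biUnion_le_sum _ _ fun j _ i hi => (H.pos i (hXT j hi)).le
    _ ≤ #(range M) • (μ / δ) :=
        sum_le_card_nsmul _ _ _ fun j _ => G.sum_thickness_activeAt_le H hδ hμ ha _
    _ = M * (μ / δ) := by rw [card_range, nsmul_eq_mul]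

lemma AlmostFits.of_sdiff (H : AlmostFits p q k e a b (T \ T'))
    (hpq : ∀ i ∈ T, 0 ≤ p i ∧ 0 ≤ q i) (hT' : T' ⊆ T) (he : ∑ i ∈ T', p i ≤ e') :
    AlmostFits p q k (e + e') a b T := by
  obtain ⟨R, hR, hfit, hRe⟩ := H
  refine ⟨R, hR.trans sdiff_subset, hfit.weaken le_rfl (sub_le_sub_left ?_ _), ?_⟩
  · exact sum_le_sum_of_subset_of_nonneg sdiff_subset fun i hi _ =>
      mul_nonneg (hpq i hi).1 (hpq i hi).2
  · have hsub : T' ⊆ T \ R := fun i hi =>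
      mem_sdiff.2 ⟨hT' hi, fun hiR => (mem_sdiff.1 (hR hiR)).2 hi⟩
    rw [← sum_sdiff hsub, sdiff_right_comm]
    exact add_le_add hRe he

/-- Thin long items that leave a strip of width `s` of the unit square free almost fit into a
bounded number of containers that leave a strip of width `s / 2` free. -/
def SlackRounding (ι : Type*) (δ s e μ : ℝ) (k : ℕ) : Prop :=
  ∀ [DecidableEq ι] (w h p q : ι → ℝ) (T : Finset ι), ThinLong w h p q δ μ T →
    GuillotineFits w h 1 (1 - s) T → AlmostFits p q k e 1 (1 - s / 2) T

theorem exists_slackRounding (hδ : 0 < δ) (hs : 0 < s) (hs1 : s ≤ 1 / 2) (he : 0 < e) :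
    ∃ (k : ℕ) (μ₀ : ℝ), 0 < μ₀ ∧ ∀ μ, 0 < μ → μ ≤ μ₀ → ∀ ι : Type*, SlackRounding ι δ s e μ k := by
  obtain ⟨M, hM, hg⟩ := exists_rowStretch hδ hs hs1
  have hM0 : (0 : ℝ) < M := mod_cast hM
  have hMg : M * ((1 - s) / M) = 1 - s := mul_div_cancel₀ _ hM0.ne'
  have hMg' : M * ((1 - s / 2) / M) = 1 - s / 2 := mul_div_cancel₀ _ hM0.ne'
  set g := (1 - s) / M
  set n := M + ⌊1 / δ⌋₊
  set η := e / 2 / (1 + 3 ^ (n + 1)) with hη_def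
  have hη : 0 < η := by positivity
  have hηe : η + η * 3 ^ (n + 1) = e / 2 := by
    rw [hη_def]
    field_simp
  obtain ⟨k, μ₁, hμ₁, hround⟩ := exists_loadRounding hδ hη
  refine ⟨k + (k + 1) * 3 ^ (n + 1), min (min μ₁ δ) (e / 2 * δ / M), by positivity,
    fun μ hμ hμ₀ ι _ w h p q T hT G => ?_⟩
  simp only [le_min_iff, le_div_iff₀ hM0] at hμ₀
  obtain ⟨⟨hμμ₁, hμδ⟩, hμe⟩ := hμ₀
  obtain ⟨u, G⟩ := G.exists_fitsAt 0
  rw [zero_add, ← hMg] at G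
  have hcrossing : ∑ i ∈ crossing h u δ g T, p i ≤ e / 2 :=
    (G.sum_thickness_crossing_le hT hδ hμ.le hg.pos le_rfl).trans
      (by rw [mul_div_assoc', div_le_iff₀ hδ]; linarith)
  have hspan : RowSpan g 0 M 0 (M * g) := by
    have := hg.pos
    constructor <;> push_cast <;> linarith
  have hcore : core h u δ g 0 M (T \ crossing h u δ g T) = T \ crossing h u δ g T :=
    filter_true_of_mem fun i hi => .inr (by
      push_cast
      simpa using G.bounds (sdiff_subset hi))
  have hfit := ((G.subset sdiff_subset).coresFit hδ hη.le hμδ hg (hround μ hμ hμμ₁ ι)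
    hT.rowItems_sdiff_crossing).almostFits hg (hround μ hμ hμμ₁ ι) hμδ hspan
    (hT.mono sdiff_subset) le_rfl (by linarith) le_rfl
  rw [hcore, hMg', hηe] at hfit
  rw [← add_halves e]
  exact hfit.of_sdiff (fun i hi => ⟨(hT.pos i hi).le, hδ.le.trans (hT.lt i hi).le⟩)
    crossing_subset hcrossing

end Slack

lemma LongFits.exists_nonneg_free {ι : Type*} [DecidableEq ι] {p q : ι → ℝ} {k : ℕ} {a b f : ℝ}
    {S : Finset ι} (g : LongFits p q k a b S f) :
    ∃ f', 0 ≤ f' ∧ f ≤ f' ∧ LongFits p q k a b S f' := by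
  induction g with
  | free ha hb => exact ⟨_, mul_nonneg ha hb, le_rfl, .free ha hb⟩
  | hcont ha hb hq hp => exact ⟨0, le_rfl, le_rfl, .hcont ha hb hq hp⟩
  | vcont ha hb hq hp => exact ⟨0, le_rfl, le_rfl, .vcont ha hb hq hp⟩
  | vcut hd _ _ ih₁ ih₂ =>
    obtain ⟨f₁, hf₁, hle₁, g₁⟩ := ih₁
    obtain ⟨f₂, hf₂, hle₂, g₂⟩ := ih₂
    exact ⟨f₁ + f₂, add_nonneg hf₁ hf₂, add_le_add hle₁ hle₂, .vcut hd g₁ g₂⟩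
  | hcut hd _ _ ih₁ ih₂ =>
    obtain ⟨f₁, hf₁, hle₁, g₁⟩ := ih₁
    obtain ⟨f₂, hf₂, hle₂, g₂⟩ := ih₂
    exact ⟨f₁ + f₂, add_nonneg hf₁ hf₂, add_le_add hle₁ hle₂, .hcut hd g₁ g₂⟩
  | weaken hk hf _ ih =>
    obtain ⟨f', hf', hle, g⟩ := ih
    exact ⟨f', hf', hf.trans hle, g.weaken hk le_rfl⟩

/-! ### Structure of packings of thin long items -/

section Bands

variable {ι : Type*} {w h p q d : ι → ℝ} {δ μ s e smin : ℝ} {k k' j L : ℕ} {B C T : Finset ι}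

/-- The `j`-th depth threshold. The ratio of consecutive thresholds is chosen so that the items of
depth at most `threshold δ L (j + 1)` have total thickness at most `slack δ L j / (64 * L)`. -/
noncomputable def threshold (δ : ℝ) (L j : ℕ) : ℝ :=
  (δ ^ 3 / (1024 * L ^ 2)) ^ j * (δ / 2)

/-- The width of the strip freed by contracting the items of depth above `threshold δ L j`. -/
noncomputable def slack (δ : ℝ) (L j : ℕ) : ℝ :=
  threshold δ L j / (8 * L)

lemma threshold_pos (hδ : 0 < δ) (hL : 0 < L) (j : ℕ) : 0 < threshold δ L j := by
  unfold threshold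
  positivity

lemma slack_pos (hδ : 0 < δ) (hL : 0 < L) (j : ℕ) : 0 < slack δ L j :=
  div_pos (threshold_pos hδ hL j) (by positivity)

lemma threshold_ratio_le_one (hδ : 0 < δ) (hδ1 : δ ≤ 1) (hL : 0 < L) :
    δ ^ 3 / (1024 * L ^ 2) ≤ 1 := by
  have hL1 : (1 : ℝ) ≤ L ^ 2 := one_le_pow₀ (mod_cast hL)
  exact div_le_one_of_le₀ (by linarith [pow_le_one₀ (n := 3) hδ.le hδ1]) (by positivity)

lemma threshold_antitone (hδ : 0 < δ) (hδ1 : δ ≤ 1) (hL : 0 < L) : Antitone (threshold δ L) :=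
  fun _ _ hjk => mul_le_mul_of_nonneg_right
    (pow_le_pow_of_le_one (by positivity) (threshold_ratio_le_one hδ hδ1 hL) hjk) (by positivity)

lemma threshold_le (hδ : 0 < δ) (hδ1 : δ ≤ 1) (hL : 0 < L) (j : ℕ) : threshold δ L j ≤ δ / 2 := by
  simpa [threshold] using threshold_antitone hδ hδ1 hL (Nat.zero_le j)

lemma mul_slack (hL : 0 < L) (j : ℕ) : 8 * L * slack δ L j = threshold δ L j :=
  mul_div_cancel₀ _ (by positivity)

lemma slack_le_half (hδ : 0 < δ) (hδ1 : δ ≤ 1) (hL : 0 < L) (j : ℕ) : slack δ L j ≤ 1 / 2 := by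
  have hL1 : (1 : ℝ) ≤ L := mod_cast hL
  exact (div_le_self (threshold_pos hδ hL j).le (by linarith)).trans
    ((threshold_le hδ hδ1 hL j).trans (by linarith))

lemma threshold_succ (hδ : 0 < δ) (hL : 0 < L) (j : ℕ) :
    2 / δ ^ 2 * threshold δ L (j + 1) = δ * (slack δ L j / (64 * L)) := by
  simp only [slack, threshold, pow_succ]
  field_simp
  ring

variable [DecidableEq ι]

/-- All but a fraction `2 / L` of the items of `T` fit into at most `k` containers in the unit
square, leaving free almost all of the unused area and at least a constant area. -/
def FitsWithFreeArea (p q : ι → ℝ) (L k : ℕ) (smin : ℝ) (T : Finset ι) : Prop :=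
  ∃ T' ⊆ T, L * #(T \ T') ≤ 2 * #T ∧ ∃ s f, smin ≤ s ∧ LongFits p q k 1 1 T' f ∧ s / 4 ≤ f ∧
    1 - ∑ i ∈ T', p i * q i - s / (32 * L) ≤ f

lemma FitsWithFreeArea.mono (H : FitsWithFreeArea p q L k s T) (hk : k ≤ k') (hs : smin ≤ s) :
    FitsWithFreeArea p q L k' smin T := by
  obtain ⟨T', hT', hcard, s', f, hs', g, hf, harea⟩ := H
  exact ⟨T', hT', hcard, s', f, hs.trans hs', g.weaken hk le_rfl, hf, harea⟩

lemma AlmostFits.exists_longFits_union (H : AlmostFits p q k e 1 (1 - s / 2) T) (he : 0 ≤ e)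
    (hes : 2 * e ≤ s / 4) (hd : Disjoint T B) (hpq : ∀ i ∈ T ∪ B, 0 ≤ p i ∧ 0 ≤ q i ∧ q i ≤ 1)
    (hB : ∑ i ∈ B, p i ≤ e) :
    ∃ f, LongFits p q (k + 2) 1 1 (T ∪ B) f ∧ s / 4 ≤ f ∧
      1 - ∑ i ∈ T ∪ B, p i * q i - 2 * e ≤ f := by
  obtain ⟨R, hR, g, hRe⟩ := H
  obtain ⟨f, hf, hle, g⟩ := g.exists_nonneg_free
  have hrest : LongFits p q 1 1 (2 * e) (T \ R ∪ B) 0 := by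
    refine .hcont zero_le_one (by linarith)
      (fun i hi => (hpq i (union_subset_union_left sdiff_subset hi)).2.2) ?_
    rw [sum_union (hd.mono_left sdiff_subset)]
    linarith
  have hdisj : Disjoint R (T \ R ∪ B) := disjoint_union_right.2 ⟨disjoint_sdiff, hd.mono_left hR⟩
  have hfit := (g.hcut hdisj hrest).hcut_free (b := 1) (by linarith)
  rw [← union_assoc, union_sdiff_of_subset hR] at hfit
  refine ⟨_, hfit, by linarith, ?_⟩
  have hBarea : 0 ≤ ∑ i ∈ B, p i * q i := sum_nonneg fun i hi =>
    mul_nonneg (hpq i (mem_union_right _ hi)).1 (hpq i (mem_union_right _ hi)).2.1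
  rw [sum_union hd]
  linarith

lemma IsContractionDepth.sum_thickness_band_le (H : IsContractionDepth w h p δ μ L 1 1 T C d)
    (hδ : 0 < δ) (hδ1 : δ ≤ 1) (hL : 0 < L) :
    ∑ i ∈ T with d i ≤ threshold δ L (j + 1), p i ≤ slack δ L j / (64 * L) := by
  have ht := threshold_pos hδ hL (j + 1)
  refine le_of_mul_le_mul_left ?_ hδ
  calc δ * ∑ i ∈ T with d i ≤ threshold δ L (j + 1), p i
      ≤ (depthFactor δ 1 1 + 1) * max (threshold δ L (j + 1)) 0 :=
        H.sum_thickness_le (threshold_le hδ hδ1 hL _)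
    _ ≤ 2 / δ ^ 2 * threshold δ L (j + 1) := by
        rw [max_eq_left ht.le, depthFactor, max_eq_left hδ1, mul_one, mul_one]
        exact mul_le_mul_of_nonneg_right (by linarith) ht.le
    _ = δ * (slack δ L j / (64 * L)) := threshold_succ hδ hL j

lemma IsContractionDepth.fitsWithFreeArea (H : IsContractionDepth w h p δ μ L 1 1 T C d)
    (hT : ThinLong w h p q δ μ T) (hq : ∀ i ∈ T, q i ≤ 1) (hδ : 0 < δ) (hδ1 : δ ≤ 1) (hL : 0 < L)
    (hband : L * #{i ∈ T | threshold δ L (j + 1) < d i ∧ d i ≤ threshold δ L j} ≤ #T)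
    (hμ : μ ≤ slack δ L j) (hround : SlackRounding ι δ (slack δ L j) (slack δ L j / (64 * L)) μ k) :
    FitsWithFreeArea p q L (k + 2) (slack δ L j) T := by
  have hs := slack_pos hδ hL j
  have hL1 : (1 : ℝ) ≤ L := mod_cast hL
  set D := {i ∈ T | threshold δ L (j + 1) < d i ∧ d i ≤ threshold δ L j}
  set R := {i ∈ T | threshold δ L j < d i}
  set B := {i ∈ T | d i ≤ threshold δ L (j + 1)}
  obtain ⟨E, _, hEcard, hE⟩ := H.contracts 0 0 _ _ le_rfl le_rfl (threshold_le hδ hδ1 hL j)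
    (by simpa using (threshold_pos hδ hL j).le) (by simpa using hδ1) (by simpa using hδ1) hμ
    (mul_slack hL j).le R (filter_subset _ _) (fun i hi _ => by simpa using (mem_filter.1 hi).2)
    fun i hi _ => (mem_filter.1 hi).2
  rw [add_zero] at hE
  have hRE : R \ E ⊆ T := sdiff_subset.trans (filter_subset _ _)
  have hsub : R \ E ∪ B ⊆ T := union_subset hRE (filter_subset _ _)
  have hdeep : AlmostFits p q k (slack δ L j / (64 * L)) 1 (1 - slack δ L j / 2) (R \ E) :=
    hE.elim (fun g => hround h w p q _ (hT.mono hRE).swap g.swap)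
      (hround w h p q _ (hT.mono hRE))
  have hd : Disjoint (R \ E) B := disjoint_of_subset_left sdiff_subset <|
    disjoint_filter.2 fun i _ hR hB =>
      (hB.trans (threshold_antitone hδ hδ1 hL j.le_succ)).not_gt hR
  obtain ⟨f, hfit, hf, harea⟩ := hdeep.exists_longFits_union (by positivity)
    (by rw [mul_div_assoc', div_le_div_iff₀ (by positivity) (by norm_num)]; nlinarith) hd
    (fun i hi => ⟨(hT.pos i (hsub hi)).le, hδ.le.trans (hT.lt i (hsub hi)).le, hq i (hsub hi)⟩)
    (H.sum_thickness_band_le hδ hδ1 hL)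
  have hlost : T \ (R \ E ∪ B) ⊆ D ∪ E := fun i hi => by
    simp only [R, B, D, mem_sdiff, mem_union, mem_filter] at hi ⊢
    grind
  refine ⟨R \ E ∪ B, hsub, ?_, _, f, le_rfl, hfit, hf, ?_⟩
  · have := Nat.mul_le_mul_left L ((card_le_card hlost).trans (card_union_le _ _))
    linarith
  · convert harea using 2
    field_simp
    norm_num

theorem exists_fitsWithFreeArea (hL : 0 < L) (hδ : 0 < δ) (hδ1 : δ ≤ 1) :
    ∃ (k : ℕ) (smin μ₀ : ℝ), 0 < smin ∧ 0 < μ₀ ∧ ∀ μ, 0 < μ → μ ≤ μ₀ → ∀ (ι : Type*) [DecidableEq ι]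
      (w h p q : ι → ℝ) (T : Finset ι), ThinLong w h p q δ μ T → GuillotineFits w h 1 1 T →
        FitsWithFreeArea p q L k smin T := by
  have hs (j : ℕ) := slack_pos hδ hL j
  have he (j : ℕ) : 0 < slack δ L j / (64 * L) := div_pos (hs j) (by positivity)
  choose k μr hμr hround using fun j =>
    exists_slackRounding hδ (hs j) (slack_le_half hδ hδ1 hL j) (he j)
  have hne : (range L).Nonempty := nonempty_range_iff.2 hL.ne'
  set μ₁ := (range L).inf' hne fun j => min (μr j) (slack δ L j)
  have hμ₁ : 0 < μ₁ := (lt_inf'_iff _).2 fun j _ => lt_min (hμr j) (hs j)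
  refine ⟨∑ j ∈ range L, (k j + 2), slack δ L L, min μ₁ δ, hs L, lt_min hμ₁ hδ,
    fun μ hμ hμ₀ ι _ w h p q T hT g => ?_⟩
  obtain ⟨C, d, H⟩ := exists_isContractionDepth hL hδ hμ (hμ₀.trans (min_le_right _ _)) g hT
    le_rfl le_rfl
  obtain ⟨j, hj, hband⟩ := exists_card_band_le d (threshold_antitone hδ hδ1 hL) T hL
  have hμj : μ ≤ μr j ∧ μ ≤ slack δ L j := le_min_iff.1
    ((hμ₀.trans (min_le_left _ _)).trans (inf'_le _ (mem_range.2 hj)))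
  have hq (i) (hi : i ∈ T) : q i ≤ 1 := (hT.oriented i hi).elim
    (fun ho => ho.1 ▸ (g.dims_le hi).1) fun ho => ho.2 ▸ (g.dims_le hi).2
  refine (H.fitsWithFreeArea hT hq hδ hδ1 hL hband hμj.2 (hround j μ hμ hμj.1 ι)).mono ?_ ?_
  · exact single_le_sum (f := fun j => k j + 2) (fun _ _ => Nat.zero_le _) (mem_range.2 hj)
  · exact div_le_div_of_nonneg_right (threshold_antitone hδ hδ1 hL hj.le) (by positivity)

end Bands

/-! ### Filling free area with small items -/

section Small

variable {ι : Type*} {p q : ι → ℝ} {μ : ℝ} {L : ℕ} {S T : Finset ι}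

lemma exists_subset_sum_sdiff_le [DecidableEq ι] {g : ι → ℝ} {θ : ℝ} (hL : 0 < L) (hθ : 0 ≤ θ)
    (hg : ∀ i ∈ S, g i ≤ θ) : ∃ D ⊆ S, L * #D ≤ #S ∧
      (∑ i ∈ S \ D, g i ≤ 2 * L * θ ∨ ∑ i ∈ S \ D, g i ≤ ∑ i ∈ S, g i - θ) := by
  by_cases hsmall : ∑ i ∈ S, g i ≤ 2 * L * θ
  · exact ⟨∅, empty_subset _, by simp, .inl (by rwa [sdiff_empty])⟩
  push Not at hsmall
  have hL1 : (1 : ℝ) ≤ L := mod_cast hL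
  have hpos : 0 < ∑ i ∈ S, g i := lt_of_le_of_lt (by positivity) hsmall
  obtain ⟨D, hD, hupper, hlow, hhigh⟩ :=
    exists_upper_subset_sum_between g g S hθ hg (by nlinarith) hθ
  refine ⟨D, hD, ?_, .inr (by linarith [sum_sdiff (f := g) hD])⟩
  have hcard : (L : ℝ) * #D ≤ #S := by
    refine le_of_mul_le_mul_right ?_ hpos
    calc (L : ℝ) * #D * ∑ i ∈ S, g i = L * (#D * ∑ i ∈ S, g i) := mul_assoc _ _ _
      _ ≤ L * (#S * ∑ i ∈ D, g i) :=
        mul_le_mul_of_nonneg_left (card_mul_sum_le_of_upper hD hupper) L.cast_nonneg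
      _ = #S * (L * ∑ i ∈ D, g i) := mul_left_comm _ _ _
      _ ≤ #S * ∑ i ∈ S, g i := by gcongr; nlinarith
  exact_mod_cast hcard

/-- Both sides of every item of `S` are at most `μ`. -/
structure SmallItems (p q : ι → ℝ) (μ : ℝ) (S : Finset ι) : Prop where
  nonneg : ∀ i ∈ S, 0 ≤ p i ∧ 0 ≤ q i
  le : ∀ i ∈ S, p i ≤ μ ∧ q i ≤ μ

namespace SmallItems

lemma mono (H : SmallItems p q μ T) (hS : S ⊆ T) : SmallItems p q μ S :=
  ⟨fun i hi => H.nonneg i (hS hi), fun i hi => H.le i (hS hi)⟩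

lemma area_le (H : SmallItems p q μ S) {i : ι} (hi : i ∈ S) : p i * q i ≤ μ * μ :=
  mul_le_mul (H.le i hi).1 (H.le i hi).2 (H.nonneg i hi).2
    ((H.nonneg i hi).1.trans (H.le i hi).1)

lemma sum_area_nonneg (H : SmallItems p q μ S) : 0 ≤ ∑ i ∈ S, p i * q i :=
  sum_nonneg fun i hi => mul_nonneg (H.nonneg i hi).1 (H.nonneg i hi).2

/-- Every cut of the region to be filled wastes at most the area `c` of one small item. -/
lemma exists_split [DecidableEq ι] (H : SmallItems p q μ S) {c f₁ f₂ : ℝ} (hμc : μ * μ ≤ c)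
    (harea : S = ∅ ∨ ∑ i ∈ S, p i * q i ≤ f₁ + f₂ - c) :
    ∃ S₁ ⊆ S, (S₁ = ∅ ∨ ∑ i ∈ S₁, p i * q i ≤ f₁) ∧
      (S \ S₁ = ∅ ∨ ∑ i ∈ S \ S₁, p i * q i ≤ f₂) := by
  rcases harea with rfl | harea
  · exact ⟨∅, subset_rfl, .inl rfl, .inl (by simp)⟩
  rcases lt_or_ge f₁ c with hfc | hfc
  · exact ⟨∅, empty_subset _, .inl rfl, .inr (by rw [sdiff_empty]; linarith)⟩
  rcases le_total (∑ i ∈ S, p i * q i) f₁ with hall | hsome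
  · exact ⟨S, subset_rfl, .inr hall, .inl (by simp)⟩
  obtain ⟨A, hA, -, hlow, hhigh⟩ := exists_upper_subset_sum_between (fun i => p i * q i) _ S
    (mul_self_nonneg μ) (fun i hi => H.area_le hi) (by linarith [mul_self_nonneg μ] : f₁ - c ≤ _)
    (sub_nonneg.2 hfc)
  exact ⟨A, hA, .inr (by linarith), .inr (by
    linarith [sum_sdiff (f := fun i => p i * q i) hA])⟩

end SmallItems

end Small

section Filling

variable {ι : Type*} [DecidableEq ι]

/-- The items of `S`, with short sides `p` and long sides `q`, can be packed into `k` containers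
that partition the box `a × b` by guillotine cuts. In horizontal and vertical containers the long
sides are horizontal and vertical; in area containers the short sides are horizontal. -/
inductive ContainerFits (p q : ι → ℝ) (ε : ℝ) : ℕ → ℝ → ℝ → Finset ι → Prop
  | empty {a b} (ha : 0 ≤ a) (hb : 0 ≤ b) : ContainerFits p q ε 0 a b ∅
  | hcont {a b S} (ha : 0 ≤ a) (hb : 0 ≤ b) (hq : ∀ i ∈ S, q i ≤ a) (hp : ∑ i ∈ S, p i ≤ b) :
      ContainerFits p q ε 1 a b S
  | vcont {a b S} (ha : 0 ≤ a) (hb : 0 ≤ b) (hq : ∀ i ∈ S, q i ≤ b) (hp : ∑ i ∈ S, p i ≤ a) :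
      ContainerFits p q ε 1 a b S
  | area {a b S} (g : GuillotineFits p q a b S) (hS : ∀ i ∈ S, p i ≤ ε * a ∧ q i ≤ ε * b) :
      ContainerFits p q ε 1 a b S
  | vcut {k₁ k₂ a₁ a₂ b S₁ S₂} (hd : Disjoint S₁ S₂) (g₁ : ContainerFits p q ε k₁ a₁ b S₁)
      (g₂ : ContainerFits p q ε k₂ a₂ b S₂) :
      ContainerFits p q ε (k₁ + k₂) (a₁ + a₂) b (S₁ ∪ S₂)
  | hcut {k₁ k₂ a b₁ b₂ S₁ S₂} (hd : Disjoint S₁ S₂) (g₁ : ContainerFits p q ε k₁ a b₁ S₁)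
      (g₂ : ContainerFits p q ε k₂ a b₂ S₂) :
      ContainerFits p q ε (k₁ + k₂) a (b₁ + b₂) (S₁ ∪ S₂)

variable {w h p q : ι → ℝ} {a b m ε μ δ s : ℝ} {k L : ℕ} {S T : Finset ι}

lemma GuillotineFits.of_shelf (hb : 0 ≤ b) (hS : ∀ i ∈ S, 0 ≤ w i ∧ h i ≤ b) :
    GuillotineFits w h (∑ i ∈ S, w i) b S := by
  induction S using Finset.induction_on with
  | empty => simpa using GuillotineFits.nil le_rfl hb
  | insert i S hi ih =>
    rw [sum_insert hi, insert_eq]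
    have hwh := hS i (mem_insert_self _ _)
    exact .vcut (disjoint_singleton_left.2 hi) (.single hwh.1 hb le_rfl hwh.2)
      (ih fun j hj => hS j (mem_insert_of_mem hj))

/-- The analysis of Next-Fit Decreasing Height: the shelves are at least `a - m` wide, and the
height of each shelf is at most that of any item on the previous one. -/
lemma GuillotineFits.nextFitDecreasingHeight (hm : 0 ≤ m) (ham : m < a) (hb : 0 ≤ b)
    (hS : ∀ i ∈ S, 0 ≤ w i ∧ w i ≤ m ∧ 0 ≤ h i ∧ h i ≤ b) :
    GuillotineFits w h a (b + (∑ i ∈ S, w i * h i) / (a - m)) S := by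
  induction S using Finset.strongInduction generalizing b with
  | H S ih =>
  have ham' : 0 < a - m := sub_pos.2 ham
  have hshelf (A) (hA : A ⊆ S) : GuillotineFits w h (∑ i ∈ A, w i) b A :=
    .of_shelf hb fun i hi => ⟨(hS i (hA hi)).1, (hS i (hA hi)).2.2.2⟩
  by_cases hle : ∑ i ∈ S, w i ≤ a
  · refine (hshelf S subset_rfl).mono hle (le_add_of_nonneg_right (div_nonneg ?_ ham'.le))
    exact sum_nonneg fun i hi => mul_nonneg (hS i hi).1 (hS i hi).2.2.1
  obtain ⟨A, hA, hupper, hlow, hhigh⟩ := exists_upper_subset_sum_between h w S hm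
    (fun i hi => (hS i hi).2.1) (by linarith : a - m ≤ _) ham'.le
  obtain ⟨l, hl, hmin⟩ := exists_min_image A h
    (nonempty_of_sum_ne_zero (ham'.trans_le hlow).ne')
  have hl0 : 0 ≤ h l := (hS l (hA hl)).2.2.1
  have hrest := ih (S \ A) (sdiff_ssubset hA ⟨l, hl⟩) hl0 fun i hi =>
    have hi' := hS i (sdiff_subset hi)
    ⟨hi'.1, hi'.2.1, hi'.2.2.1, hupper l hl i hi⟩
  have hshelfArea : h l ≤ (∑ i ∈ A, w i * h i) / (a - m) := by
    rw [le_div_iff₀' ham']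
    calc (a - m) * h l ≤ (∑ i ∈ A, w i) * h l := mul_le_mul_of_nonneg_right hlow hl0
      _ = ∑ i ∈ A, w i * h l := sum_mul _ _ _
      _ ≤ _ := sum_le_sum fun i hi => mul_le_mul_of_nonneg_left (hmin i hi) (hS i (hA hi)).1
  have hfit := ((hshelf A hA).mono (by linarith) le_rfl).hcut disjoint_sdiff hrest
  rw [union_sdiff_of_subset hA] at hfit
  refine hfit.mono le_rfl ?_
  rw [← sum_sdiff hA, add_div]
  linarith

lemma ContainerFits.scale {c : ℝ} (g : ContainerFits p q ε k a b S) (hc : 0 ≤ c) :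
    ContainerFits (fun i => c * p i) (fun i => c * q i) ε k (c * a) (c * b) S := by
  induction g with
  | empty ha hb => exact .empty (by positivity) (by positivity)
  | hcont ha hb hq hp =>
    refine .hcont (by positivity) (by positivity)
      (fun i hi => mul_le_mul_of_nonneg_left (hq i hi) hc) ?_
    rw [← mul_sum]
    exact mul_le_mul_of_nonneg_left hp hc
  | vcont ha hb hq hp =>
    refine .vcont (by positivity) (by positivity)
      (fun i hi => mul_le_mul_of_nonneg_left (hq i hi) hc) ?_
    rw [← mul_sum]
    exact mul_le_mul_of_nonneg_left hp hc
  | area g hS =>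
    refine .area (g.scale hc) fun i hi => ?_
    rw [mul_left_comm ε, mul_left_comm ε]
    exact ⟨mul_le_mul_of_nonneg_left (hS i hi).1 hc, mul_le_mul_of_nonneg_left (hS i hi).2 hc⟩
  | vcut hd _ _ ih₁ ih₂ => exact mul_add c _ _ ▸ .vcut hd ih₁ ih₂
  | hcut hd _ _ ih₁ ih₂ => exact mul_add c _ _ ▸ .hcut hd ih₁ ih₂

lemma GuillotineFits.containerFits (g : GuillotineFits w h a b S)
    (hS : ∀ i ∈ S, IsOriented w h p q i) : ContainerFits p q ε #S a b S := by
  induction g with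
  | nil ha hb => exact .empty ha hb
  | single ha hb hw hh =>
    rw [card_singleton]
    rcases hS _ (mem_singleton_self _) with ⟨hq, hp⟩ | ⟨hp, hq⟩
    · exact .hcont ha hb (by simpa [← hq] using hw) (by simpa [← hp] using hh)
    · exact .vcont ha hb (by simpa [← hq] using hh) (by simpa [← hp] using hw)
  | vcut hd _ _ ih₁ ih₂ =>
    rw [card_union_of_disjoint hd]
    exact .vcut hd (ih₁ fun i hi => hS i (mem_union_left _ hi))
      (ih₂ fun i hi => hS i (mem_union_right _ hi))
  | hcut hd _ _ ih₁ ih₂ =>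
    rw [card_union_of_disjoint hd]
    exact .hcut hd (ih₁ fun i hi => hS i (mem_union_left _ hi))
      (ih₂ fun i hi => hS i (mem_union_right _ hi))

lemma SmallItems.containerFits (H : SmallItems p q μ S) (hε : 0 < ε) (hε1 : ε < 1) (hμ : 0 < μ)
    (ha : 0 ≤ a) (ha1 : a ≤ 1) (hb : 0 ≤ b) (hb1 : b ≤ 1)
    (harea : ∑ i ∈ S, p i * q i ≤ a * b - 2 * μ / ε) : ContainerFits p q ε 1 a b S := by
  have hμε : μ < μ / ε := (lt_div_iff₀ hε).2 (mul_lt_of_lt_one_right hμ hε1)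
  rw [mul_div_assoc] at harea
  have hab : 2 * (μ / ε) ≤ a * b := by linarith [H.sum_area_nonneg]
  have hae : 2 * (μ / ε) ≤ a := hab.trans (mul_le_of_le_one_right ha hb1)
  have hbe : 2 * (μ / ε) ≤ b := hab.trans (mul_le_of_le_one_left hb ha1)
  have hμa : μ < a := by linarith
  refine .area ((GuillotineFits.nextFitDecreasingHeight hμ.le hμa hμ.le fun i hi =>
    ⟨(H.nonneg i hi).1, (H.le i hi).1, (H.nonneg i hi).2, (H.le i hi).2⟩).mono le_rfl ?_)
    fun i hi => ?_
  · rw [← le_sub_iff_add_le', div_le_iff₀ (sub_pos.2 hμa)]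
    nlinarith
  · have hside {x : ℝ} (hx : 2 * (μ / ε) ≤ x) : μ ≤ ε * x := (div_le_iff₀' hε).1 (by linarith)
    exact ⟨(H.le i hi).1.trans (hside hae), (H.le i hi).2.trans (hside hbe)⟩

/-- Small items of total area slightly less than `f` can be added to the items `T` in the box
`a × b`. The alternative `S = ∅` matters when the allowed area is negative. -/
def Fillable (p q : ι → ℝ) (ε μ : ℝ) (k : ℕ) (a b : ℝ) (T : Finset ι) (f : ℝ) : Prop :=
  ∀ S, Disjoint T S → SmallItems p q μ S →
    (S = ∅ ∨ ∑ i ∈ S, p i * q i ≤ f - (2 * k - 1) * (2 * μ / ε)) →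
    ∃ k' ≤ k, ContainerFits p q ε k' a b (T ∪ S)

namespace Fillable

variable {k₁ k₂ : ℕ} {a₁ a₂ b₁ b₂ f₁ f₂ : ℝ} {T₁ T₂ : Finset ι}

lemma of_containerFits (hε : 0 < ε) (hμ : 0 < μ) (g : ContainerFits p q ε 1 a b T) :
    Fillable p q ε μ 1 a b T 0 := fun S _ hS harea => by
  have hc : 0 < 2 * μ / ε := by positivity
  obtain rfl : S = ∅ := harea.resolve_right fun hle => by
    push_cast at hle
    linarith [hS.sum_area_nonneg]
  exact ⟨1, le_rfl, by rwa [union_empty]⟩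

lemma union (hε : 0 < ε) (hε1 : ε < 1) (hμ : 0 < μ) (hμ1 : μ ≤ 1) (hd : Disjoint T₁ T₂)
    (F₁ : Fillable p q ε μ k₁ a₁ b₁ T₁ f₁) (F₂ : Fillable p q ε μ k₂ a₂ b₂ T₂ f₂)
    (hcut : ∀ {k₁ k₂ : ℕ} {S₁ S₂ : Finset ι}, Disjoint S₁ S₂ → ContainerFits p q ε k₁ a₁ b₁ S₁ →
      ContainerFits p q ε k₂ a₂ b₂ S₂ → ContainerFits p q ε (k₁ + k₂) a b (S₁ ∪ S₂)) :
    Fillable p q ε μ (k₁ + k₂) a b (T₁ ∪ T₂) (f₁ + f₂) := fun S hdS hS harea => by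
  have hμc : μ * μ ≤ 2 * μ / ε := (le_div_iff₀ hε).2 (by nlinarith [mul_pos hμ hμ])
  obtain ⟨S₁, hS₁, harea₁, harea₂⟩ := hS.exists_split
    (f₁ := f₁ - (2 * k₁ - 1) * (2 * μ / ε)) (f₂ := f₂ - (2 * k₂ - 1) * (2 * μ / ε)) hμc
    (harea.imp_right fun hle => hle.trans (by push_cast; linarith))
  rw [disjoint_union_left] at hdS
  obtain ⟨k₁', hk₁, g₁⟩ := F₁ S₁ (hdS.1.mono_right hS₁) (hS.mono hS₁) harea₁
  obtain ⟨k₂', hk₂, g₂⟩ := F₂ _ (hdS.2.mono_right sdiff_subset) (hS.mono sdiff_subset) harea₂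
  refine ⟨k₁' + k₂', add_le_add hk₁ hk₂, ?_⟩
  rw [← union_sdiff_of_subset hS₁, union_union_union_comm]
  refine hcut ?_ g₁ g₂
  rw [disjoint_union_left, disjoint_union_right, disjoint_union_right]
  exact ⟨⟨hd, hdS.1.mono_right sdiff_subset⟩, (hdS.2.mono_right hS₁).symm, disjoint_sdiff⟩

end Fillable

lemma LongFits.fillable {f : ℝ} (g : LongFits p q k a b T f) (hε : 0 < ε) (hε1 : ε < 1)
    (hμ : 0 < μ) (hμ1 : μ ≤ 1) (ha1 : a ≤ 1) (hb1 : b ≤ 1) : Fillable p q ε μ k a b T f := by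
  induction g with
  | free ha hb =>
    rintro S - hS (rfl | harea)
    · exact ⟨0, zero_le_one, .empty ha hb⟩
    · rw [empty_union]
      exact ⟨1, le_rfl, hS.containerFits hε hε1 hμ ha ha1 hb hb1 (by push_cast at harea; linarith)⟩
  | hcont ha hb hq hp => exact .of_containerFits hε hμ (.hcont ha hb hq hp)
  | vcont ha hb hq hp => exact .of_containerFits hε hμ (.vcont ha hb hq hp)
  | vcut hd g₁ g₂ ih₁ ih₂ =>
    exact .union hε hε1 hμ hμ1 hd (ih₁ (by linarith [g₂.nonneg.1]) hb1)
      (ih₂ (by linarith [g₁.nonneg.1]) hb1) .vcut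
  | hcut hd g₁ g₂ ih₁ ih₂ =>
    exact .union hε hε1 hμ hμ1 hd (ih₁ ha1 (by linarith [g₂.nonneg.2]))
      (ih₂ ha1 (by linarith [g₁.nonneg.2])) .hcut
  | weaken hk hf _ ih =>
    intro S hd hS harea
    obtain ⟨k', hk', g⟩ := ih ha1 hb1 S hd hS (harea.imp_right fun hle => hle.trans (by gcongr))
    exact ⟨k', hk'.trans hk, g⟩

lemma FitsWithFreeArea.exists_containerFits (H : FitsWithFreeArea p q L k s T) (hL : 0 < L)
    (hs : 0 < s) (hε : 0 < ε) (hε1 : ε < 1) (hμ : 0 < μ) (hμ1 : μ ≤ 1)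
    (hμs : μ * μ ≤ s / (16 * L)) (hμk : (2 * k - 1) * (2 * μ / ε) ≤ s / (32 * L))
    (hd : Disjoint T S) (hT : ∀ i ∈ T, 0 ≤ p i * q i) (hS : SmallItems p q μ S)
    (harea : ∑ i ∈ T ∪ S, p i * q i ≤ 1) :
    ∃ A ⊆ T ∪ S, L * #((T ∪ S) \ A) ≤ 2 * #(T ∪ S) ∧ ∃ k' ≤ k, ContainerFits p q ε k' 1 1 A := by
  obtain ⟨T', hT', hcard, s', f, hs', g, hf, hfree⟩ := H
  have hL1 : (1 : ℝ) ≤ L := mod_cast hL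
  have hs0 : 0 < s' := hs.trans_le hs'
  have hss' : s / (32 * L) ≤ s' / (32 * L) := by gcongr
  have hs32 : s' / (32 * L) ≤ s' / 32 := by gcongr; linarith
  have hs16 : s' / (16 * L) = 2 * (s' / (32 * L)) := by field_simp; norm_num
  have hs8 : 2 * L * (s' / (16 * L)) = s' / 8 := by field_simp; norm_num
  obtain ⟨D, hD, hDcard, hDarea⟩ := exists_subset_sum_sdiff_le (S := S) (g := fun i => p i * q i)
    (θ := s' / (16 * L)) hL (by positivity)
    fun i hi => (hS.area_le hi).trans (hμs.trans (by gcongr))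
  have hT'area : ∑ i ∈ T', p i * q i ≤ ∑ i ∈ T, p i * q i :=
    sum_le_sum_of_subset_of_nonneg hT' fun i hi _ => hT i hi
  rw [sum_union hd] at harea
  obtain ⟨k', hk', g⟩ := g.fillable hε hε1 hμ hμ1 le_rfl le_rfl (S \ D)
    (hd.mono hT' sdiff_subset) (hS.mono sdiff_subset)
    (.inr (by rcases hDarea with hle | hle <;> linarith))
  refine ⟨T' ∪ S \ D, union_subset_union hT' sdiff_subset, ?_, k', hk', g⟩
  have hlost : (T ∪ S) \ (T' ∪ S \ D) ⊆ T \ T' ∪ D := fun i hi => by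
    simp only [mem_sdiff, mem_union] at hi ⊢
    tauto
  have hle := Nat.mul_le_mul_left L ((card_le_card hlost).trans (card_union_le _ _))
  rw [card_union_of_disjoint hd]
  linarith

/-- At the scale `μ ≤ δ`, all but a fraction `2 / L` of the items that are either thin and long
(at most `μ` thick, longer than `δ`) or small (both sides at most `μ`) fit into `K` containers. -/
def IsPackingScale.{u} (ε : ℝ) (L K : ℕ) (δ μ : ℝ) : Prop :=
  ∀ (ι : Type u) [DecidableEq ι] (w h p q : ι → ℝ) (T S : Finset ι), Disjoint T S →
    ThinLong w h p q δ μ T → SmallItems p q μ S → (∀ i ∈ S, IsOriented w h p q i) →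
    GuillotineFits w h 1 1 (T ∪ S) →
    ∃ A ⊆ T ∪ S, L * #((T ∪ S) \ A) ≤ 2 * #(T ∪ S) ∧ ∃ k ≤ K, ContainerFits p q ε k 1 1 A

theorem exists_isPackingScale.{u} (hε : 0 < ε) (hε1 : ε < 1) (hL : 0 < L) (hδ : 0 < δ)
    (hδ1 : δ ≤ 1) : ∃ (K : ℕ) (μ : ℝ), 0 < μ ∧ μ ≤ δ ∧ IsPackingScale.{u} ε L K δ μ := by
  obtain ⟨K, s, μ₀, hs, hμ₀, hlong⟩ := exists_fitsWithFreeArea hL hδ hδ1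
  set μ := min (min μ₀ δ) (min (s / (16 * L)) (ε * (s / (32 * L)) / (4 * (K + 1))))
  have hμ : 0 < μ := by positivity
  obtain ⟨⟨hμμ₀, hμδ⟩, hμs, hμK⟩ := And.imp le_min_iff.1 le_min_iff.1 (le_min_iff.1 (le_refl μ))
  have hμ1 : μ ≤ 1 := hμδ.trans hδ1
  refine ⟨K, μ, hμ, hμδ, fun ι _ w h p q T S hd hT hS hSo g => ?_⟩
  have horiented : ∀ i ∈ T ∪ S, IsOriented w h p q i := fun i hi =>
    (mem_union.1 hi).elim (hT.oriented i) (hSo i)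
  have hnonneg : ∀ i ∈ T ∪ S, 0 ≤ p i ∧ 0 ≤ q i := fun i hi => (mem_union.1 hi).elim
    (fun hi => ⟨(hT.pos i hi).le, hδ.le.trans (hT.lt i hi).le⟩) (hS.nonneg i)
  refine (hlong μ hμ hμμ₀ ι w h p q T hT (g.subset subset_union_left)).exists_containerFits hL hs
    hε hε1 hμ hμ1 ((mul_le_of_le_one_left hμ.le hμ1).trans hμs) ?_ hd
    (fun i hi => mul_nonneg (hnonneg i (mem_union_left _ hi)).1 (hnonneg i (mem_union_left _ hi)).2)
    hS ?_
  · rw [le_div_iff₀ (by positivity)] at hμK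
    rw [mul_div_assoc', div_le_iff₀ hε]
    linarith
  · rw [← one_mul (1 : ℝ), ← sum_congr rfl fun i hi => (horiented i hi).mul_eq]
    exact g.sum_area_le fun i hi => (horiented i hi).nonneg (hnonneg i hi).1 (hnonneg i hi).2

end Filling

/-! ### From fitting to placements and back -/

section Placement

variable {ι : Type*}

lemma _root_.GuillotineSep.guillotineFits [DecidableEq ι] {pl : ι → Rect} {P : Rect} {S : Finset ι}
    (g : GuillotineSep pl P S) (hx : P.x1 ≤ P.x2) (hy : P.y1 ≤ P.y2)
    (hsub : ∀ i ∈ S, (pl i).SubRect P) :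
    GuillotineFits (fun i => (pl i).width) (fun i => (pl i).height) P.width P.height S := by
  induction g with
  | base P S hS =>
    have hw : 0 ≤ P.width := sub_nonneg.2 hx
    have hh : 0 ≤ P.height := sub_nonneg.2 hy
    rcases Nat.le_one_iff_eq_zero_or_eq_one.1 hS with hcard | hcard
    · rw [card_eq_zero.1 hcard]
      exact .nil hw hh
    · obtain ⟨i, rfl⟩ := card_eq_one.1 hcard
      obtain ⟨hx1, hx2, hy1, hy2⟩ := hsub i (mem_singleton_self i)
      exact .single hw hh (sub_le_sub hx2 hx1) (sub_le_sub hy2 hy1)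
  | vcut P S c h₁ h₂ hcross _ _ ihL ihR =>
    have gL := ihL h₁.le hy fun i hi =>
      have ⟨hiS, hic⟩ := mem_filter.1 hi
      ⟨(hsub i hiS).1, hic, (hsub i hiS).2.2⟩
    have gR := ihR h₂.le hy fun i hi =>
      have ⟨hiS, hic⟩ := mem_filter.1 hi
      ⟨(hcross i hiS).resolve_left hic, (hsub i hiS).2⟩
    have gLR := GuillotineFits.vcut_of_le gL gR (disjoint_filter_filter_not _ _ _)
      (a := P.width) (by simp only [Rect.width]; linarith)
    rwa [filter_union_filter_not_eq] at gLR
  | hcut P S c h₁ h₂ hcross _ _ ihB ihT =>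
    have gB := ihB hx h₁.le fun i hi =>
      have ⟨hiS, hic⟩ := mem_filter.1 hi
      ⟨(hsub i hiS).1, (hsub i hiS).2.1, (hsub i hiS).2.2.1, hic⟩
    have gT := ihT hx h₂.le fun i hi =>
      have ⟨hiS, hic⟩ := mem_filter.1 hi
      ⟨(hsub i hiS).1, (hsub i hiS).2.1, (hcross i hiS).resolve_left hic, (hsub i hiS).2.2.2⟩
    have gBT := GuillotineFits.hcut_of_le gB gT (disjoint_filter_filter_not _ _ _)
      (b := P.height) (by simp only [Rect.height]; linarith)
    rwa [filter_union_filter_not_eq] at gBT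

/-- A guillotine-separable placement of nondegenerate rectangles, of unspecified sizes, in `P`. -/
structure GuillotinePlaced (pl : ι → Rect) (P : Rect) (S : Finset ι) : Prop where
  pos : ∀ i ∈ S, (pl i).x1 < (pl i).x2 ∧ (pl i).y1 < (pl i).y2
  subRect : ∀ i ∈ S, (pl i).SubRect P
  disjoint : ∀ i ∈ S, ∀ j ∈ S, i ≠ j → Disjoint (pl i).toSet (pl j).toSet
  sep : GuillotineSep pl P S

lemma forall_mem_union_piecewise {α : Type*} [DecidableEq ι] {f g : ι → α} {S T : Finset ι}
    {r : ι → α → Prop} (hf : ∀ i ∈ S, r i (f i)) (hg : ∀ i ∈ T, r i (g i)) :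
    ∀ i ∈ S ∪ T, r i (S.piecewise f g i) := by
  intro i hi
  by_cases hiS : i ∈ S
  · rw [piecewise_eq_of_mem _ _ _ hiS]
    exact hf i hiS
  · rw [piecewise_eq_of_notMem _ _ _ hiS]
    exact hg i ((mem_union.1 hi).resolve_left hiS)

lemma forall_ne_union_piecewise {α : Type*} [DecidableEq ι] {f g : ι → α} {S T : Finset ι}
    {r : α → α → Prop} (hr : ∀ {x y}, r x y → r y x)
    (hf : ∀ i ∈ S, ∀ j ∈ S, i ≠ j → r (f i) (f j)) (hg : ∀ i ∈ T, ∀ j ∈ T, i ≠ j → r (g i) (g j))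
    (hfg : ∀ i ∈ S, ∀ j ∈ T, r (f i) (g j)) :
    ∀ i ∈ S ∪ T, ∀ j ∈ S ∪ T, i ≠ j → r (S.piecewise f g i) (S.piecewise f g j) := by
  refine forall_mem_union_piecewise
    (r := fun i x => ∀ j ∈ S ∪ T, i ≠ j → r x (S.piecewise f g j)) (fun i hi => ?_) fun i hi => ?_
  · exact forall_mem_union_piecewise (r := fun j x => i ≠ j → r (f i) x) (hf i hi)
      fun j hj _ => hfg i hi j hj
  · exact forall_mem_union_piecewise (r := fun j x => i ≠ j → r (g i) x)
      (fun j hj _ => hr (hfg j hj i hi)) (hg i hi)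

namespace GuillotinePlaced

variable {pl pl₁ pl₂ : ι → Rect} {P P₁ P₂ : Rect} {S S₁ S₂ : Finset ι} {c : ℝ}

lemma empty (pl : ι → Rect) (P : Rect) : GuillotinePlaced pl P ∅ :=
  ⟨by simp, by simp, by simp, .base _ _ (by simp)⟩

lemma singleton {w h : ℝ} (i : ι) (hw : 0 < w) (hh : 0 < h) (hwP : w ≤ P.width)
    (hhP : h ≤ P.height) :
    GuillotinePlaced (fun _ => ⟨P.x1, P.x1 + w, P.y1, P.y1 + h⟩) P {i} where
  pos _ _ := ⟨lt_add_of_pos_right _ hw, lt_add_of_pos_right _ hh⟩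
  subRect _ _ := ⟨le_rfl, le_sub_iff_add_le'.1 hwP, le_rfl, le_sub_iff_add_le'.1 hhP⟩
  disjoint j hj k hk hjk :=
    absurd ((mem_singleton.1 hj).trans (mem_singleton.1 hk).symm) hjk
  sep := .base _ _ (by simp)

lemma transpose (A : GuillotinePlaced pl P S) :
    GuillotinePlaced (fun i => (pl i).transpose) P.transpose S where
  pos i hi := (A.pos i hi).symm
  subRect i hi := (A.subRect i hi).transpose
  disjoint i hi j hj hij := Rect.disjoint_toSet_transpose (A.disjoint i hi j hj hij)
  sep := A.sep.transpose

lemma eq_empty_of_x2_le_x1 (A : GuillotinePlaced pl P S) (hP : P.x2 ≤ P.x1) : S = ∅ :=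
  eq_empty_of_forall_notMem fun i hi =>
    ((A.subRect i hi).1.trans_lt ((A.pos i hi).1.trans_le (A.subRect i hi).2.1)).not_ge hP

variable [DecidableEq ι]

lemma union (A₁ : GuillotinePlaced pl₁ P₁ S₁) (A₂ : GuillotinePlaced pl₂ P₂ S₂)
    (h₁ : P₁.SubRect P) (h₂ : P₂.SubRect P) (hP : Disjoint P₁.toSet P₂.toSet)
    (hsep : GuillotineSep (S₁.piecewise pl₁ pl₂) P (S₁ ∪ S₂)) :
    GuillotinePlaced (S₁.piecewise pl₁ pl₂) P (S₁ ∪ S₂) where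
  pos := forall_mem_union_piecewise (r := fun _ (r : Rect) => r.x1 < r.x2 ∧ r.y1 < r.y2)
    A₁.pos A₂.pos
  subRect := forall_mem_union_piecewise (r := fun _ (r : Rect) => r.SubRect P)
    (fun i hi => (A₁.subRect i hi).trans h₁) fun i hi => (A₂.subRect i hi).trans h₂
  disjoint := forall_ne_union_piecewise (r := fun r s : Rect => Disjoint r.toSet s.toSet)
    (fun h => h.symm) A₁.disjoint A₂.disjoint fun i hi j hj =>
      hP.mono (A₁.subRect i hi).toSet_subset (A₂.subRect j hj).toSet_subset
  sep := hsep

lemma union_vcut (A₁ : GuillotinePlaced pl₁ ⟨P.x1, c, P.y1, P.y2⟩ S₁)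
    (A₂ : GuillotinePlaced pl₂ ⟨c, P.x2, P.y1, P.y2⟩ S₂) (hd : Disjoint S₁ S₂) (h₁ : P.x1 ≤ c)
    (h₂ : c ≤ P.x2) : GuillotinePlaced (S₁.piecewise pl₁ pl₂) P (S₁ ∪ S₂) := by
  have sep₁ := A₁.sep.congr (pl' := S₁.piecewise pl₁ pl₂)
    fun i hi => piecewise_eq_of_mem _ _ _ hi
  have sep₂ := A₂.sep.congr (pl' := S₁.piecewise pl₁ pl₂)
    fun i hi => piecewise_eq_of_notMem _ _ _ (disjoint_right.1 hd hi)
  refine A₁.union A₂ ⟨le_rfl, h₂, le_rfl, le_rfl⟩ ⟨h₁, le_rfl, le_rfl, le_rfl⟩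
    (Rect.disjoint_toSet_of_x2_le_x1 le_rfl) ?_
  rcases h₁.eq_or_lt with rfl | h₁
  · simpa only [A₁.eq_empty_of_x2_le_x1 le_rfl, empty_union] using sep₂
  rcases h₂.eq_or_lt with rfl | h₂
  · simpa only [A₂.eq_empty_of_x2_le_x1 le_rfl, union_empty] using sep₁
  have hL : ∀ i ∈ S₁, (S₁.piecewise pl₁ pl₂ i).x2 ≤ c := fun i hi => by
    rw [piecewise_eq_of_mem _ _ _ hi]
    exact (A₁.subRect i hi).2.1
  have hR : ∀ i ∈ S₂, c ≤ (S₁.piecewise pl₁ pl₂ i).x1 ∧ ¬ (S₁.piecewise pl₁ pl₂ i).x2 ≤ c :=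
    fun i hi => by
      rw [piecewise_eq_of_notMem _ _ _ (disjoint_right.1 hd hi)]
      exact ⟨(A₂.subRect i hi).1, ((A₂.subRect i hi).1.trans_lt (A₂.pos i hi).1).not_ge⟩
  refine .vcut _ _ c h₁ h₂ ?_ ?_ ?_
  · exact fun i hi => (mem_union.1 hi).imp (hL i) fun hi => (hR i hi).1
  · rwa [filter_union, filter_true_of_mem hL, filter_false_of_mem fun i hi => (hR i hi).2,
      union_empty]
  · rwa [filter_union, filter_false_of_mem fun i hi => not_not.2 (hL i hi),
      filter_true_of_mem fun i hi => (hR i hi).2, empty_union]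

lemma union_hcut (A₁ : GuillotinePlaced pl₁ ⟨P.x1, P.x2, P.y1, c⟩ S₁)
    (A₂ : GuillotinePlaced pl₂ ⟨P.x1, P.x2, c, P.y2⟩ S₂) (hd : Disjoint S₁ S₂) (h₁ : P.y1 ≤ c)
    (h₂ : c ≤ P.y2) : GuillotinePlaced (S₁.piecewise pl₁ pl₂) P (S₁ ∪ S₂) := by
  have hpl : S₁.piecewise pl₁ pl₂ = fun i =>
      (S₁.piecewise (fun j => (pl₁ j).transpose) (fun j => (pl₂ j).transpose) i).transpose := by
    funext i
    by_cases hi : i ∈ S₁ <;> simp [hi, Rect.transpose]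
  rw [hpl]
  exact (A₁.transpose.union_vcut (P := P.transpose) A₂.transpose hd h₁ h₂).transpose

end GuillotinePlaced

variable {w h : ι → ℝ} {S : Finset ι}

lemma exists_placed_sideBySide (P : Rect) (hpos : ∀ i ∈ S, 0 < w i ∧ 0 < h i)
    (hw : ∑ i ∈ S, w i ≤ P.width) (hh : ∀ i ∈ S, h i ≤ P.height) :
    ∃ pl : ι → Rect, GuillotinePlaced pl P S ∧
      (∀ i ∈ S, (pl i).width = w i ∧ (pl i).height = h i) ∧
      ∀ i ∈ S, ∀ j ∈ S, i ≠ j → (pl i).x2 ≤ (pl j).x1 ∨ (pl j).x2 ≤ (pl i).x1 := by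
  classical
  induction S using Finset.induction_on generalizing P with
  | empty => exact ⟨fun _ => P, .empty _ _, by simp, by simp⟩
  | insert i S hi ih =>
    obtain ⟨hwi, hhi⟩ := hpos i (mem_insert_self _ _)
    have hposS : ∀ j ∈ S, 0 < w j ∧ 0 < h j := fun j hj => hpos j (mem_insert_of_mem hj)
    have hP : w i + ∑ j ∈ S, w j ≤ P.x2 - P.x1 := by rwa [← sum_insert hi]
    have hsum : 0 ≤ ∑ j ∈ S, w j := sum_nonneg fun j hj => (hposS j hj).1.le
    obtain ⟨pl, A, dims, hx⟩ := ih ⟨P.x1 + w i, P.x2, P.y1, P.y2⟩ hposS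
      (by simp only [Rect.width]; linarith) fun j hj => hh j (mem_insert_of_mem hj)
    have A₀ := GuillotinePlaced.singleton (P := ⟨P.x1, P.x1 + w i, P.y1, P.y2⟩) i hwi hhi
      (add_sub_cancel_left _ _).ge (hh i (mem_insert_self _ _))
    rw [insert_eq]
    refine ⟨_, A₀.union_vcut A (disjoint_singleton_left.2 hi) (by linarith) (by linarith),
      forall_mem_union_piecewise (r := fun i (r : Rect) => r.width = w i ∧ r.height = h i)
        (by simp [Rect.width, Rect.height]) dims,
      forall_ne_union_piecewise (r := fun r s : Rect => r.x2 ≤ s.x1 ∨ s.x2 ≤ r.x1) Or.symm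
        (fun j hj k hk hjk => absurd ((mem_singleton.1 hj).trans (mem_singleton.1 hk).symm) hjk)
        hx fun j _ k hk => .inl (A.subRect k hk).1⟩

lemma exists_placed_stacked (P : Rect) (hpos : ∀ i ∈ S, 0 < w i ∧ 0 < h i)
    (hw : ∀ i ∈ S, w i ≤ P.width) (hh : ∑ i ∈ S, h i ≤ P.height) :
    ∃ pl : ι → Rect, GuillotinePlaced pl P S ∧
      (∀ i ∈ S, (pl i).width = w i ∧ (pl i).height = h i) ∧
      ∀ i ∈ S, ∀ j ∈ S, i ≠ j → (pl i).y2 ≤ (pl j).y1 ∨ (pl j).y2 ≤ (pl i).y1 := by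
  obtain ⟨pl, A, dims, hx⟩ :=
    exists_placed_sideBySide P.transpose (fun i hi => (hpos i hi).symm) hh hw
  exact ⟨_, A.transpose, fun i hi => (dims i hi).symm, hx⟩

lemma GuillotineFits.exists_placed [DecidableEq ι] {a b : ℝ} (g : GuillotineFits w h a b S)
    (P : Rect) (ha : P.width = a) (hb : P.height = b) (hpos : ∀ i ∈ S, 0 < w i ∧ 0 < h i) :
    ∃ pl : ι → Rect, GuillotinePlaced pl P S ∧
      ∀ i ∈ S, (pl i).width = w i ∧ (pl i).height = h i := by
  induction g generalizing P with
  | nil => exact ⟨fun _ => P, .empty _ _, by simp⟩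
  | @single a b i _ _ hw hh =>
    have hi := hpos i (mem_singleton_self i)
    exact ⟨_, .singleton i hi.1 hi.2 (hw.trans ha.ge) (hh.trans hb.ge),
      by simp [Rect.width, Rect.height]⟩
  | @vcut a₁ a₂ b S₁ S₂ hd g₁ g₂ ih₁ ih₂ =>
    have hP : P.x2 - P.x1 = a₁ + a₂ := ha
    obtain ⟨pl₁, A₁, dims₁⟩ := ih₁ ⟨P.x1, P.x1 + a₁, P.y1, P.y2⟩ (add_sub_cancel_left _ _) hb
      fun i hi => hpos i (mem_union_left _ hi)
    obtain ⟨pl₂, A₂, dims₂⟩ := ih₂ ⟨P.x1 + a₁, P.x2, P.y1, P.y2⟩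
      (by simp only [Rect.width]; linarith) hb fun i hi => hpos i (mem_union_right _ hi)
    exact ⟨_, A₁.union_vcut A₂ hd (by linarith [g₁.nonneg.1]) (by linarith [g₂.nonneg.1]),
      forall_mem_union_piecewise (r := fun i (r : Rect) => r.width = w i ∧ r.height = h i)
        dims₁ dims₂⟩
  | @hcut a b₁ b₂ S₁ S₂ hd g₁ g₂ ih₁ ih₂ =>
    have hP : P.y2 - P.y1 = b₁ + b₂ := hb
    obtain ⟨pl₁, A₁, dims₁⟩ := ih₁ ⟨P.x1, P.x2, P.y1, P.y1 + b₁⟩ ha (add_sub_cancel_left _ _)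
      fun i hi => hpos i (mem_union_left _ hi)
    obtain ⟨pl₂, A₂, dims₂⟩ := ih₂ ⟨P.x1, P.x2, P.y1 + b₁, P.y2⟩ ha
      (by simp only [Rect.height]; linarith) fun i hi => hpos i (mem_union_right _ hi)
    exact ⟨_, A₁.union_hcut A₂ hd (by linarith [g₁.nonneg.2]) (by linarith [g₂.nonneg.2]),
      forall_mem_union_piecewise (r := fun i (r : Rect) => r.width = w i ∧ r.height = h i)
        dims₁ dims₂⟩

end Placement

/-! ### Realizing containers -/

section Containers

variable {ι : Type*}

/-- The condition imposed by a label on the items `S` assigned to the container `C`. -/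
def RespectsLabel (ε : ℝ) (pl : ι → Rect) (C : Rect) (S : Finset ι) : CLabel → Prop
  | .large => ∀ i ∈ S, ∀ j ∈ S, i = j
  | .horizontal => ∀ i ∈ S, ∀ j ∈ S, i ≠ j → (pl i).y2 ≤ (pl j).y1 ∨ (pl j).y2 ≤ (pl i).y1
  | .vertical => ∀ i ∈ S, ∀ j ∈ S, i ≠ j → (pl i).x2 ≤ (pl j).x1 ∨ (pl j).x2 ≤ (pl i).x1
  | .area => ∀ i ∈ S, (pl i).width ≤ ε * C.width ∧ (pl i).height ≤ ε * C.height

/-- The items of `S`, placed by `pl`, are distributed by `asg` over the containers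
`cont 0, …, cont (k - 1)` inside `P`. -/
structure ContainerLayout (ε : ℝ) (pl : ι → Rect) (P : Rect) (S : Finset ι) (k : ℕ)
    (cont : ℕ → Rect) (lab : ℕ → CLabel) (asg : ι → ℕ) : Prop where
  subRect : ∀ j < k, (cont j).SubRect P
  disjoint : ∀ j < k, ∀ j' < k, j ≠ j' → Disjoint (cont j).toSet (cont j').toSet
  mem : ∀ i ∈ S, asg i < k ∧ (pl i).SubRect (cont (asg i))
  label : ∀ j < k, RespectsLabel ε pl (cont j) {i ∈ S | asg i = j} (lab j)

variable {p q : ι → ℝ} {pl pl' pl₁ pl₂ : ι → Rect} {P P₁ P₂ C : Rect} {S S' S₁ S₂ : Finset ι}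
  {a b ε : ℝ} {k k₁ k₂ : ℕ} {cont cont₁ cont₂ : ℕ → Rect} {lab lab₁ lab₂ : ℕ → CLabel}
  {asg asg₁ asg₂ : ι → ℕ} {l : CLabel}

lemma RespectsLabel.mono_congr (H : RespectsLabel ε pl C S l)
    (hS : ∀ i ∈ S', i ∈ S ∧ pl' i = pl i) : RespectsLabel ε pl' C S' l := by
  cases l with
  | large => exact fun i hi j hj => H i (hS i hi).1 j (hS j hj).1
  | horizontal =>
    intro i hi j hj hij
    rw [(hS i hi).2, (hS j hj).2]
    exact H i (hS i hi).1 j (hS j hj).1 hij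
  | vertical =>
    intro i hi j hj hij
    rw [(hS i hi).2, (hS j hj).2]
    exact H i (hS i hi).1 j (hS j hj).1 hij
  | area =>
    intro i hi
    rw [(hS i hi).2]
    exact H i (hS i hi).1

namespace ContainerLayout

lemma containerLabelOK (H : ContainerLayout ε pl P S k cont lab asg) :
    ContainerLabelOK S pl k cont lab asg ε := by
  refine ⟨fun j hj hl i hi i' hi' e e' => ?_, fun j hj hl i hi i' hi' e e' => ?_,
    fun j hj hl i hi i' hi' e e' => ?_, fun j hj hl i hi e => ?_⟩
  all_goals
    have hlab := H.label j hj
    rw [hl] at hlab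
  · exact hlab i (mem_filter.2 ⟨hi, e⟩) i' (mem_filter.2 ⟨hi', e'⟩)
  · exact hlab i (mem_filter.2 ⟨hi, e⟩) i' (mem_filter.2 ⟨hi', e'⟩)
  · exact hlab i (mem_filter.2 ⟨hi, e⟩) i' (mem_filter.2 ⟨hi', e'⟩)
  · exact hlab i (mem_filter.2 ⟨hi, e⟩)

lemma empty (cont : ℕ → Rect) (lab : ℕ → CLabel) (asg : ι → ℕ) :
    ContainerLayout ε pl P ∅ 0 cont lab asg where
  subRect _ hj := absurd hj (Nat.not_lt_zero _)
  disjoint _ hj := absurd hj (Nat.not_lt_zero _)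
  mem _ hi := absurd hi (notMem_empty _)
  label _ hj := absurd hj (Nat.not_lt_zero _)

lemma single (hS : ∀ i ∈ S, (pl i).SubRect P) (hl : RespectsLabel ε pl P S l) :
    ContainerLayout ε pl P S 1 (fun _ => P) (fun _ => l) (fun _ => 0) where
  subRect _ _ := P.subRect_refl
  disjoint j hj j' hj' hne := by omega
  mem i hi := ⟨one_pos, hS i hi⟩
  label _ _ := hl.mono_congr fun i hi => ⟨(mem_filter.1 hi).1, rfl⟩

lemma union [DecidableEq ι] (H₁ : ContainerLayout ε pl₁ P₁ S₁ k₁ cont₁ lab₁ asg₁)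
    (H₂ : ContainerLayout ε pl₂ P₂ S₂ k₂ cont₂ lab₂ asg₂) (h₁ : P₁.SubRect P) (h₂ : P₂.SubRect P)
    (hP : Disjoint P₁.toSet P₂.toSet) :
    ContainerLayout ε (S₁.piecewise pl₁ pl₂) P (S₁ ∪ S₂) (k₁ + k₂)
      (fun j => if j < k₁ then cont₁ j else cont₂ (j - k₁))
      (fun j => if j < k₁ then lab₁ j else lab₂ (j - k₁))
      (S₁.piecewise asg₁ fun i => k₁ + asg₂ i) where
  subRect j hj := by
    split_ifs with h
    · exact (H₁.subRect j h).trans h₁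
    · exact (H₂.subRect _ (by omega)).trans h₂
  disjoint j hj j' hj' hne := by
    have hcross {j j'} (hj : j < k₁) (hj' : j' < k₂) : Disjoint (cont₁ j).toSet (cont₂ j').toSet :=
      hP.mono (H₁.subRect j hj).toSet_subset (H₂.subRect j' hj').toSet_subset
    split_ifs with h h' h'
    · exact H₁.disjoint j h j' h' hne
    · exact hcross h (by omega)
    · exact (hcross h' (by omega)).symm
    · exact H₂.disjoint _ (by omega) _ (by omega) (by omega)
  mem i hi := by
    by_cases hiS : i ∈ S₁
    · have hmem := H₁.mem i hiS
      simp only [piecewise_eq_of_mem _ _ _ hiS, if_pos hmem.1]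
      exact ⟨by omega, hmem.2⟩
    · have hmem := H₂.mem i ((mem_union.1 hi).resolve_left hiS)
      simp only [piecewise_eq_of_notMem _ _ _ hiS, if_neg (Nat.le_add_right _ _).not_gt,
        Nat.add_sub_cancel_left]
      exact ⟨by omega, hmem.2⟩
  label j hj := by
    split_ifs with h
    · refine (H₁.label j h).mono_congr fun i hi => ?_
      obtain ⟨_, hij⟩ := mem_filter.1 hi
      by_cases hiS : i ∈ S₁
      · rw [piecewise_eq_of_mem _ _ _ hiS] at hij ⊢
        exact ⟨mem_filter.2 ⟨hiS, hij⟩, rfl⟩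
      · rw [piecewise_eq_of_notMem _ _ _ hiS] at hij
        omega
    · refine (H₂.label (j - k₁) (by omega)).mono_congr fun i hi => ?_
      obtain ⟨hiU, hij⟩ := mem_filter.1 hi
      by_cases hiS : i ∈ S₁
      · rw [piecewise_eq_of_mem _ _ _ hiS] at hij
        have := (H₁.mem i hiS).1
        omega
      · rw [piecewise_eq_of_notMem _ _ _ hiS] at hij ⊢
        exact ⟨mem_filter.2 ⟨(mem_union.1 hiU).resolve_left hiS, by omega⟩, rfl⟩

end ContainerLayout

variable [DecidableEq ι]

lemma ContainerFits.nonneg (g : ContainerFits p q ε k a b S) : 0 ≤ a ∧ 0 ≤ b := by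
  induction g with
  | empty ha hb => exact ⟨ha, hb⟩
  | hcont ha hb => exact ⟨ha, hb⟩
  | vcont ha hb => exact ⟨ha, hb⟩
  | area g => exact g.nonneg
  | vcut _ _ _ ih₁ ih₂ => exact ⟨add_nonneg ih₁.1 ih₂.1, ih₁.2⟩
  | hcut _ _ _ ih₁ ih₂ => exact ⟨ih₁.1, add_nonneg ih₁.2 ih₂.2⟩

lemma ContainerFits.exists_layout (g : ContainerFits p q ε k a b S) (P : Rect) (ha : P.width = a)
    (hb : P.height = b) (hpos : ∀ i ∈ S, 0 < p i ∧ 0 < q i) :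
    ∃ pl : ι → Rect, GuillotinePlaced pl P S ∧
      (∀ i ∈ S, ((pl i).width = p i ∧ (pl i).height = q i) ∨
        ((pl i).width = q i ∧ (pl i).height = p i)) ∧
      ∃ cont lab asg, ContainerLayout ε pl P S k cont lab asg := by
  induction g generalizing P with
  | empty =>
    exact ⟨fun _ => P, .empty _ _, by simp, fun _ => P, fun _ => .large, fun _ => 0, .empty _ _ _⟩
  | hcont _ _ hq hp =>
    obtain ⟨pl, A, dims, hy⟩ := exists_placed_stacked P (fun i hi => (hpos i hi).symm)
      (by rwa [ha]) (by rwa [hb])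
    exact ⟨pl, A, fun i hi => .inr (dims i hi), _, _, _, .single (l := .horizontal) A.subRect hy⟩
  | vcont _ _ hq hp =>
    obtain ⟨pl, A, dims, hx⟩ := exists_placed_sideBySide P hpos (by rwa [ha]) (by rwa [hb])
    exact ⟨pl, A, fun i hi => .inl (dims i hi), _, _, _, .single (l := .vertical) A.subRect hx⟩
  | area g hS =>
    obtain ⟨pl, A, dims⟩ := g.exists_placed P ha hb hpos
    refine ⟨pl, A, fun i hi => .inl (dims i hi), _, _, _,
      .single (l := .area) A.subRect fun i hi => ?_⟩
    rw [(dims i hi).1, (dims i hi).2, ha, hb]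
    exact hS i hi
  | @vcut k₁ k₂ a₁ a₂ b S₁ S₂ hd g₁ g₂ ih₁ ih₂ =>
    have hP : P.x2 - P.x1 = a₁ + a₂ := ha
    obtain ⟨pl₁, A₁, dims₁, _, _, _, C₁⟩ := ih₁ ⟨P.x1, P.x1 + a₁, P.y1, P.y2⟩
      (add_sub_cancel_left _ _) hb fun i hi => hpos i (mem_union_left _ hi)
    obtain ⟨pl₂, A₂, dims₂, _, _, _, C₂⟩ := ih₂ ⟨P.x1 + a₁, P.x2, P.y1, P.y2⟩
      (by simp only [Rect.width]; linarith) hb fun i hi => hpos i (mem_union_right _ hi)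
    have h₁ : P.x1 ≤ P.x1 + a₁ := le_add_of_nonneg_right g₁.nonneg.1
    have h₂ : P.x1 + a₁ ≤ P.x2 := by linarith [g₂.nonneg.1]
    exact ⟨_, A₁.union_vcut A₂ hd h₁ h₂, forall_mem_union_piecewise (r := fun i (r : Rect) =>
        (r.width = p i ∧ r.height = q i) ∨ (r.width = q i ∧ r.height = p i)) dims₁ dims₂,
      _, _, _, C₁.union C₂ ⟨le_rfl, h₂, le_rfl, le_rfl⟩ ⟨h₁, le_rfl, le_rfl, le_rfl⟩
        (Rect.disjoint_toSet_of_x2_le_x1 le_rfl)⟩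
  | @hcut k₁ k₂ a b₁ b₂ S₁ S₂ hd g₁ g₂ ih₁ ih₂ =>
    have hP : P.y2 - P.y1 = b₁ + b₂ := hb
    obtain ⟨pl₁, A₁, dims₁, _, _, _, C₁⟩ := ih₁ ⟨P.x1, P.x2, P.y1, P.y1 + b₁⟩
      ha (add_sub_cancel_left _ _) fun i hi => hpos i (mem_union_left _ hi)
    obtain ⟨pl₂, A₂, dims₂, _, _, _, C₂⟩ := ih₂ ⟨P.x1, P.x2, P.y1 + b₁, P.y2⟩
      ha (by simp only [Rect.height]; linarith) fun i hi => hpos i (mem_union_right _ hi)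
    have h₁ : P.y1 ≤ P.y1 + b₁ := le_add_of_nonneg_right g₁.nonneg.2
    have h₂ : P.y1 + b₁ ≤ P.y2 := by linarith [g₂.nonneg.2]
    exact ⟨_, A₁.union_hcut A₂ hd h₁ h₂, forall_mem_union_piecewise (r := fun i (r : Rect) =>
        (r.width = p i ∧ r.height = q i) ∨ (r.width = q i ∧ r.height = p i)) dims₁ dims₂,
      _, _, _, C₁.union C₂ ⟨le_rfl, le_rfl, le_rfl, h₂⟩ ⟨le_rfl, le_rfl, h₁, le_rfl⟩
        (Rect.disjoint_toSet_of_y2_le_y1 le_rfl)⟩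

theorem ContainerFits.exists_isContainerPackingRot (g : ContainerFits p q ε k a b S) (P : Rect)
    (ha : P.width = a) (hb : P.height = b) (hpos : ∀ i ∈ S, 0 < p i ∧ 0 < q i) :
    ∃ pl : ι → Rect, IsContainerPackingRot p q ε S pl P k ∧ GuillotineSep pl P S := by
  obtain ⟨pl, A, dims, cont, lab, asg, C⟩ := g.exists_layout P ha hb hpos
  exact ⟨pl, ⟨⟨dims, A.subRect, A.disjoint⟩, cont, lab, asg, C.subRect, C.disjoint, C.mem,
    C.containerLabelOK⟩, A.sep⟩

end Containers

/-! ### Choosing the scale -/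

lemma exists_antitone_seq_of_forall_exists_le {α : Type*} [Preorder α] {r : α → α → Prop}
    (h : ∀ x, ∃ y ≤ x, r x y) (x : α) : ∃ d : ℕ → α, Antitone d ∧ ∀ n, r (d n) (d (n + 1)) := by
  choose f hle hr using h
  have hsucc (n : ℕ) : f^[n + 1] x = f (f^[n] x) := Function.iterate_succ_apply' f n x
  exact ⟨fun n => f^[n] x, antitone_nat_of_succ_le fun n => hsucc n ▸ hle _,
    fun n => by simpa only [hsucc] using hr (f^[n] x)⟩

section Scale

universe u

variable {ι : Type u} {w h p q : ι → ℝ} {U A : Finset ι} {L : ℕ}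

variable [DecidableEq ι]

lemma GuillotineFits.card_mul_le {a b c : ℝ} (g : GuillotineFits w h a b U) (hc : 0 ≤ c)
    (hU : ∀ i ∈ U, c ≤ p i ∧ c ≤ q i ∧ IsOriented w h p q i) : #U * (c * c) ≤ a * b := by
  have harea : ∀ i ∈ U, c * c ≤ w i * h i := fun i hi => by
    obtain ⟨hp, hq, hor⟩ := hU i hi
    exact (mul_le_mul hp hq hc (hc.trans hp)).trans_eq hor.mul_eq.symm
  refine (nsmul_eq_mul #U (c * c) ▸ card_nsmul_le_sum _ _ _ harea).trans (g.sum_area_le ?_)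
  exact fun i hi => (hU i hi).2.2.nonneg (hc.trans (hU i hi).1) (hc.trans (hU i hi).2.1)

lemma GuillotineFits.mul_card_filter_lt_le {c : ℝ} {n : ℕ} (g : GuillotineFits w h 1 1 U)
    (hU : ∀ i ∈ U, 0 < p i ∧ p i ≤ q i ∧ IsOriented w h p q i) (hc : 0 < c)
    (hn : L ≤ n * (c * c)) : L * #{i ∈ U | c < p i} ≤ n := by
  have harea := (g.subset (filter_subset (c < p ·) U)).card_mul_le hc.le fun i hi => by
    obtain ⟨hiU, hip⟩ := mem_filter.1 hi
    exact ⟨hip.le, hip.le.trans (hU i hiU).2.1, (hU i hiU).2.2⟩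
  have hcard : (L * #{i ∈ U | c < p i} : ℝ) ≤ n := by
    refine le_of_mul_le_mul_right ?_ (mul_pos hc hc)
    calc
      _ = L * (#{i ∈ U | c < p i} * (c * c)) := by ring
      _ ≤ L * (1 * 1) := by gcongr
      _ ≤ n * (c * c) := by rwa [mul_one, mul_one]
  exact_mod_cast hcard

lemma card_sdiff_le_of_scales (p q : ι → ℝ) (δ μ : ℝ) (U A : Finset ι) :
    #(U \ A) ≤ #{i ∈ U | μ < q i ∧ q i ≤ δ} + #{i ∈ U | μ < p i} +
      #(({i ∈ U | δ < q i ∧ p i ≤ μ} ∪ {i ∈ U | q i ≤ μ}) \ A) := by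
  refine (card_le_card (t := ({i ∈ U | μ < q i ∧ q i ≤ δ} ∪ {i ∈ U | μ < p i}) ∪
    (({i ∈ U | δ < q i ∧ p i ≤ μ} ∪ {i ∈ U | q i ≤ μ}) \ A)) fun i hi => ?_).trans
    ((card_union_le _ _).trans (Nat.add_le_add_right (card_union_le _ _) _))
  simp only [mem_union, mem_sdiff, mem_filter] at hi ⊢
  grind

lemma le_card_of_mul_card_sdiff_le {ε : ℝ} (hLε : 1 ≤ L * ε) (hε : 0 ≤ ε) (hA : A ⊆ U)
    {c : ℕ} (h : L * #(U \ A) ≤ c * #U) : (1 - c * ε) * #U ≤ #A := by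
  have hsum : (#(U \ A) : ℝ) + #A = #U := mod_cast card_sdiff_add_card_eq_card hA
  have hlost : (#(U \ A) : ℝ) ≤ c * ε * #U :=
    calc
      (#(U \ A) : ℝ) ≤ L * ε * #(U \ A) := le_mul_of_one_le_left (Nat.cast_nonneg _) hLε
      _ = ε * (L * #(U \ A)) := by ring
      _ ≤ ε * (c * #U) := by exact mul_le_mul_of_nonneg_left (mod_cast h) hε
      _ = c * ε * #U := by ring
  linarith

lemma IsPackingScale.exists_containerFits {ε δ μ : ℝ} {K : ℕ} (H : IsPackingScale.{u} ε L K δ μ)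
    (hμδ : μ ≤ δ) (g : GuillotineFits w h 1 1 U)
    (hU : ∀ i ∈ U, 0 < p i ∧ p i ≤ q i ∧ IsOriented w h p q i)
    (hmedium : L * #{i ∈ U | μ < q i ∧ q i ≤ δ} ≤ #U) (hthick : L * #{i ∈ U | μ < p i} ≤ #U) :
    ∃ A ⊆ U, L * #(U \ A) ≤ 4 * #U ∧ ∃ k ≤ K, ContainerFits p q ε k 1 1 A := by
  set T := {i ∈ U | δ < q i ∧ p i ≤ μ} with hT
  set S := {i ∈ U | q i ≤ μ} with hS
  have hTU : T ⊆ U := filter_subset _ _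
  have hSU : S ⊆ U := filter_subset _ _
  have hTS : T ∪ S ⊆ U := union_subset hTU hSU
  have hd : Disjoint T S :=
    disjoint_filter.2 fun i _ hiT hiS => (hμδ.trans_lt hiT.1).not_ge hiS
  have hthin : ThinLong w h p q δ μ T :=
    { pos := fun i hi => (hU i (hTU hi)).1
      le := fun i hi => (mem_filter.1 hi).2.2
      lt := fun i hi => (mem_filter.1 hi).2.1
      oriented := fun i hi => (hU i (hTU hi)).2.2 }
  have hsmall : SmallItems p q μ S :=
    { nonneg := fun i hi => ⟨(hU i (hSU hi)).1.le, (hU i (hSU hi)).1.le.trans (hU i (hSU hi)).2.1⟩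
      le := fun i hi => ⟨(hU i (hSU hi)).2.1.trans (mem_filter.1 hi).2, (mem_filter.1 hi).2⟩ }
  obtain ⟨A, hA, hcard, hfits⟩ := H ι w h p q T S hd hthin hsmall
    (fun i hi => (hU i (hSU hi)).2.2) (g.subset hTS)
  refine ⟨A, hA.trans hTS, ?_, hfits⟩
  have hlost := Nat.mul_le_mul_left L (card_sdiff_le_of_scales p q δ μ U A)
  rw [← hT, ← hS, mul_add, mul_add] at hlost
  have := card_le_card hTS
  omega

end Scale

theorem exists_containerFits_card_ge.{u} {ε : ℝ} (hε : 0 < ε) (hε1 : ε < 1) :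
    ∃ kb : ℕ, ∀ (ι : Type u) [DecidableEq ι] (w h p q : ι → ℝ) (U : Finset ι),
      GuillotineFits w h 1 1 U → (∀ i ∈ U, 0 < p i ∧ p i ≤ q i ∧ IsOriented w h p q i) →
      ∃ A ⊆ U, ∃ k ≤ kb, ContainerFits p q ε k 1 1 A ∧ (1 - 4 * ε) * #U ≤ #A := by
  obtain ⟨L, hLε⟩ := exists_nat_ge (1 / ε)
  rw [div_le_iff₀ hε] at hLε
  have hL : 0 < L := Nat.pos_of_ne_zero fun h => by simp [h] at hLε; linarith
  obtain ⟨d, hd, hscale⟩ := exists_antitone_seq_of_forall_exists_le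
    (r := fun δ μ : Set.Ioc (0 : ℝ) 1 => ∃ K, IsPackingScale.{u} ε L K δ μ) (fun δ => by
      obtain ⟨K, μ, hμ, hμδ, H⟩ := exists_isPackingScale hε hε1 hL δ.2.1 δ.2.2
      exact ⟨⟨μ, hμ, hμδ.trans δ.2.2⟩, hμδ, K, H⟩) ⟨1, one_pos, le_rfl⟩
  choose K H using hscale
  obtain ⟨n, hn⟩ := exists_nat_ge (L / ((d L : ℝ) * d L))
  have hdL : (0 : ℝ) < d L := (d L).2.1
  rw [div_le_iff₀ (by positivity)] at hn
  refine ⟨n + ∑ j ∈ range L, K j, fun ι _ w h p q U g hU => ?_⟩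
  rcases le_total #U n with hfew | hmany
  · exact ⟨U, subset_rfl, #U, by omega, g.containerFits fun i hi => (hU i hi).2.2,
      mul_le_of_le_one_left (Nat.cast_nonneg _) (by linarith)⟩
  obtain ⟨j, hj, hmedium⟩ := exists_card_band_le q (t := fun n => (d n : ℝ))
    (fun m n hmn => hd hmn) U hL
  have hdj : (d L : ℝ) ≤ d (j + 1) := hd hj
  have hnj : (L : ℝ) ≤ n * (d (j + 1) * d (j + 1)) :=
    hn.trans (by gcongr; exact hdL.le.trans hdj)
  have hthick := g.mul_card_filter_lt_le hU (hdL.trans_le hdj) hnj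
  obtain ⟨A, hA, hcard, k, hk, hfits⟩ :=
    (H j).exists_containerFits (hd j.le_succ) g hU hmedium (hthick.trans hmany)
  have hK : K j ≤ ∑ j ∈ range L, K j := single_le_sum_of_canonicallyOrdered (mem_range.2 hj)
  exact ⟨A, hA, k, by omega, hfits, le_card_of_mul_card_sdiff_le hLε hε.le hA hcard⟩

/-! ### Rotations -/

section Rotation

variable {ι : Type*} {wd ht : ι → ℝ} {S : Finset ι} {pl : ι → Rect} {P : Rect} {ε : ℝ} {k : ℕ}

lemma isOriented_min_max {w h : ι → ℝ} {i : ι}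
    (hdim : (w i = wd i ∧ h i = ht i) ∨ (w i = ht i ∧ h i = wd i)) :
    IsOriented w h (wd ⊓ ht) (wd ⊔ ht) i := by
  rcases hdim with ⟨hw, hh⟩ | ⟨hw, hh⟩ <;> rcases le_total (wd i) (ht i) with hle | hle <;>
    simp [IsOriented, hw, hh, hle]

lemma IsOriented.scale {w h p q : ι → ℝ} {i : ι} (H : IsOriented w h p q i) (c : ℝ) :
    IsOriented (fun i => c * w i) (fun i => c * h i) (fun i => c * p i) (fun i => c * q i) i :=
  H.imp (fun H => ⟨congrArg (c * ·) H.1, congrArg (c * ·) H.2⟩)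
    fun H => ⟨congrArg (c * ·) H.1, congrArg (c * ·) H.2⟩

lemma isContainerPackingRot_of_min_max
    (H : IsContainerPackingRot (wd ⊓ ht) (wd ⊔ ht) ε S pl P k) :
    IsContainerPackingRot wd ht ε S pl P k := by
  refine ⟨⟨fun i hi => ?_, H.1.hin, H.1.hdisj⟩, H.2⟩
  have hdims := H.1.hdims i hi
  rcases le_total (wd i) (ht i) with hle | hle
  · simpa [hle] using hdims
  · simpa [hle] using hdims.symm

end Rotation

end GuillotineKnapsack

open GuillotineKnapsack in
theorem rotated_container_packing_four_fifths_cardinality_general.{u} {ε : ℝ} (hε : 0 < ε)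
    (hε1 : ε < 1) : ∃ kb : ℕ, ∀ (ι : Type u) (U : Finset ι) (wd ht : ι → ℝ) (N : ℝ)
      (place : ι → Rect), 0 < N → (∀ i ∈ U, 0 < wd i ∧ 0 < ht i) →
      IsPackingRot wd ht U place (knapsack N) → GuillotineSep place (knapsack N) U →
      ∃ (APX : Finset ι) (place' : ι → Rect) (k : ℕ), APX ⊆ U ∧ k ≤ kb ∧
        IsContainerPackingRot wd ht ε APX place' (knapsack N) k ∧
        GuillotineSep place' (knapsack N) APX ∧ (1 - 4 * ε) * (U.card : ℝ) ≤ APX.card := by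
  obtain ⟨kb, H⟩ := exists_containerFits_card_ge.{u} hε hε1
  refine ⟨kb, fun ι U wd ht N place hN hpos hpack hsep => ?_⟩
  classical
  have hw : (knapsack N).width = N := sub_zero N
  have hh : (knapsack N).height = N := sub_zero N
  have hside : ∀ i ∈ U, 0 < (wd ⊓ ht) i ∧ 0 < (wd ⊔ ht) i := fun i hi =>
    ⟨lt_min (hpos i hi).1 (hpos i hi).2, lt_max_of_lt_left (hpos i hi).1⟩
  have hunit := (hsep.guillotineFits hN.le hN.le hpack.hin).scale (inv_nonneg.2 hN.le)
  rw [hw, hh, inv_mul_cancel₀ hN.ne'] at hunit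
  obtain ⟨A, hA, k, hk, hfits, hcard⟩ := H ι _ _ (fun i => N⁻¹ * (wd ⊓ ht) i)
    (fun i => N⁻¹ * (wd ⊔ ht) i) U hunit fun i hi => ⟨mul_pos (inv_pos.2 hN) (hside i hi).1,
      mul_le_mul_of_nonneg_left inf_le_sup (inv_nonneg.2 hN.le),
      (isOriented_min_max (hpack.hdims i hi)).scale N⁻¹⟩
  have hfitsN := hfits.scale hN.le
  simp only [mul_inv_cancel_left₀ hN.ne', mul_one] at hfitsN
  obtain ⟨place', hcont, hsep'⟩ := hfitsN.exists_isContainerPackingRot (knapsack N) hw hh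
    fun i hi => hside i (hA hi)
  exact ⟨A, place', k, hA, hk, isContainerPackingRot_of_min_max hcont, hsep', hcard⟩

/-- For cardinality 2GGK with guillotine cuts and 90 degree rotations
allowed, there is a guillotine-separable container packing with a constant (depending
only on `ε`) number of containers whose cardinality is at least `(4/5 - O(ε))` times
the optimum. -/
theorem rotated_container_packing_four_fifths_cardinality :
    ∃ C : ℝ, 0 < C ∧
    ∀ ε : ℝ, 0 < ε → ε < 1 →
    ∃ kb : ℕ,
    ∀ (ι : Type) (items : Finset ι) (wd ht : ι → ℕ) (N : ℕ),
      0 < N →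
      (∀ i ∈ items, 0 < wd i ∧ 0 < ht i) →
      ∀ OPT : Finset ι, OPT ⊆ items →
        (∃ place, IsPackingRot (fun i => (wd i : ℝ)) (fun i => (ht i : ℝ))
            OPT place (knapsack (N : ℝ)) ∧
          GuillotineSep place (knapsack (N : ℝ)) OPT) →
        (∀ T : Finset ι, T ⊆ items →
          (∃ place, IsPackingRot (fun i => (wd i : ℝ)) (fun i => (ht i : ℝ))
              T place (knapsack (N : ℝ)) ∧
            GuillotineSep place (knapsack (N : ℝ)) T) →
          T.card ≤ OPT.card) →
        ∃ (APX : Finset ι) (place : ι → Rect) (k : ℕ),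
          APX ⊆ items ∧ k ≤ kb ∧
          IsContainerPackingRot (fun i => (wd i : ℝ)) (fun i => (ht i : ℝ)) ε
            APX place (knapsack (N : ℝ)) k ∧
          GuillotineSep place (knapsack (N : ℝ)) APX ∧
          (4 / 5 - C * ε) * (OPT.card : ℝ) ≤ (APX.card : ℝ) := by
  refine ⟨4, by norm_num, fun ε hε hε1 => ?_⟩
  obtain ⟨kb, H⟩ := rotated_container_packing_four_fifths_cardinality_general hε hε1
  refine ⟨kb, fun ι items wd ht N hN hpos OPT hOPT ⟨place, hpack, hsep⟩ _ => ?_⟩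
  obtain ⟨APX, place', k, hAPX, hk, hcont, hsep', hcard⟩ := H ι OPT _ _ N place
    (mod_cast hN) (fun i hi => mod_cast hpos i (hOPT hi)) hpack hsep
  refine ⟨APX, place', k, hAPX.trans hOPT, hk, hcont, hsep', hcard.trans' ?_⟩
  gcongr
  norm_num
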